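/- arXiv:2111.11694 — 2 statements merged into one kernel-verified Lean document; each statement's English description precedes it below -/
import Mathlib

section
/- For every integer d ≥ 1 there exists a constant C_d > 0 depending only on d such that the following holds for every integer s with 1 ≤ s ≤ d. Let C^s(V) = {θ ∈ C(V) : (H^(2)θ)_i = 0 for every i ∈ I₀^(α), for every α ∈ {0,1}^d with |α| > s}, where |α| = Σ_k α_k. Fix integers n₁,…,n_d ≥ 2, reals σ > 0 and V > 0, a vector θ* ∈ C^s(V), and any map θ̂ : ℝ^{I₀} → ℝ^{I₀} such that for every y, θ̂(y) ∈ C^s(V) and ‖y − θ̂(y)‖₂ ≤ ‖y − θ‖₂ for all θ ∈ C^s(V) (the Euclidean projection onto the closed convex set C^s(V)). Then ∫ (1/n)·‖θ̂(θ* + ξ) − θ*‖₂² dμ_σ(ξ) ≤ C_d·(σ²V^{1/2}/n)^{4/5}·(log(2 + V·n^{1/2}/σ))^{3(2s−1)/5} + C_d·(σ²/n)·(log(2 + V·n^{1/2}/σ))^{3(2s−1)/4} + C_d·(σ²/n)·(log n)². -/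
open Finset MeasureTheory

/-- The discrete mixed difference `(D^(β)θ)_i` (with `ℕ`-valued multi-indices). -/
noncomputable def mixedDiff (d : ℕ) (β : Fin d → ℕ) (θ : (Fin d → ℕ) → ℝ)
    (i : Fin d → ℕ) : ℝ :=
  ∑ δ ∈ Fintype.piFinset (fun k => Finset.range (β k + 1)),
    (-1 : ℝ) ^ (∑ k, δ k) * (∏ k, ((β k).choose (δ k) : ℝ)) * θ (fun k => i k - δ k)

/-- The index set `I₀^(β)`. -/
def idxBeta (d : ℕ) (n β : Fin d → ℕ) : Finset (Fin d → ℕ) :=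
  Fintype.piFinset fun k =>
    if β k = Finset.univ.sup β then Finset.Ico (Finset.univ.sup β) (n k)
    else {β k}

/-- The complexity measure `V₂(θ)`. -/
noncomputable def V2 (d : ℕ) (n : Fin d → ℕ) (θ : (Fin d → ℕ) → ℝ) : ℝ :=
  ∑ β ∈ (Fintype.piFinset fun _ : Fin d => Finset.range 3).filter
      (fun β => Finset.univ.sup β = 2),
    (∏ k, (n k : ℝ) ^ (if β k = 2 then 1 else β k)) *
      ∑ i ∈ idxBeta d n β, |mixedDiff d β θ i|

/-- Extension of a vector indexed by `I₀ = Π_k {0,…,n_k-1}` to all of `ℕ^d` (by `0`). -/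
noncomputable def latExtend (d : ℕ) (n : Fin d → ℕ)
    (θ : (∀ k : Fin d, Fin (n k)) → ℝ) : (Fin d → ℕ) → ℝ :=
  fun j => if h : ∀ k, j k < n k then θ (fun k => ⟨j k, h k⟩) else 0

/-- The constraint set `C(V) = {θ : V₂(θ) ≤ V}`. -/
def Cset (d : ℕ) (n : Fin d → ℕ) (V : ℝ) : Set ((∀ k : Fin d, Fin (n k)) → ℝ) :=
  { θ | V2 d n (latExtend d n θ) ≤ V }

/-- The product Gaussian measure on `ℝ^{I₀}` with i.i.d. `N(0, σ²)` coordinates. -/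
noncomputable def gaussPi (d : ℕ) (n : Fin d → ℕ) (σ : ℝ) :
    Measure ((∀ k : Fin d, Fin (n k)) → ℝ) :=
  Measure.pi fun _ => ProbabilityTheory.gaussianReal 0 ⟨σ ^ 2, sq_nonneg σ⟩

/-- The operator `H^(2)`: `(H^(2)θ)_i = (D^(β)θ)_i` where `β_k = min(i_k, 2)`
(this uniformly covers both cases of the definition). -/
noncomputable def H2 (d : ℕ) (θ : (Fin d → ℕ) → ℝ) (i : Fin d → ℕ) : ℝ :=
  mixedDiff d (fun k => min (i k) 2) θ i

/-- The interaction-restricted constraint set `C^s(V)`. -/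
def CsSet (d : ℕ) (n : Fin d → ℕ) (s : ℕ) (V : ℝ) :
    Set ((∀ k : Fin d, Fin (n k)) → ℝ) :=
  { θ | V2 d n (latExtend d n θ) ≤ V ∧
      ∀ α : Fin d → ℕ, (∀ k, α k ≤ 1) → s < ∑ k, α k →
        ∀ i ∈ idxBeta d n α, H2 d (latExtend d n θ) i = 0 }

/-!
By discrete Taylor expansion, `θ` is a combination of tensor products of the functions `1`, `x` and
`(x - t)₊`, and its coefficients outside the multilinear part have `ℓ¹` norm at most `V2`; the
constraint defining `CsSet` removes the products in which more than `s` variables are active.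
Each tensor hinge splits into multiresolution pieces: the piece of resolution `p` is a multiple, at
most `1` in absolute value, of one of `O(2 ^ |p|)` tensor atoms, whose norm is of order
`√N · 2 ^ (-3 |p| / 2)`, where `N = ∏ k, n k`.

Truncate at total level `J`. The atoms of level at most `J` span a space of dimension
`O(2 ^ J (J + 1) ^ (s - 1))`, on which the noise is paid for by the dimension. The rest of the error
lies in `2V` times a sum of symmetric hulls of dictionaries of `exp (O(|p| + 1))` small atoms, so
a maximal inequality bounds its inner product with the noise by
`O(V σ √N (J + 1) ^ s 2 ^ (-3 J / 2))`. With `x = V √N / σ`, balancing the two costs at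
`2 ^ J ≈ (x log (2 + x)) ^ (2 / 5)` gives the rate.
-/

open ProbabilityTheory Submodule
open scoped NNReal ENNReal InnerProductSpace

section Subgaussian

variable {Ω : Type*} [MeasurableSpace Ω] {μ : Measure Ω} {X : Ω → ℝ}

lemma hasSubgaussianMGF_mono {c c' : ℝ≥0} (h : HasSubgaussianMGF X c μ) (hc : c ≤ c') :
    HasSubgaussianMGF X c' μ where
  integrable_exp_mul := h.integrable_exp_mul
  mgf_le t := (h.mgf_le t).trans (by gcongr)

lemma hasSubgaussianMGF_id_gaussianReal (v : ℝ≥0) : HasSubgaussianMGF id v (gaussianReal 0 v) where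
  integrable_exp_mul t := integrable_exp_mul_gaussianReal t
  mgf_le t := by simp [mgf_id_gaussianReal]

lemma lintegral_exp_abs_div_le {b : ℝ≥0} (hb : 0 < b) (hX : HasSubgaussianMGF X (b ^ 2) μ) :
    ∫⁻ ω, ENNReal.ofReal (Real.exp (|X ω| / b)) ∂μ ≤ 4 := by
  have one_sided (t : ℝ) (ht : (b * t) ^ 2 = 1) :
      ∫⁻ ω, ENNReal.ofReal (Real.exp (t * X ω)) ∂μ ≤ 2 := by
    rw [← ofReal_integral_eq_lintegral_ofReal (hX.integrable_exp_mul t)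
      (.of_forall fun _ => (Real.exp_pos _).le)]
    refine ENNReal.ofReal_le_of_le_toReal ((hX.mgf_le t).trans ?_)
    have hexp : Real.exp (1 / 2) ^ 2 = Real.exp 1 := by rw [← Real.exp_nat_mul]; norm_num
    rw [NNReal.coe_pow, ← mul_pow, ht, ENNReal.toReal_ofNat]
    nlinarith [Real.exp_one_lt_d9, Real.exp_pos (1 / 2)]
  have hb' : (b : ℝ) ≠ 0 := by positivity
  calc ∫⁻ ω, ENNReal.ofReal (Real.exp (|X ω| / b)) ∂μ
      ≤ ∫⁻ ω, (ENNReal.ofReal (Real.exp ((b : ℝ)⁻¹ * X ω)) +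
          ENNReal.ofReal (Real.exp (-(b : ℝ)⁻¹ * X ω))) ∂μ := by
        refine lintegral_mono fun ω => ?_
        rcases abs_choice (X ω) with h | h <;> rw [h]
        · exact le_add_right (le_of_eq (by ring_nf))
        · exact le_add_left (le_of_eq (by ring_nf))
    _ ≤ 2 + 2 := by
        rw [lintegral_add_left' (hX.integrable_exp_mul _).1.aemeasurable.ennreal_ofReal]
        exact add_le_add (one_sided _ (by field_simp)) (one_sided _ (by field_simp))
    _ = 4 := by norm_num

lemma sq_le_two_mul_exp_abs (x : ℝ) : x ^ 2 ≤ 2 * Real.exp |x| := by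
  have h := Real.quadratic_le_exp_of_nonneg (abs_nonneg x)
  rw [sq_abs] at h
  linarith [abs_nonneg x]

lemma lintegral_sq_le_of_hasSubgaussianMGF {b : ℝ≥0} (hb : 0 < b)
    (hX : HasSubgaussianMGF X (b ^ 2) μ) :
    ∫⁻ ω, ENNReal.ofReal (X ω ^ 2) ∂μ ≤ ENNReal.ofReal (8 * b ^ 2) := by
  calc ∫⁻ ω, ENNReal.ofReal (X ω ^ 2) ∂μ
      ≤ ∫⁻ ω, ENNReal.ofReal (2 * b ^ 2) * ENNReal.ofReal (Real.exp (|X ω| / b)) ∂μ := by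
        refine lintegral_mono fun ω => ?_
        rw [← ENNReal.ofReal_mul (by positivity)]
        refine ENNReal.ofReal_le_ofReal ?_
        have h := sq_le_two_mul_exp_abs (X ω / b)
        rw [div_pow, div_le_iff₀ (by positivity), abs_div, NNReal.abs_eq] at h
        linarith
    _ ≤ ENNReal.ofReal (2 * b ^ 2) * 4 := by
        rw [lintegral_const_mul' _ _ ENNReal.ofReal_ne_top]
        gcongr
        exact lintegral_exp_abs_div_le hb hX
    _ = ENNReal.ofReal (8 * b ^ 2) := by
        rw [← ENNReal.ofReal_ofNat 4, ← ENNReal.ofReal_mul (by positivity)]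
        ring_nf

lemma nnnorm_sup_le {κ : Type*} (M : Finset κ) (z : κ → ℝ) {b t : ℝ} (hb : 0 < b) (ht : 0 ≤ t) :
    ((M.sup fun m => ‖z m‖₊ : ℝ≥0) : ℝ) ≤
      b * (t + Real.exp (-t) * ∑ m ∈ M, Real.exp (|z m| / b)) := by
  have hbound : 0 ≤ b * (t + Real.exp (-t) * ∑ m ∈ M, Real.exp (|z m| / b)) := by positivity
  rw [← Real.le_toNNReal_iff_coe_le hbound]
  refine Finset.sup_le fun m hm => ?_
  rw [Real.le_toNNReal_iff_coe_le hbound, coe_nnnorm, Real.norm_eq_abs, ← div_le_iff₀' hb]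
  have hterm : Real.exp (|z m| / b) ≤ ∑ m ∈ M, Real.exp (|z m| / b) :=
    Finset.single_le_sum (f := fun m => Real.exp (|z m| / b)) (fun _ _ => (Real.exp_pos _).le) hm
  calc |z m| / b ≤ t + Real.exp (-t + |z m| / b) := by
        linarith [Real.add_one_le_exp (-t + |z m| / b)]
    _ ≤ t + Real.exp (-t) * ∑ m ∈ M, Real.exp (|z m| / b) := by
        rw [Real.exp_add]
        gcongr

lemma lintegral_sup_nnnorm_le [IsProbabilityMeasure μ] {κ : Type*} {M : Finset κ}
    {Z : κ → Ω → ℝ} {b : ℝ≥0} {t : ℝ} (hb : 0 < b) (ht : 0 ≤ t)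
    (hM : (#M : ℝ) ≤ Real.exp t) (hZ : ∀ m ∈ M, HasSubgaussianMGF (Z m) (b ^ 2) μ) :
    ∫⁻ ω, (M.sup fun m => ‖Z m ω‖₊ : ℝ≥0) ∂μ ≤ ENNReal.ofReal (b * (t + 4)) := by
  have hmeas (m) (hm : m ∈ M) :
      AEMeasurable (fun ω => ENNReal.ofReal (Real.exp (|Z m ω| / b))) μ := by
    have := (hZ m hm).aemeasurable
    fun_prop
  have hsum : ∑ m ∈ M, ∫⁻ ω, ENNReal.ofReal (Real.exp (|Z m ω| / b)) ∂μ ≤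
      ENNReal.ofReal (Real.exp t * 4) := by
    calc ∑ m ∈ M, ∫⁻ ω, ENNReal.ofReal (Real.exp (|Z m ω| / b)) ∂μ ≤ ∑ _m ∈ M, 4 :=
          Finset.sum_le_sum fun m hm => lintegral_exp_abs_div_le hb (hZ m hm)
      _ = ENNReal.ofReal (#M * 4) := by
          rw [Finset.sum_const, nsmul_eq_mul, ENNReal.ofReal_mul (by positivity)]
          simp
      _ ≤ ENNReal.ofReal (Real.exp t * 4) := by gcongr
  calc ∫⁻ ω, (M.sup fun m => ‖Z m ω‖₊ : ℝ≥0) ∂μ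
      ≤ ∫⁻ ω, ENNReal.ofReal b * (ENNReal.ofReal t + ENNReal.ofReal (Real.exp (-t)) *
          ∑ m ∈ M, ENNReal.ofReal (Real.exp (|Z m ω| / b))) ∂μ := by
        refine lintegral_mono fun ω => ?_
        rw [← ENNReal.ofReal_coe_nnreal, ← ENNReal.ofReal_sum_of_nonneg (by intros; positivity),
          ← ENNReal.ofReal_mul (by positivity), ← ENNReal.ofReal_add ht (by positivity),
          ← ENNReal.ofReal_mul (by positivity)]
        exact ENNReal.ofReal_le_ofReal (nnnorm_sup_le M (fun m => Z m ω) hb ht)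
    _ = ENNReal.ofReal b * (ENNReal.ofReal t + ENNReal.ofReal (Real.exp (-t)) *
          ∑ m ∈ M, ∫⁻ ω, ENNReal.ofReal (Real.exp (|Z m ω| / b)) ∂μ) := by
        rw [lintegral_const_mul' _ _ ENNReal.ofReal_ne_top, lintegral_add_left measurable_const,
          lintegral_const_mul' _ _ ENNReal.ofReal_ne_top, lintegral_finsetSum' _ hmeas]
        simp
    _ ≤ ENNReal.ofReal b * (ENNReal.ofReal t + ENNReal.ofReal (Real.exp (-t)) *
          ENNReal.ofReal (Real.exp t * 4)) := by gcongr
    _ = ENNReal.ofReal (b * (t + 4)) := by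
        rw [← ENNReal.ofReal_mul (by positivity), ← mul_assoc, ← Real.exp_add,
          ← ENNReal.ofReal_add ht (by positivity), ← ENNReal.ofReal_mul (by positivity)]
        simp

end Subgaussian

section SubgaussianVector

variable {Ω E : Type*} [MeasurableSpace Ω] {μ : Measure Ω} [NormedAddCommGroup E]
  [InnerProductSpace ℝ E]

/-- A random vector is sub-Gaussian with parameter `σ` if each of its linear functionals
`⟪u, X⟫` is sub-Gaussian with variance proxy `σ² ‖u‖²`. -/
def IsSubgaussianVector (X : Ω → E) (σ : ℝ≥0) (μ : Measure Ω) : Prop :=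
  ∀ u : E, HasSubgaussianMGF (fun ω => ⟪u, X ω⟫_ℝ) ((σ * ‖u‖₊) ^ 2) μ

lemma isSubgaussianVector_toLp_pi_gaussianReal {ι : Type*} [Fintype ι] (σ : ℝ≥0) :
    IsSubgaussianVector (WithLp.toLp 2 : (ι → ℝ) → EuclideanSpace ℝ ι) σ
      (Measure.pi fun _ => gaussianReal 0 (σ ^ 2)) := by
  intro u
  have hindep : iIndepFun (fun (i : ι) (ξ : ι → ℝ) => u i * ξ i)
      (Measure.pi fun _ => gaussianReal 0 (σ ^ 2)) :=
    iIndepFun_pi (X := fun i x => u i * x) fun i => by fun_prop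
  have hcoord (i : ι) : HasSubgaussianMGF (fun ξ : ι → ℝ => u i * ξ i)
      (‖u i‖₊ ^ 2 * σ ^ 2) (Measure.pi fun _ => gaussianReal 0 (σ ^ 2)) := by
    have hmap : (Measure.pi fun _ : ι => gaussianReal 0 (σ ^ 2)).map (fun ξ => ξ i) =
        gaussianReal 0 (σ ^ 2) := (measurePreserving_eval _ i).map_eq
    have h := HasSubgaussianMGF.of_map (X := id) (Y := fun ξ : ι → ℝ => ξ i)
      (measurable_pi_apply i).aemeasurable (hmap ▸ hasSubgaussianMGF_id_gaussianReal (σ ^ 2))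
    have hscale : (⟨u i ^ 2, sq_nonneg _⟩ : ℝ≥0) = ‖u i‖₊ ^ 2 := NNReal.eq (sq_abs (u i)).symm
    exact hscale ▸ h.const_mul (u i)
  have hsum := HasSubgaussianMGF.sum_of_iIndepFun hindep (s := univ) fun i _ => hcoord i
  convert hsum using 1
  · ext ξ
    simp [PiLp.inner_apply, mul_comm]
  · rw [mul_pow, EuclideanSpace.nnnorm_eq, NNReal.sq_sqrt, ← Finset.sum_mul, mul_comm]

lemma lintegral_norm_sq_starProjection_le {X : Ω → E} {σ : ℝ≥0} (hσ : 0 < σ)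
    (hX : IsSubgaussianVector X σ μ) (S : Submodule ℝ E) [FiniteDimensional ℝ S] :
    ∫⁻ ω, ENNReal.ofReal (‖S.starProjection (X ω)‖ ^ 2) ∂μ ≤
      ENNReal.ofReal (8 * σ ^ 2 * Module.finrank ℝ S) := by
  let e := stdOrthonormalBasis ℝ S
  have hcoord (j) : HasSubgaussianMGF (fun ω => ⟪(e j : E), X ω⟫_ℝ) (σ ^ 2) μ := by
    have hnorm : ‖(e j : E)‖₊ = 1 := NNReal.eq (e.orthonormal.1 j)
    simpa [hnorm] using hX (e j)
  have hexpand (ω) : ‖S.starProjection (X ω)‖ ^ 2 = ∑ j, ⟪(e j : E), X ω⟫_ℝ ^ 2 := by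
    rw [starProjection_apply, ← coe_norm, ← e.sum_sq_norm_inner_right]
    simp only [inner_orthogonalProjectionOnto_eq_of_mem_left, Real.norm_eq_abs, sq_abs]
  calc ∫⁻ ω, ENNReal.ofReal (‖S.starProjection (X ω)‖ ^ 2) ∂μ
      = ∑ j, ∫⁻ ω, ENNReal.ofReal (⟪(e j : E), X ω⟫_ℝ ^ 2) ∂μ := by
        simp only [hexpand, ENNReal.ofReal_sum_of_nonneg fun _ _ => sq_nonneg _]
        exact lintegral_finsetSum' _ fun j _ =>
          ((hcoord j).aemeasurable.pow_const 2).ennreal_ofReal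
    _ ≤ ∑ _j : Fin (Module.finrank ℝ S), ENNReal.ofReal (8 * σ ^ 2) :=
        Finset.sum_le_sum fun j _ => lintegral_sq_le_of_hasSubgaussianMGF hσ (hcoord j)
    _ = ENNReal.ofReal (8 * σ ^ 2 * Module.finrank ℝ S) := by
        rw [← ENNReal.ofReal_sum_of_nonneg fun _ _ => by positivity]
        simp [mul_comm]

/-- The support function of the symmetric convex hull of the dictionary `D`. -/
noncomputable def maxAbsInner (D : Finset E) (y : E) : ℝ≥0 := D.sup fun w => ‖⟪w, y⟫_ℝ‖₊

lemma abs_inner_le_maxAbsInner {D : Finset E} {w : E} (hw : w ∈ D) (y : E) :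
    |⟪w, y⟫_ℝ| ≤ maxAbsInner D y :=
  NNReal.coe_le_coe.2 (Finset.le_sup (f := fun w => ‖⟪w, y⟫_ℝ‖₊) hw)

lemma aemeasurable_maxAbsInner (D : Finset E) {Y : Ω → E}
    (hY : ∀ w ∈ D, AEMeasurable (fun ω => ⟪w, Y ω⟫_ℝ) μ) :
    AEMeasurable (fun ω => maxAbsInner D (Y ω)) μ := by
  unfold maxAbsInner
  classical
  induction D using Finset.induction_on with
  | empty => simp
  | insert w D _ ih =>
    simp only [Finset.sup_insert]
    exact (hY w (mem_insert_self w D)).nnnorm.sup (ih fun v hv => hY v (mem_insert_of_mem hv))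

variable (S : Submodule ℝ E) [S.HasOrthogonalProjection]

lemma inner_sub_starProjection (w x : E) :
    ⟪w, x - S.starProjection x⟫_ℝ = ⟪w - S.starProjection w, x⟫_ℝ := by
  rw [inner_sub_left, inner_sub_right, inner_starProjection_left_eq_right]

lemma nnnorm_sub_starProjection_le (w : E) : ‖w - S.starProjection w‖₊ ≤ ‖w‖₊ := by
  have h : ‖Sᗮ.starProjection w‖₊ ≤ ‖w‖₊ := norm_starProjection_apply_le Sᗮ w
  simpa [starProjection_orthogonal] using h

/-- Only the projection of `x` on `S` pays for its dimension; beyond `S` the fluctuation is measured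
along `η - u`. -/
lemma norm_sq_le_of_norm_sq_le_two_mul_inner {η u x : E} {W : ℝ}
    (hη : ‖η‖ ^ 2 ≤ 2 * ⟪η, x⟫_ℝ) (hu : u ∈ S) (hW : ⟪η - u, x - S.starProjection x⟫_ℝ ≤ W) :
    ‖η‖ ^ 2 ≤ 4 * ‖S.starProjection x‖ ^ 2 + 4 * W := by
  have hux : ⟪u, x - S.starProjection x⟫_ℝ = 0 := by
    rw [real_inner_comm]
    exact starProjection_inner_eq_zero x u hu
  have hsplit : ⟪η, x⟫_ℝ = ⟪η, S.starProjection x⟫_ℝ + ⟪η - u, x - S.starProjection x⟫_ℝ := by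
    rw [inner_sub_left, hux, sub_zero, ← inner_add_right, add_sub_cancel]
  nlinarith [real_inner_le_norm η (S.starProjection x), sq_nonneg (‖η‖ - 2 * ‖S.starProjection x‖)]

lemma lintegral_maxAbsInner_sub_starProjection_le [IsProbabilityMeasure μ] {X : Ω → E} {σ b : ℝ≥0}
    (hX : IsSubgaussianVector X σ μ) {D : Finset E} {t : ℝ} (hb : 0 < b) (ht : 0 ≤ t)
    (hcard : (#D : ℝ) ≤ Real.exp t) (hnorm : ∀ w ∈ D, σ * ‖w‖₊ ≤ b) :
    ∫⁻ ω, maxAbsInner D (X ω - S.starProjection (X ω)) ∂μ ≤ ENNReal.ofReal (b * (t + 4)) := by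
  simp only [maxAbsInner, inner_sub_starProjection]
  refine lintegral_sup_nnnorm_le hb ht hcard fun w hw => hasSubgaussianMGF_mono (hX _) ?_
  gcongr
  exact (mul_le_mul_right (nnnorm_sub_starProjection_le S w) σ).trans (hnorm w hw)

/-- The first term is the parametric cost of `S`, the second bounds the Gaussian width of the
Minkowski sum of the symmetric hulls of the dictionaries `D p`. -/
theorem lintegral_norm_sq_le_of_basic_inequality [IsProbabilityMeasure μ] [FiniteDimensional ℝ S]
    {X : Ω → E} {σ : ℝ≥0} (hσ : 0 < σ) (hX : IsSubgaussianVector X σ μ)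
    {π : Type*} {T : Finset π} {D : π → Finset E} {K : ℝ} (hK : 0 ≤ K) {b : π → ℝ≥0} {t : π → ℝ}
    (hb : ∀ p ∈ T, 0 < b p) (ht : ∀ p ∈ T, 0 ≤ t p) (hcard : ∀ p ∈ T, (#(D p) : ℝ) ≤ Real.exp (t p))
    (hnorm : ∀ p ∈ T, ∀ w ∈ D p, σ * ‖w‖₊ ≤ b p) {η : Ω → E}
    (hη : ∀ ω, ‖η ω‖ ^ 2 ≤ 2 * ⟪η ω, X ω⟫_ℝ)
    (happrox : ∀ ω, ∃ u ∈ S, ∀ y, ⟪η ω - u, y⟫_ℝ ≤ K * ∑ p ∈ T, (maxAbsInner (D p) y : ℝ)) :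
    ∫⁻ ω, ENNReal.ofReal (‖η ω‖ ^ 2) ∂μ ≤
      ENNReal.ofReal (32 * σ ^ 2 * Module.finrank ℝ S + 4 * K * ∑ p ∈ T, b p * (t p + 4)) := by
  set R : Ω → E := fun ω => X ω - S.starProjection (X ω) with hR
  have hmeas (p : π) : AEMeasurable (fun ω => (maxAbsInner (D p) (R ω) : ℝ≥0∞)) μ := by
    refine (aemeasurable_maxAbsInner (D p) fun w _ => ?_).coe_nnreal_ennreal
    simpa only [hR, inner_sub_starProjection] using (hX _).aemeasurable
  have hpoint (ω) : ENNReal.ofReal (‖η ω‖ ^ 2) ≤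
      ENNReal.ofReal 4 * ENNReal.ofReal (‖S.starProjection (X ω)‖ ^ 2) +
        ENNReal.ofReal (4 * K) * ∑ p ∈ T, (maxAbsInner (D p) (R ω) : ℝ≥0∞) := by
    obtain ⟨u, hu, happ⟩ := happrox ω
    have h := norm_sq_le_of_norm_sq_le_two_mul_inner S (hη ω) hu (happ (R ω))
    rw [← ENNReal.ofReal_mul zero_le_four]
    simp only [← ENNReal.ofReal_coe_nnreal]
    rw [← ENNReal.ofReal_sum_of_nonneg fun _ _ => NNReal.coe_nonneg _,
      ← ENNReal.ofReal_mul (by positivity), ← ENNReal.ofReal_add (by positivity) (by positivity)]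
    exact ENNReal.ofReal_le_ofReal (by linarith)
  refine (lintegral_mono hpoint).trans ?_
  rw [lintegral_add_right' _ ((Finset.aemeasurable_fun_sum T fun p _ => hmeas p).const_mul _),
    lintegral_const_mul' _ _ ENNReal.ofReal_ne_top, lintegral_const_mul' _ _ ENNReal.ofReal_ne_top,
    lintegral_finsetSum' _ fun p _ => hmeas p]
  have hterm : ∀ p ∈ T, 0 ≤ b p * (t p + 4) := fun p hp =>
    mul_nonneg (b p).2 (by linarith [ht p hp])
  have hwidth : ∑ p ∈ T, ∫⁻ ω, (maxAbsInner (D p) (R ω) : ℝ≥0∞) ∂μ ≤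
      ENNReal.ofReal (∑ p ∈ T, b p * (t p + 4)) := by
    rw [ENNReal.ofReal_sum_of_nonneg hterm]
    exact Finset.sum_le_sum fun p hp => lintegral_maxAbsInner_sub_starProjection_le S hX
      (hb p hp) (ht p hp) (hcard p hp) (hnorm p hp)
  refine (add_le_add (mul_le_mul_right (lintegral_norm_sq_starProjection_le hσ hX S) _)
    (mul_le_mul_right hwidth _)).trans_eq ?_
  have hsum := Finset.sum_nonneg hterm
  rw [← ENNReal.ofReal_mul zero_le_four, ← ENNReal.ofReal_mul (by positivity),
    ← ENNReal.ofReal_add (by positivity) (by positivity)]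
  ring_nf

end SubgaussianVector

section Hinge

/-- The ramp `(x - t / n)₊` sampled at the lattice points `x = i / n`. -/
noncomputable def hinge (n t i : ℕ) : ℝ := ((i - t : ℕ) : ℝ) / n

/-- The basis of piecewise linear functions on the lattice dual to the differences `H2` in one
variable: the constant, followed by the hinges with knots `0, 1, 2, …`. -/
noncomputable def hingeBasis (n : ℕ) : ℕ → ℕ → ℝ
  | 0, _ => 1
  | t + 1, i => hinge n t i

/-- The downward tent of half-width `w` supported on the cell `[2wq, 2w(q + 1)]`. -/
noncomputable def tent (n w q i : ℕ) : ℝ :=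
  hinge n (2 * w * q + w) i - (hinge n (2 * w * q) i + hinge n (2 * w * q + 2 * w) i) / 2

/-- Piecewise linear interpolation, in the knot variable `t`, of `t ↦ hinge n t i` from the grid of
mesh `w`. -/
noncomputable def knotInterp (n w t i : ℕ) : ℝ :=
  (1 - ((t % w : ℕ) : ℝ) / w) * hinge n (w * (t / w)) i +
    ((t % w : ℕ) : ℝ) / w * hinge n (w * (t / w) + w) i

/-- The height at `t` of the periodic unit tent of period `2w`. -/
noncomputable def tentHeight (w t : ℕ) : ℝ :=
  if t % (2 * w) < w then ((t % (2 * w) : ℕ) : ℝ) / w else 2 - ((t % (2 * w) : ℕ) : ℝ) / w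

lemma abs_tent_le (n w q i : ℕ) : |tent n w q i| ≤ w / (2 * n) := by
  have h₁ : 2 * (i - (2 * w * q + w)) ≤ (i - 2 * w * q) + (i - (2 * w * q + 2 * w)) := by lia
  have h₂ : (i - 2 * w * q) + (i - (2 * w * q + 2 * w)) ≤ 2 * (i - (2 * w * q + w)) + w := by lia
  unfold tent hinge
  generalize i - (2 * w * q + w) = x at h₁ h₂ ⊢
  generalize i - 2 * w * q = y at h₁ h₂ ⊢
  generalize i - (2 * w * q + 2 * w) = z at h₁ h₂ ⊢
  have h₁' : 2 * (x : ℝ) ≤ y + z := by exact_mod_cast h₁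
  have h₂' : (y : ℝ) + z ≤ 2 * x + w := by exact_mod_cast h₂
  rw [show (x : ℝ) / n - (y / n + z / n) / 2 = (2 * x - (y + z)) / (2 * n) by ring, abs_div,
    abs_of_nonneg (by positivity : (0 : ℝ) ≤ 2 * n)]
  gcongr
  rw [abs_le]
  constructor <;> linarith [w.cast_nonneg (α := ℝ)]

lemma tent_eq_zero {w q i : ℕ} (hi : i ∉ Ico (2 * w * q) (2 * w * q + 2 * w)) (n : ℕ) :
    tent n w q i = 0 := by
  have hlin : (i - 2 * w * q) + (i - (2 * w * q + 2 * w)) = 2 * (i - (2 * w * q + w)) := by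
    rw [mem_Ico] at hi
    lia
  have hlin' : ((i - 2 * w * q : ℕ) : ℝ) + (i - (2 * w * q + 2 * w) : ℕ) =
      2 * (i - (2 * w * q + w) : ℕ) := by exact_mod_cast hlin
  unfold tent hinge
  rw [← add_div, hlin']
  ring

lemma sum_tent_sq_le (n w q : ℕ) (s : Finset ℕ) :
    ∑ i ∈ s, tent n w q i ^ 2 ≤ (w : ℝ) ^ 3 / (2 * n ^ 2) := by
  have hle (i) (_ : i ∈ s) : tent n w q i ^ 2 ≤
      if i ∈ Ico (2 * w * q) (2 * w * q + 2 * w) then ((w : ℝ) / (2 * n)) ^ 2 else 0 := by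
    split_ifs with hmem
    · rw [← sq_abs]
      gcongr
      exact abs_tent_le n w q i
    · rw [tent_eq_zero hmem, zero_pow two_ne_zero]
  calc ∑ i ∈ s, tent n w q i ^ 2
      ≤ ∑ i ∈ s, if i ∈ Ico (2 * w * q) (2 * w * q + 2 * w) then ((w : ℝ) / (2 * n)) ^ 2 else 0 :=
        Finset.sum_le_sum hle
    _ ≤ ∑ _i ∈ Ico (2 * w * q) (2 * w * q + 2 * w), ((w : ℝ) / (2 * n)) ^ 2 := by
        rw [← sum_filter]
        exact sum_le_sum_of_subset_of_nonneg (fun i hi => (mem_filter.1 hi).2)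
          fun _ _ _ => sq_nonneg _
    _ = (w : ℝ) ^ 3 / (2 * n ^ 2) := by
        simp only [sum_const, Nat.card_Ico, add_tsub_cancel_left, nsmul_eq_mul]
        push_cast
        rw [div_pow]
        ring

lemma abs_tentHeight_le_one (w t : ℕ) (hw : 0 < w) : |tentHeight w t| ≤ 1 := by
  have hw' : (0 : ℝ) < w := by exact_mod_cast hw
  have hmod : ((t % (2 * w) : ℕ) : ℝ) / w < 2 := by
    rw [div_lt_iff₀ hw']
    exact_mod_cast Nat.mod_lt t (by lia : 0 < 2 * w)
  unfold tentHeight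
  split_ifs with h
  · rw [abs_of_nonneg (by positivity), div_le_one hw']
    exact_mod_cast h.le
  · have hge : 1 ≤ ((t % (2 * w) : ℕ) : ℝ) / w := by
      rw [one_le_div hw']
      exact_mod_cast not_lt.1 h
    rw [abs_of_nonneg] <;> linarith

lemma knotInterp_mul_add {w r : ℕ} (hr : r < w) (n q i : ℕ) :
    knotInterp n w (w * q + r) i =
      (1 - (r : ℝ) / w) * hinge n (w * q) i + (r : ℝ) / w * hinge n (w * q + w) i := by
  unfold knotInterp
  rw [Nat.mul_add_div (by lia), Nat.div_eq_of_lt hr, Nat.mul_add_mod, Nat.mod_eq_of_lt hr, add_zero]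

lemma knotInterp_one (n t i : ℕ) : knotInterp n 1 t i = hinge n t i := by
  simp [knotInterp, Nat.mod_one]

lemma knotInterp_sub_knotInterp_two_mul (n w t i : ℕ) (hw : 0 < w) :
    knotInterp n w t i - knotInterp n (2 * w) t i =
      tentHeight w t * tent n w (t / (2 * w)) i := by
  obtain ⟨q, r, hr, rfl⟩ : ∃ q r, r < 2 * w ∧ t = 2 * w * q + r :=
    ⟨t / (2 * w), t % (2 * w), Nat.mod_lt _ (by lia), (Nat.div_add_mod _ _).symm⟩
  have hw' : (w : ℝ) ≠ 0 := by positivity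
  have hdiv : (2 * w * q + r) / (2 * w) = q := by
    rw [Nat.mul_add_div (by lia), Nat.div_eq_of_lt hr, add_zero]
  rw [hdiv, knotInterp_mul_add hr]
  unfold tentHeight tent
  rw [Nat.mul_add_mod, Nat.mod_eq_of_lt hr]
  split_ifs with h
  · rw [show 2 * w * q + r = w * (2 * q) + r by ring, knotInterp_mul_add h,
      show w * (2 * q) = 2 * w * q by ring]
    push_cast
    field_simp
    ring
  · obtain ⟨r, rfl⟩ := Nat.exists_eq_add_of_le (not_lt.1 h)
    rw [show 2 * w * q + (w + r) = w * (2 * q + 1) + r by ring, knotInterp_mul_add (by lia),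
      show w * (2 * q + 1) = 2 * w * q + w by ring,
      show 2 * w * q + w + w = 2 * w * q + 2 * w by ring]
    push_cast
    field_simp
    ring

end Hinge

section Multiresolution

/-- The number of dyadic refinements needed to resolve `n` lattice points. -/
def depth (n : ℕ) : ℕ := Nat.clog 2 n

/-- The univariate multiresolution dictionary. Resolution `0` holds the two affine functions,
resolution `p ≥ 1` the tents of half-width `2 ^ (depth n - p)`, indexed by their cell `q`. -/
noncomputable def atom (n : ℕ) : ℕ → ℕ → ℕ → ℝ
  | 0, 0, i => hinge n 0 i
  | 0, _ + 1, _ => 1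
  | p + 1, q, i => tent n (2 ^ (depth n - (p + 1))) q i

/-- The coefficient of `hingeBasis n j` on the one atom of resolution `p` it uses. -/
noncomputable def weight (n : ℕ) : ℕ → ℕ → ℝ
  | 0, 0 => 1
  | 0, t + 1 => 1 - (t : ℝ) / 2 ^ depth n
  | _ + 1, 0 => 0
  | p + 1, t + 1 => tentHeight (2 ^ (depth n - (p + 1))) t

/-- The index of the one atom of resolution `p` used by `hingeBasis n j`. -/
def cell (n : ℕ) : ℕ → ℕ → ℕ
  | 0, 0 => 1
  | 0, _ + 1 => 0
  | _ + 1, 0 => 0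
  | p + 1, t + 1 => t / (2 * 2 ^ (depth n - (p + 1)))

lemma le_two_pow_depth (n : ℕ) : n ≤ 2 ^ depth n := Nat.le_pow_clog one_lt_two n

lemma two_pow_depth_le {n : ℕ} (hn : 0 < n) : 2 ^ depth n ≤ 2 * n := by
  rcases (Nat.succ_le_of_lt hn).eq_or_lt with rfl | hn
  · simp [depth]
  · have hlt := Nat.pow_pred_clog_lt_self one_lt_two hn
    have hpos := Nat.clog_pos one_lt_two hn
    rw [depth, ← Nat.succ_pred_eq_of_pos hpos, pow_succ']
    lia

lemma abs_weight_le_one {n j : ℕ} (hj : j < n) (p : ℕ) : |weight n p j| ≤ 1 := by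
  match p, j with
  | 0, 0 => simp [weight]
  | 0, t + 1 =>
    have ht : (t : ℝ) / 2 ^ depth n ≤ 1 := by
      rw [div_le_one (by positivity)]
      exact_mod_cast (by lia : t ≤ n).trans (le_two_pow_depth n)
    rw [weight, abs_of_nonneg (by linarith)]
    linarith [(by positivity : 0 ≤ (t : ℝ) / 2 ^ depth n)]
  | p + 1, 0 => simp [weight]
  | p + 1, t + 1 => exact abs_tentHeight_le_one _ _ (by positivity)

lemma weight_eq_zero {p j : ℕ} (hp : p ≠ 0) (hj : j < 2) (n : ℕ) : weight n p j = 0 := by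
  obtain ⟨p, rfl⟩ := Nat.exists_eq_succ_of_ne_zero hp
  interval_cases j <;> simp [weight, tentHeight]

lemma cell_lt {n j p : ℕ} (hj : j < n) (hp : p ≤ depth n) : cell n p j < 2 ^ (p + 1) := by
  match p, j with
  | 0, 0 => simp [cell]
  | 0, _ + 1 => simp [cell]
  | p + 1, 0 => simp [cell]
  | p + 1, t + 1 =>
    have hpow : 2 ^ (p + 1 + 1) * (2 * 2 ^ (depth n - (p + 1))) = 4 * 2 ^ depth n := by
      rw [← pow_succ', ← pow_add, show p + 1 + 1 + (depth n - (p + 1) + 1) = 2 + depth n by lia,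
        pow_add]
      norm_num
    rw [cell, Nat.div_lt_iff_lt_mul (by positivity), hpow]
    have := le_two_pow_depth n
    lia

lemma sum_atom_sq_le {n p : ℕ} (hn : 0 < n) (hp : p ≤ depth n) (q : ℕ) :
    ∑ i ∈ range n, atom n p q i ^ 2 ≤ 4 * n * (1 / 8) ^ p := by
  have hn' : (0 : ℝ) < n := by exact_mod_cast hn
  match p, q with
  | 0, 0 =>
    have hle (i) (hi : i ∈ range n) : atom n 0 0 i ^ 2 ≤ 1 := by
      refine pow_le_one₀ (by unfold atom hinge; positivity) ?_
      rw [atom, hinge, div_le_one hn']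
      exact_mod_cast (by simpa using (mem_range.1 hi).le)
    exact (Finset.sum_le_sum hle).trans (by simp; linarith)
  | 0, q + 1 => simp [atom]; linarith
  | p + 1, q =>
    set w : ℝ := 2 ^ (depth n - (p + 1)) with hw
    have hwp : w * 2 ^ (p + 1) ≤ 2 * n := by
      rw [hw, ← pow_add, Nat.sub_add_cancel hp]
      exact_mod_cast two_pow_depth_le hn
    have hcube : w ^ 3 * 8 ^ (p + 1) ≤ 8 * (n : ℝ) ^ 3 := by
      calc w ^ 3 * 8 ^ (p + 1) = (w * 2 ^ (p + 1)) ^ 3 := by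
            rw [mul_pow, ← pow_mul 2 (p + 1), mul_comm (p + 1), pow_mul 2 3]
            norm_num only
        _ ≤ (2 * (n : ℝ)) ^ 3 := by gcongr
        _ = 8 * n ^ 3 := by ring
    refine (sum_tent_sq_le n _ q (range n)).trans ?_
    push_cast
    rw [← hw, one_div_pow, mul_one_div, div_le_div_iff₀ (by positivity) (by positivity)]
    calc w ^ 3 * 8 ^ (p + 1) ≤ 8 * (n : ℝ) ^ 3 := hcube
      _ = 4 * n * (2 * n ^ 2) := by ring

lemma hingeBasis_eq_sum {n j i : ℕ} (hj : j < n) (hi : i < n) :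
    hingeBasis n j i = ∑ p ∈ range (depth n + 1), weight n p j * atom n p (cell n p j) i := by
  rw [sum_range_succ']
  match j with
  | 0 => simp [hingeBasis, weight, cell, atom]
  | t + 1 =>
    have ht : t < 2 ^ depth n := by have := le_two_pow_depth n; lia
    have hrefine (p) (hp : p ∈ range (depth n)) :
        weight n (p + 1) (t + 1) * atom n (p + 1) (cell n (p + 1) (t + 1)) i =
          knotInterp n (2 ^ (depth n - (p + 1))) t i - knotInterp n (2 ^ (depth n - p)) t i := by
      rw [show depth n - p = depth n - (p + 1) + 1 by have := mem_range.1 hp; lia, pow_succ',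
        knotInterp_sub_knotInterp_two_mul _ _ _ _ (by positivity)]
      rfl
    have hvanish : hinge n (2 ^ depth n) i = 0 := by
      rw [hinge, Nat.sub_eq_zero_of_le (hi.le.trans (le_two_pow_depth n)), Nat.cast_zero, zero_div]
    have hcoarse : knotInterp n (2 ^ depth n) t i = weight n 0 (t + 1) * hinge n 0 i := by
      have h := knotInterp_mul_add ht n 0 i
      simpa [hvanish, weight] using h
    rw [Finset.sum_congr rfl hrefine,
      sum_range_sub (fun p => knotInterp n (2 ^ (depth n - p)) t i)]
    simp [knotInterp_one, hcoarse, hingeBasis, atom, cell]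

end Multiresolution

section TensorDictionary

/-- The decay rate `2 ^ (-3 / 2)` of the `ℓ²` norm of atoms per resolution level. -/
noncomputable def decay : ℝ≥0 := NNReal.sqrt (1 / 8)

lemma decay_sq : decay ^ 2 = 1 / 8 := NNReal.sq_sqrt _

lemma decay_pos : 0 < decay := NNReal.sqrt_pos.2 (by norm_num)

lemma decay_lt_one : decay < 1 := by
  rw [← pow_lt_one_iff two_ne_zero, decay_sq, ← NNReal.coe_lt_coe]
  norm_num

variable {ι : Type*} [Fintype ι]

/-- The number of variables on which the tensor basis function with multi-index `j` depends. -/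
def interactionOrder (j : ι → ℕ) : ℕ := #{k | j k ≠ 0}

variable (n : ι → ℕ)

/-- The tensor product of the univariate basis functions `hingeBasis`. -/
noncomputable def tensorHinge (j : ι → ℕ) : EuclideanSpace ℝ (∀ k, Fin (n k)) :=
  WithLp.toLp 2 fun i => ∏ k, hingeBasis (n k) (j k) (i k)

/-- The tensor product of univariate atoms of resolutions `p k` and indices `q k`. -/
noncomputable def tensorAtom (p q : ι → ℕ) : EuclideanSpace ℝ (∀ k, Fin (n k)) :=
  WithLp.toLp 2 fun i => ∏ k, atom (n k) (p k) (q k) (i k)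

/-- The coefficient of `tensorHinge n j` on the one tensor atom of resolution `p` it uses. -/
noncomputable def tensorWeight (p j : ι → ℕ) : ℝ := ∏ k, weight (n k) (p k) (j k)

/-- The index of the one tensor atom of resolution `p` used by `tensorHinge n j`. -/
def tensorCell (p j : ι → ℕ) : ι → ℕ := fun k => cell (n k) (p k) (j k)

variable {n}

lemma abs_tensorWeight_le_one {j : ι → ℕ} (hj : ∀ k, j k < n k) (p : ι → ℕ) :
    |tensorWeight n p j| ≤ 1 := by
  rw [tensorWeight, abs_prod]
  exact prod_le_one (fun _ _ => abs_nonneg _) fun k _ => abs_weight_le_one (hj k) (p k)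

lemma tensorWeight_eq_zero {p j : ι → ℕ} {k : ι} (hp : p k ≠ 0) (hj : j k < 2) (n : ι → ℕ) :
    tensorWeight n p j = 0 :=
  prod_eq_zero (mem_univ k) (weight_eq_zero hp hj (n k))

variable (n) [DecidableEq ι]

/-- The multi-indices of the lattice `∏ k, {0, …, n k - 1}`. -/
def lattice : Finset (ι → ℕ) := Fintype.piFinset fun k => range (n k)

/-- The multi-indices `j` for which `tensorHinge n j` has an interior knot in some variable; theirs
are the coefficients penalized by `V2`. -/
def interiorLattice : Finset (ι → ℕ) := {j ∈ lattice n | ∃ k, 2 ≤ j k}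

/-- The multiresolutions `p` needed to expand tensor hinges of interaction order at most `s`. -/
def resolutions (s : ℕ) : Finset (ι → ℕ) :=
  {p ∈ Fintype.piFinset fun k => range (depth (n k) + 1) | interactionOrder p ≤ s}

/-- The tensor atoms of resolution `p`. -/
noncomputable def dictionary (p : ι → ℕ) : Finset (EuclideanSpace ℝ (∀ k, Fin (n k))) :=
  open Classical in (Fintype.piFinset fun k => range (2 ^ (p k + 1))).image (tensorAtom n p)

variable {n}

lemma mem_lattice {j : ι → ℕ} : j ∈ lattice n ↔ ∀ k, j k < n k := by simp [lattice]

lemma mem_interiorLattice {j : ι → ℕ} : j ∈ interiorLattice n ↔ j ∈ lattice n ∧ ∃ k, 2 ≤ j k :=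
  mem_filter

lemma mem_resolutions {p : ι → ℕ} {s : ℕ} :
    p ∈ resolutions n s ↔ (∀ k, p k ≤ depth (n k)) ∧ interactionOrder p ≤ s := by
  simp [resolutions]

lemma tensorHinge_eq_sum {j : ι → ℕ} {s : ℕ} (hj : ∀ k, j k < n k) (hs : interactionOrder j ≤ s) :
    tensorHinge n j =
      ∑ p ∈ resolutions n s, tensorWeight n p j • tensorAtom n p (tensorCell n p j) := by
  have hfull : tensorHinge n j = ∑ p ∈ Fintype.piFinset fun k => range (depth (n k) + 1),
      tensorWeight n p j • tensorAtom n p (tensorCell n p j) := by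
    ext i
    simp only [tensorHinge, tensorAtom, tensorWeight, tensorCell, WithLp.ofLp_sum,
      WithLp.ofLp_smul, Finset.sum_apply, Pi.smul_apply, smul_eq_mul, ← prod_mul_distrib]
    rw [prod_congr rfl fun k _ => hingeBasis_eq_sum (hj k) (i k).2, prod_univ_sum]
  rw [hfull, resolutions, sum_filter_of_ne]
  intro p _ hne
  -- a resolution of order above `s` refines some variable on which `tensorHinge n j` is constant
  by_contra! hp
  obtain ⟨k, hpk, hjk⟩ : ∃ k ∈ ({k | p k ≠ 0} : Finset ι), k ∉ ({k | j k ≠ 0} : Finset ι) :=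
    exists_mem_notMem_of_card_lt_card (hs.trans_lt hp)
  simp only [mem_filter, mem_univ, true_and, not_not] at hpk hjk
  exact hne (by rw [tensorWeight_eq_zero hpk (by lia), zero_smul])

lemma tensorAtom_tensorCell_mem_dictionary {j p : ι → ℕ} (hj : ∀ k, j k < n k)
    (hp : ∀ k, p k ≤ depth (n k)) : tensorAtom n p (tensorCell n p j) ∈ dictionary n p :=
  mem_image_of_mem _ (Fintype.mem_piFinset.2 fun k => mem_range.2 (cell_lt (hj k) (hp k)))

lemma card_dictionary_le (n p : ι → ℕ) : #(dictionary n p) ≤ 2 ^ (∑ k, p k + Fintype.card ι) := by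
  refine card_image_le.trans_eq ?_
  simp [Fintype.card_piFinset, prod_pow_eq_pow_sum, sum_add_distrib]

lemma card_dictionary_le_exp (n p : ι → ℕ) :
    (#(dictionary n p) : ℝ) ≤ Real.exp (∑ k, p k + Fintype.card ι : ℕ) := by
  calc (#(dictionary n p) : ℝ) ≤ (2 : ℝ) ^ (∑ k, p k + Fintype.card ι) := by
        exact_mod_cast card_dictionary_le n p
    _ ≤ Real.exp 1 ^ (∑ k, p k + Fintype.card ι) := by
        gcongr
        linarith [Real.add_one_le_exp 1]
    _ = Real.exp (∑ k, p k + Fintype.card ι : ℕ) := by rw [← Real.exp_nat_mul, mul_one]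

lemma nnnorm_le_of_mem_dictionary (hn : ∀ k, 0 < n k) {p : ι → ℕ} (hp : ∀ k, p k ≤ depth (n k))
    {w : EuclideanSpace ℝ (∀ k, Fin (n k))} (hw : w ∈ dictionary n p) :
    ‖w‖₊ ≤ 2 ^ Fintype.card ι * NNReal.sqrt (∏ k, n k) * decay ^ ∑ k, p k := by
  obtain ⟨q, -, rfl⟩ := mem_image.1 hw
  rw [← pow_le_pow_iff_left₀ zero_le zero_le two_ne_zero, ← NNReal.coe_le_coe]
  push_cast
  rw [mul_pow, mul_pow, ← pow_mul decay.toReal, mul_comm (∑ k, p k), pow_mul, ← NNReal.coe_pow,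
    decay_sq, Real.sq_sqrt (by positivity), EuclideanSpace.real_norm_sq_eq]
  calc ∑ i, tensorAtom n p q i ^ 2
      = ∏ k, ∑ i ∈ range (n k), atom (n k) (p k) (q k) i ^ 2 := by
        simp only [tensorAtom, ← prod_pow, Finset.sum_range]
        rw [prod_univ_sum, Fintype.piFinset_univ]
    _ ≤ ∏ k, 4 * (n k : ℝ) * (1 / 8) ^ p k :=
        prod_le_prod (fun _ _ => by positivity) fun k _ => sum_atom_sq_le (hn k) (hp k) (q k)
    _ = (2 ^ Fintype.card ι) ^ 2 * (∏ k, (n k : ℝ)) * (1 / 8 : ℝ≥0) ^ ∑ k, p k := by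
        rw [prod_mul_distrib, prod_mul_distrib, prod_pow_eq_pow_sum, prod_const, card_univ,
          pow_right_comm]
        norm_num

end TensorDictionary

section CoarseFine

variable {ι : Type*} [Fintype ι] [DecidableEq ι] (n : ι → ℕ) (s J : ℕ)

/-- The multiresolutions of total level at most `J`, whose atoms are fitted exactly. -/
def coarse : Finset (ι → ℕ) := {p ∈ resolutions n s | ∑ k, p k ≤ J}

/-- The multiresolutions of total level above `J`, whose atoms are controlled by their norms. -/
def fine : Finset (ι → ℕ) := {p ∈ resolutions n s | ¬ ∑ k, p k ≤ J}

/-- The span of the tensor atoms of coarse multiresolution. -/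
noncomputable def coarseSpan : Submodule ℝ (EuclideanSpace ℝ (∀ k, Fin (n k))) :=
  span ℝ (⋃ p ∈ coarse n s J, (dictionary n p : Set (EuclideanSpace ℝ (∀ k, Fin (n k)))))

/-- The part of `tensorHinge n j` outside `coarseSpan n s J`. -/
noncomputable def finePart (j : ι → ℕ) : EuclideanSpace ℝ (∀ k, Fin (n k)) :=
  ∑ p ∈ fine n s J, tensorWeight n p j • tensorAtom n p (tensorCell n p j)

variable {n s J}

lemma depth_of_mem_coarse {p : ι → ℕ} (hp : p ∈ coarse n s J) (k : ι) : p k ≤ depth (n k) :=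
  (mem_resolutions.1 (mem_filter.1 hp).1).1 k

lemma depth_of_mem_fine {p : ι → ℕ} (hp : p ∈ fine n s J) (k : ι) : p k ≤ depth (n k) :=
  (mem_resolutions.1 (mem_filter.1 hp).1).1 k

lemma finrank_coarseSpan_le (n : ι → ℕ) (s J : ℕ) :
    Module.finrank ℝ (coarseSpan n s J) ≤ ∑ p ∈ coarse n s J, 2 ^ (∑ k, p k + Fintype.card ι) := by
  classical
  rw [coarseSpan, ← set_biUnion_coe, ← coe_biUnion]
  exact (finrank_span_finset_le_card _).trans <|
    card_biUnion_le.trans <| sum_le_sum fun p _ => card_dictionary_le n p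

lemma tensorHinge_sub_finePart_mem {j : ι → ℕ} (hj : ∀ k, j k < n k)
    (hs : interactionOrder j ≤ s) : tensorHinge n j - finePart n s J j ∈ coarseSpan n s J := by
  rw [tensorHinge_eq_sum hj hs, ← sum_filter_add_sum_filter_not _ fun p => ∑ k, p k ≤ J, finePart,
    fine, add_sub_cancel_right]
  refine Submodule.sum_mem _ fun p hp => Submodule.smul_mem _ _ (subset_span ?_)
  exact Set.mem_biUnion hp (tensorAtom_tensorCell_mem_dictionary hj (depth_of_mem_coarse hp))

-- atoms of positive resolution are only needed for knots in the interior of some variable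
lemma finePart_eq_zero {j : ι → ℕ} (hj : ∀ k, j k < 2) (n : ι → ℕ) (s J : ℕ) :
    finePart n s J j = 0 := by
  refine sum_eq_zero fun p hp => ?_
  obtain ⟨k, -, hk⟩ : ∃ k ∈ univ, p k ≠ 0 :=
    exists_ne_zero_of_sum_ne_zero (by have := (mem_filter.1 hp).2; lia)
  rw [tensorWeight_eq_zero hk (hj k), zero_smul]

lemma abs_inner_finePart_le {j : ι → ℕ} (hj : ∀ k, j k < n k)
    (y : EuclideanSpace ℝ (∀ k, Fin (n k))) :
    |⟪finePart n s J j, y⟫_ℝ| ≤ ∑ p ∈ fine n s J, (maxAbsInner (dictionary n p) y : ℝ) := by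
  rw [finePart, sum_inner]
  refine (abs_sum_le_sum_abs _ _).trans (sum_le_sum fun p hp => ?_)
  rw [real_inner_smul_left, abs_mul]
  exact (mul_le_of_le_one_left (abs_nonneg _) (abs_tensorWeight_le_one hj p)).trans <|
    abs_inner_le_maxAbsInner (tensorAtom_tensorCell_mem_dictionary hj (depth_of_mem_fine hp)) y

lemma exists_mem_coarseSpan_inner_le {c : (ι → ℕ) → ℝ}
    (hc : ∀ j ∈ lattice n, s < interactionOrder j → c j = 0) (J : ℕ) :
    ∃ u ∈ coarseSpan n s J, ∀ y, ⟪∑ j ∈ lattice n, c j • tensorHinge n j - u, y⟫_ℝ ≤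
      (∑ j ∈ interiorLattice n, |c j|) *
        ∑ p ∈ fine n s J, (maxAbsInner (dictionary n p) y : ℝ) := by
  refine ⟨∑ j ∈ lattice n, c j • (tensorHinge n j - finePart n s J j),
    Submodule.sum_mem _ fun j hj => ?_, fun y => ?_⟩
  · obtain hs | hs := le_or_gt (interactionOrder j) s
    · exact Submodule.smul_mem _ _ (tensorHinge_sub_finePart_mem (mem_lattice.1 hj) hs)
    · simp [hc j hj hs]
  · have hfine : ∑ j ∈ lattice n, c j • tensorHinge n j -
        ∑ j ∈ lattice n, c j • (tensorHinge n j - finePart n s J j) =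
          ∑ j ∈ interiorLattice n, c j • finePart n s J j := by
      rw [interiorLattice, ← sum_sub_distrib, sum_filter_of_ne]
      · simp only [smul_sub, sub_sub_cancel]
      · intro j _ hne
        by_contra! hlt
        exact hne (by rw [finePart_eq_zero hlt, smul_zero])
    rw [hfine, sum_inner, sum_mul]
    refine sum_le_sum fun j hj => ?_
    rw [real_inner_smul_left]
    refine (le_abs_self _).trans ?_
    rw [abs_mul]
    gcongr
    exact abs_inner_finePart_le (mem_lattice.1 (mem_interiorLattice.1 hj).1) y

end CoarseFine

section TaylorExpansion

/-- The univariate version of `H2`: the difference of `f` at `j` of order `min j 2`. -/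
noncomputable def hingeDiff (f : ℕ → ℝ) (j : ℕ) : ℝ :=
  ∑ δ ∈ range (min j 2 + 1), (-1 : ℝ) ^ δ * ((min j 2).choose δ : ℝ) * f (j - δ)

lemma sum_hingeDiff_succ (f : ℕ → ℝ) (i : ℕ) :
    ∑ t ∈ range (i + 1), hingeDiff f (t + 1) = f (i + 1) - f i := by
  induction i with
  | zero => simp [hingeDiff, sum_range_succ]; ring
  | succ i ih =>
    rw [sum_range_succ, ih]
    simp [hingeDiff, sum_range_succ]
    ring

lemma sum_hingeDiff_succ_mul (f : ℕ → ℝ) (i : ℕ) :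
    ∑ t ∈ range i, hingeDiff f (t + 1) * ((i - t : ℕ) : ℝ) = f i - f 0 := by
  induction i with
  | zero => simp
  | succ i ih =>
    have hsplit (t) (ht : t ∈ range (i + 1)) : hingeDiff f (t + 1) * ((i + 1 - t : ℕ) : ℝ) =
        hingeDiff f (t + 1) * ((i - t : ℕ) : ℝ) + hingeDiff f (t + 1) := by
      rw [Nat.succ_sub (mem_range_succ_iff.1 ht)]
      push_cast
      ring
    rw [Finset.sum_congr rfl hsplit, sum_add_distrib, sum_hingeDiff_succ, sum_range_succ, ih]
    simp

lemma sum_hingeDiff_mul_hingeBasis (f : ℕ → ℝ) {n i : ℕ} (hi : i < n) :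
    ∑ j ∈ range n, hingeDiff f j * ((if j = 0 then 1 else (n : ℝ)) * hingeBasis n j i) = f i := by
  obtain ⟨m, rfl⟩ : ∃ m, n = m + 1 := ⟨n - 1, by lia⟩
  have hterm (t : ℕ) : hingeDiff f (t + 1) *
      ((if t + 1 = 0 then 1 else ((m + 1 : ℕ) : ℝ)) * hingeBasis (m + 1) (t + 1) i) =
        hingeDiff f (t + 1) * ((i - t : ℕ) : ℝ) := by
    rw [if_neg t.succ_ne_zero, hingeBasis, hinge, mul_div_cancel₀ _ (by positivity)]
  have hvanish (t) (_ : t ∈ range m) (ht : t ∉ range i) :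
      hingeDiff f (t + 1) * ((i - t : ℕ) : ℝ) = 0 := by
    rw [Nat.sub_eq_zero_of_le (by simpa using ht), Nat.cast_zero, mul_zero]
  rw [sum_range_succ', Finset.sum_congr rfl fun t _ => hterm t,
    ← sum_subset (range_subset_range.2 (by lia)) hvanish, sum_hingeDiff_succ_mul]
  simp [hingeDiff, hingeBasis]

variable {d : ℕ} {n : Fin d → ℕ}

lemma H2_eq_sum_prod_hingeDiff {j : Fin d → ℕ} (hj : j ∈ lattice n) (θ : (Fin d → ℕ) → ℝ) :
    H2 d θ j = ∑ l ∈ lattice n, θ l * ∏ k, hingeDiff (Pi.single (l k) 1) (j k) := by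
  simp_rw [H2, mixedDiff, hingeDiff, prod_univ_sum, mul_sum]
  rw [sum_comm]
  refine sum_congr rfl fun δ _ => ?_
  rw [sum_eq_single fun k => j k - δ k]
  · simp [prod_mul_distrib, prod_pow_eq_pow_sum, mul_comm]
  · intro l _ hl
    obtain ⟨k, hk⟩ := Function.ne_iff.1 hl
    rw [prod_eq_zero (mem_univ k) (by rw [Pi.single_eq_of_ne hk.symm, mul_zero]), mul_zero]
  · exact fun h => (h <| mem_lattice.2 fun k =>
      (Nat.sub_le _ _).trans_lt (mem_lattice.1 hj k)).elim

/-- The coefficient of the lattice function `θ` on `tensorHinge n j`. -/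
noncomputable def hingeCoef (n : Fin d → ℕ) (θ : (Fin d → ℕ) → ℝ) (j : Fin d → ℕ) : ℝ :=
  H2 d θ j * ∏ k, if j k = 0 then 1 else (n k : ℝ)

lemma sum_hingeCoef_mul_prod_hingeBasis (θ : (Fin d → ℕ) → ℝ) {i : Fin d → ℕ}
    (hi : i ∈ lattice n) :
    ∑ j ∈ lattice n, hingeCoef n θ j * ∏ k, hingeBasis (n k) (j k) (i k) = θ i := by
  have hdual (l : Fin d → ℕ) : ∑ j ∈ lattice n, (∏ k, hingeDiff (Pi.single (l k) 1) (j k)) *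
      ((∏ k, if j k = 0 then 1 else (n k : ℝ)) * ∏ k, hingeBasis (n k) (j k) (i k)) =
        if l = i then 1 else 0 := by
    simp_rw [← prod_mul_distrib]
    rw [lattice, ← prod_univ_sum (fun k => range (n k)) fun k m => hingeDiff (Pi.single (l k) 1) m *
      ((if m = 0 then 1 else (n k : ℝ)) * hingeBasis (n k) m (i k)), prod_congr rfl fun k _ =>
        sum_hingeDiff_mul_hingeBasis (Pi.single (l k) 1) (mem_lattice.1 hi k)]
    simp [Pi.single_apply, prod_ite_zero, funext_iff, eq_comm]
  calc ∑ j ∈ lattice n, hingeCoef n θ j * ∏ k, hingeBasis (n k) (j k) (i k)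
      = ∑ j ∈ lattice n, ∑ l ∈ lattice n, θ l * ((∏ k, hingeDiff (Pi.single (l k) 1) (j k)) *
          ((∏ k, if j k = 0 then 1 else (n k : ℝ)) * ∏ k, hingeBasis (n k) (j k) (i k))) := by
        refine sum_congr rfl fun j hj => ?_
        rw [hingeCoef, mul_assoc, H2_eq_sum_prod_hingeDiff hj, sum_mul]
        simp only [mul_assoc]
    _ = θ i := by
        rw [sum_comm]
        simp_rw [← mul_sum, hdual]
        simp [hi]

lemma sum_hingeCoef_smul_tensorHinge (θ : (∀ k, Fin (n k)) → ℝ) :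
    ∑ j ∈ lattice n, hingeCoef n (latExtend d n θ) j • tensorHinge n j = WithLp.toLp 2 θ := by
  ext i
  have h := sum_hingeCoef_mul_prod_hingeBasis (n := n) (latExtend d n θ)
    (i := fun k => i k) (mem_lattice.2 fun k => (i k).2)
  simpa [tensorHinge, latExtend] using h

lemma sup_min_two {j : Fin d → ℕ} (hj : ∃ k, 2 ≤ j k) :
    univ.sup (fun k => min (j k) 2) = 2 := by
  obtain ⟨k, hk⟩ := hj
  refine le_antisymm (Finset.sup_le fun _ _ => min_le_right _ _) ?_
  simpa [hk] using le_sup (f := fun k => min (j k) 2) (mem_univ k)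

lemma sup_min_one {j : Fin d → ℕ} (hj : 0 < interactionOrder j) :
    univ.sup (fun k => min (j k) 1) = 1 := by
  obtain ⟨k, hk⟩ := card_pos.1 hj
  refine le_antisymm (Finset.sup_le fun _ _ => min_le_right _ _) ?_
  have hk' : 1 ≤ j k := Nat.one_le_iff_ne_zero.2 (mem_filter.1 hk).2
  simpa [hk'] using le_sup (f := fun k => min (j k) 1) (mem_univ k)

lemma mem_idxBeta_min {j : Fin d → ℕ} (hj : j ∈ lattice n) {m : ℕ}
    (hsup : univ.sup (fun k => min (j k) m) = m) : j ∈ idxBeta d n fun k => min (j k) m := by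
  rw [idxBeta, Fintype.mem_piFinset, hsup]
  intro k
  have := mem_lattice.1 hj k
  split_ifs with h
  · rw [mem_Ico]
    lia
  · rw [mem_singleton]
    lia

lemma abs_hingeCoef (n : Fin d → ℕ) (θ : (Fin d → ℕ) → ℝ) (j : Fin d → ℕ) :
    |hingeCoef n θ j| = (∏ k, (n k : ℝ) ^ (if min (j k) 2 = 2 then 1 else min (j k) 2)) *
      |mixedDiff d (fun k => min (j k) 2) θ j| := by
  have hfactor (k : Fin d) : (if j k = 0 then 1 else (n k : ℝ)) =
      (n k : ℝ) ^ (if min (j k) 2 = 2 then 1 else min (j k) 2) := by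
    obtain h | h | h : j k = 0 ∨ j k = 1 ∨ 2 ≤ j k := by lia
    · simp [h]
    · simp [h]
    · simp [h, show j k ≠ 0 by lia]
  rw [hingeCoef, H2, prod_congr rfl fun k _ => hfactor k, abs_mul, mul_comm,
    abs_of_nonneg (a := ∏ k, _) (by positivity)]

lemma sum_abs_hingeCoef_le (n : Fin d → ℕ) (θ : (Fin d → ℕ) → ℝ) :
    ∑ j ∈ interiorLattice n, |hingeCoef n θ j| ≤ V2 d n θ := by
  have hmaps : ∀ j ∈ interiorLattice n, (fun k => min (j k) 2) ∈
      {β ∈ Fintype.piFinset fun _ : Fin d => range 3 | univ.sup β = 2} := by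
    intro j hj
    simp [sup_min_two (mem_interiorLattice.1 hj).2, Nat.lt_succ_iff]
  rw [V2, ← sum_fiberwise_of_maps_to hmaps]
  refine sum_le_sum fun β _ => ?_
  rw [mul_sum]
  calc ∑ j ∈ interiorLattice n with (fun k => min (j k) 2) = β, |hingeCoef n θ j|
      = ∑ j ∈ interiorLattice n with (fun k => min (j k) 2) = β,
          (∏ k, (n k : ℝ) ^ (if β k = 2 then 1 else β k)) * |mixedDiff d β θ j| := by
        refine Finset.sum_congr rfl fun j hj => ?_
        rw [abs_hingeCoef, ← (mem_filter.1 hj).2]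
    _ ≤ _ := by
        refine sum_le_sum_of_subset_of_nonneg (fun j hj => ?_) fun _ _ _ => by positivity
        simp only [mem_filter, mem_interiorLattice] at hj
        rw [← hj.2]
        exact mem_idxBeta_min hj.1.1 (sup_min_two hj.1.2)

lemma hingeCoef_eq_zero {s : ℕ} {V : ℝ} {θ : (∀ k, Fin (n k)) → ℝ} (hθ : θ ∈ CsSet d n s V)
    {j : Fin d → ℕ} (hj : j ∈ lattice n) (hs : s < interactionOrder j) :
    hingeCoef n (latExtend d n θ) j = 0 := by
  have horder : ∑ k, min (j k) 1 = interactionOrder j := by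
    rw [interactionOrder, card_filter]
    exact Finset.sum_congr rfl fun k _ => by split_ifs <;> lia
  rw [hingeCoef, hθ.2 (fun k => min (j k) 1) (fun k => min_le_right _ _) (horder ▸ hs) j
    (mem_idxBeta_min hj (sup_min_one (by lia))), zero_mul]

end TaylorExpansion

section LevelSums

lemma card_finsuppAntidiag_le {ι : Type*} [DecidableEq ι] {A : Finset ι} (hA : 0 < #A) (l : ℕ) :
    #(A.finsuppAntidiag l) ≤ (l + 1) ^ (#A - 1) := by
  rw [card_finsuppAntidiag_nat_eq_choose, ← tsub_add_eq_add_tsub hA, ← Nat.choose_symm_add,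
    add_comm]
  exact Nat.choose_add_le_add_one_pow _ _

variable {ι : Type*} [Fintype ι] [DecidableEq ι] {n : ι → ℕ} {s : ℕ}

lemma card_filter_resolutions_le (hs : 1 ≤ s) (hsι : s ≤ Fintype.card ι) (l : ℕ) :
    #{p ∈ resolutions n s | ∑ k, p k = l} ≤ 2 ^ Fintype.card ι * (l + 1) ^ (s - 1) := by
  have hsub : {p ∈ resolutions n s | ∑ k, p k = l} ⊆
      (powersetCard s univ).biUnion fun A => (A.finsuppAntidiag l).image (⇑) := by
    intro p hp
    obtain ⟨hp, hl⟩ := mem_filter.1 hp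
    obtain ⟨A, hpA, -, hA⟩ :=
      exists_subsuperset_card_eq (subset_univ _) (mem_resolutions.1 hp).2 (by simpa using hsι)
    have hsupp (k) (hk : k ∉ A) : p k = 0 := by_contra fun h => hk (hpA (by simpa using h))
    refine mem_biUnion.2 ⟨A, by simpa using hA, mem_image.2 ⟨Finsupp.equivFunOnFinite.symm p, ?_⟩⟩
    refine ⟨mem_finsuppAntidiag.2 ⟨?_, fun k hk => ?_⟩, rfl⟩
    · rw [← hl]
      exact sum_subset (subset_univ A) fun k _ => hsupp k
    · exact by_contra fun h => Finsupp.mem_support_iff.1 hk (hsupp k h)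
  calc #{p ∈ resolutions n s | ∑ k, p k = l}
      ≤ ∑ A ∈ powersetCard s (univ : Finset ι), (l + 1) ^ (s - 1) := by
        refine (card_le_card hsub).trans (card_biUnion_le.trans (sum_le_sum fun A hA => ?_))
        have hA' := (mem_powersetCard.1 hA).2
        exact card_image_le.trans (hA' ▸ card_finsuppAntidiag_le (by lia) l)
    _ ≤ 2 ^ Fintype.card ι * (l + 1) ^ (s - 1) := by
        rw [sum_const, card_powersetCard, card_univ, smul_eq_mul]
        gcongr
        exact Nat.choose_le_two_pow _ _

lemma sum_level_le (hs : 1 ≤ s) (hsι : s ≤ Fintype.card ι) {T : Finset (ι → ℕ)} {U : Finset ℕ}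
    (hT : T ⊆ resolutions n s) (hU : ∀ p ∈ T, ∑ k, p k ∈ U) {f : ℕ → ℝ} (hf : ∀ l, 0 ≤ f l) :
    ∑ p ∈ T, f (∑ k, p k) ≤
      2 ^ Fintype.card ι * ∑ l ∈ U, ((l : ℝ) + 1) ^ (s - 1) * f l := by
  rw [← sum_fiberwise_of_maps_to hU, mul_sum]
  refine sum_le_sum fun l _ => ?_
  have hfiber : ∀ p ∈ T.filter (∑ k, · k = l), f (∑ k, p k) = f l := fun p hp => by
    rw [(mem_filter.1 hp).2]
  rw [Finset.sum_congr rfl hfiber, sum_const, nsmul_eq_mul, ← mul_assoc]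
  have hcard := (card_le_card (filter_subset_filter (∑ k, · k = l) hT)).trans
    (card_filter_resolutions_le hs hsι l)
  exact mul_le_mul_of_nonneg_right (by exact_mod_cast hcard) (hf l)

lemma sum_coarse_le (hs : 1 ≤ s) (hsι : s ≤ Fintype.card ι) (n : ι → ℕ) (J : ℕ) :
    ∑ p ∈ coarse n s J, (2 : ℝ) ^ ∑ k, p k ≤
      2 ^ Fintype.card ι * (2 * (2 ^ J * ((J : ℝ) + 1) ^ (s - 1))) := by
  refine (sum_level_le hs hsι (filter_subset _ _) (U := range (J + 1))
    (fun p hp => mem_range_succ_iff.2 (mem_filter.1 hp).2) fun l => by positivity).trans ?_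
  gcongr
  calc ∑ l ∈ range (J + 1), ((l : ℝ) + 1) ^ (s - 1) * 2 ^ l
      ≤ ∑ l ∈ range (J + 1), ((J : ℝ) + 1) ^ (s - 1) * 2 ^ l := by
        refine sum_le_sum fun l hl => ?_
        have := mem_range_succ_iff.1 hl
        gcongr
    _ = ((J : ℝ) + 1) ^ (s - 1) * (2 ^ (J + 1) - 1) := by
        rw [← mul_sum, geom_sum_eq (by norm_num)]
        norm_num
    _ ≤ 2 * (2 ^ J * ((J : ℝ) + 1) ^ (s - 1)) := by
        rw [pow_succ]
        linarith [pow_nonneg (by positivity : (0 : ℝ) ≤ J + 1) (s - 1)]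

lemma summable_succ_pow_mul_geometric {r : ℝ} (hr0 : 0 < r) (hr1 : r < 1) (d : ℕ) :
    Summable fun k : ℕ => ((k : ℝ) + 1) ^ d * r ^ k := by
  have hsum := summable_pow_mul_geometric_of_norm_lt_one d (Real.norm_of_nonneg hr0.le ▸ hr1)
  have hshift := (summable_nat_add_iff 1).2 hsum
  refine (hshift.mul_left r⁻¹).congr fun k => ?_
  rw [pow_succ]
  push_cast
  field_simp

/-- The constant comparing a geometric tail of ratio `r` weighted by a polynomial of degree at most
`d` with its first term. -/
noncomputable def tailConst (r : ℝ) (d : ℕ) : ℝ := ∑' k : ℕ, ((k : ℝ) + 1) ^ d * r ^ k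

lemma tailConst_nonneg {r : ℝ} (hr : 0 ≤ r) (d : ℕ) : 0 ≤ tailConst r d :=
  tsum_nonneg fun _ => by positivity

lemma sum_Ico_succ_pow_mul_geometric_le {r : ℝ} (hr0 : 0 < r) (hr1 : r < 1) {s d : ℕ} (hs : s ≤ d)
    (J N : ℕ) :
    ∑ l ∈ Ico J N, ((l : ℝ) + 1) ^ s * r ^ l ≤ tailConst r d * (((J : ℝ) + 1) ^ s * r ^ J) := by
  have hterm (k : ℕ) : (((J + k : ℕ) : ℝ) + 1) ^ s * r ^ (J + k) ≤
      ((k : ℝ) + 1) ^ d * r ^ k * (((J : ℝ) + 1) ^ s * r ^ J) := by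
    calc (((J + k : ℕ) : ℝ) + 1) ^ s * r ^ (J + k)
        ≤ (((k : ℝ) + 1) * (J + 1)) ^ s * r ^ (J + k) := by
          gcongr
          push_cast
          nlinarith [mul_nonneg (k.cast_nonneg (α := ℝ)) (J.cast_nonneg (α := ℝ))]
      _ = ((k : ℝ) + 1) ^ s * r ^ k * (((J : ℝ) + 1) ^ s * r ^ J) := by
          rw [mul_pow, pow_add]
          ring
      _ ≤ ((k : ℝ) + 1) ^ d * r ^ k * (((J : ℝ) + 1) ^ s * r ^ J) := by
          gcongr
          linarith [k.cast_nonneg (α := ℝ)]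
  rw [sum_Ico_eq_sum_range]
  refine (Finset.sum_le_sum fun k _ => hterm k).trans ?_
  rw [← sum_mul]
  gcongr
  exact (summable_succ_pow_mul_geometric hr0 hr1 d).sum_le_tsum _ fun _ _ => by positivity

lemma sum_fine_le (hs : 1 ≤ s) (hsι : s ≤ Fintype.card ι) (n : ι → ℕ) (J : ℕ) :
    ∑ p ∈ fine n s J, (((∑ k, p k : ℕ) : ℝ) + 1) * (decay : ℝ) ^ ∑ k, p k ≤
      2 ^ Fintype.card ι * (tailConst decay (Fintype.card ι) *
        (((J : ℝ) + 1) ^ s * (decay : ℝ) ^ J)) := by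
  refine (sum_level_le hs hsι (filter_subset _ _)
    (U := Ico J ((fine n s J).sup (∑ k, · k) + 1)) (fun p hp => ?_)
    (f := fun l => ((l : ℝ) + 1) * (decay : ℝ) ^ l) fun l => by positivity).trans ?_
  · exact mem_Ico.2 ⟨(not_le.1 (mem_filter.1 hp).2).le,
      Nat.lt_succ_of_le (le_sup (f := fun p : ι → ℕ => ∑ k, p k) hp)⟩
  · simp only [← mul_assoc, ← pow_succ, Nat.sub_add_cancel hs]
    rw [mul_assoc (_ * _), mul_assoc]
    gcongr
    exact sum_Ico_succ_pow_mul_geometric_le (by exact_mod_cast decay_pos)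
      (by exact_mod_cast decay_lt_one) hsι _ _

end LevelSums

section Balance

lemma decay_pow_le {z w : ℝ} {J : ℕ} (hw : 0 ≤ w) (hz : 0 ≤ z) (hwz : w ^ 2 * z ^ 3 = 1)
    (hJ : z < 2 ^ (J + 1)) : (decay : ℝ) ^ J ≤ 3 * w := by
  have hsq : ((decay : ℝ) ^ J) ^ 2 * (2 ^ J) ^ 3 = 1 := by
    rw [← pow_mul, ← pow_mul, mul_comm J, mul_comm J, pow_mul, pow_mul, ← mul_pow, ← NNReal.coe_pow,
      decay_sq]
    norm_num
  have hcube : z ^ 3 ≤ 8 * (2 ^ J) ^ 3 := by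
    calc z ^ 3 ≤ (2 ^ (J + 1)) ^ 3 := by gcongr
      _ = 8 * (2 ^ J) ^ 3 := by ring
  refine (pow_le_pow_iff_left₀ (by positivity) (by positivity) two_ne_zero).1 ?_
  refine le_of_mul_le_mul_right ?_ (by positivity : (0 : ℝ) < (2 ^ J) ^ 3)
  rw [hsq, ← hwz]
  calc w ^ 2 * z ^ 3 ≤ w ^ 2 * (8 * (2 ^ J) ^ 3) := by gcongr
    _ ≤ (3 * w) ^ 2 * (2 ^ J) ^ 3 := by
      rw [mul_pow]
      nlinarith [mul_nonneg (sq_nonneg w) (by positivity : (0 : ℝ) ≤ (2 ^ J) ^ 3)]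

lemma level_le_three_mul_log {x : ℝ} (hx : 1 ≤ x) (hL : 1 ≤ Real.log (2 + x)) {J : ℕ}
    (hJ : 2 ^ J ≤ (x * Real.log (2 + x)) ^ (2 / 5 : ℝ)) : (J : ℝ) + 1 ≤ 3 * Real.log (2 + x) := by
  set L := Real.log (2 + x)
  have hlog : (J : ℝ) * Real.log 2 ≤ 2 / 5 * (Real.log x + Real.log L) := by
    have h := Real.log_le_log (by positivity) hJ
    rwa [Real.log_pow, Real.log_rpow (by positivity),
      Real.log_mul (by positivity) (by positivity)] at h
  have hx' : Real.log x ≤ L := Real.log_le_log (by positivity) (by linarith)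
  have hL' : Real.log L ≤ L := Real.log_le_self (by positivity)
  nlinarith [Real.log_two_gt_d9, J.cast_nonneg (α := ℝ)]

lemma exists_level_le_of_one_le {d s : ℕ} (hs : 1 ≤ s) (hsd : s ≤ d) {x : ℝ} (hx : 1 ≤ x) :
    ∃ J : ℕ, 2 ^ J * ((J : ℝ) + 1) ^ (s - 1) + x * (((J : ℝ) + 1) ^ s * (decay : ℝ) ^ J) ≤
      4 * 3 ^ d * (x ^ (2 / 5 : ℝ) * Real.log (2 + x) ^ (s - 3 / 5 : ℝ)) := by
  have hL1 : 1 ≤ Real.log (2 + x) := by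
    rw [Real.le_log_iff_exp_le (by positivity)]
    linarith [Real.exp_one_lt_d9]
  -- at this size of the coarse span the two summands are of the same order
  obtain ⟨J, hJ, hJ'⟩ := exists_nat_pow_near
    (Real.one_le_rpow (one_le_mul_of_one_le_of_one_le hx hL1) (by norm_num : (0 : ℝ) ≤ 2 / 5))
    one_lt_two
  have hJL := level_le_three_mul_log hx hL1 hJ
  set L := Real.log (2 + x)
  have hx0 : 0 < x := by positivity
  have hL0 : 0 < L := by positivity
  have hdecay : (decay : ℝ) ^ J ≤ 3 * (x * L) ^ (-(3 / 5) : ℝ) := by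
    refine decay_pow_le (by positivity) (by positivity) ?_ hJ'
    rw [← Real.rpow_mul_natCast (by positivity), ← Real.rpow_mul_natCast (by positivity),
      ← Real.rpow_add (by positivity)]
    norm_num
  refine ⟨J, ?_⟩
  calc 2 ^ J * ((J : ℝ) + 1) ^ (s - 1) + x * (((J : ℝ) + 1) ^ s * (decay : ℝ) ^ J)
      ≤ (x * L) ^ (2 / 5 : ℝ) * (3 * L) ^ (s - 1) +
          x * ((3 * L) ^ s * (3 * (x * L) ^ (-(3 / 5) : ℝ))) := by gcongr
    _ = 3 ^ (s - 1) * (x ^ (2 / 5 : ℝ) * (L ^ (2 / 5 : ℝ) * L ^ (s - 1))) +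
          3 * 3 ^ s * (x ^ (1 : ℝ) * x ^ (-(3 / 5) : ℝ) * (L ^ s * L ^ (-(3 / 5) : ℝ))) := by
        rw [Real.mul_rpow hx0.le hL0.le, Real.mul_rpow hx0.le hL0.le, mul_pow, mul_pow,
          Real.rpow_one]
        ring
    _ = 3 ^ (s - 1) * (x ^ (2 / 5 : ℝ) * L ^ (s - 3 / 5 : ℝ)) +
          3 * 3 ^ s * (x ^ (2 / 5 : ℝ) * L ^ (s - 3 / 5 : ℝ)) := by
        rw [← Real.rpow_natCast L, ← Real.rpow_natCast L, ← Real.rpow_add hL0,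
          ← Real.rpow_add hL0, ← Real.rpow_add hx0, Nat.cast_sub hs]
        congr 4 <;> push_cast <;> ring
    _ ≤ 3 ^ d * (x ^ (2 / 5 : ℝ) * L ^ (s - 3 / 5 : ℝ)) +
          3 * 3 ^ d * (x ^ (2 / 5 : ℝ) * L ^ (s - 3 / 5 : ℝ)) := by
        gcongr
        · norm_num
        · lia
        · norm_num
    _ = 4 * 3 ^ d * (x ^ (2 / 5 : ℝ) * L ^ (s - 3 / 5 : ℝ)) := by ring

lemma exists_level_le {d s : ℕ} (hs : 1 ≤ s) (hsd : s ≤ d) {x : ℝ} (hx : 0 < x) :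
    ∃ J : ℕ, 2 ^ J * ((J : ℝ) + 1) ^ (s - 1) + x * (((J : ℝ) + 1) ^ s * (decay : ℝ) ^ J) ≤
      4 * 3 ^ d * (x ^ (2 / 5 : ℝ) * Real.log (2 + x) ^ (s - 3 / 5 : ℝ) + 1) := by
  obtain hx1 | hx1 := le_total x 1
  · refine ⟨0, ?_⟩
    have hL : 0 < Real.log (2 + x) := Real.log_pos (by linarith)
    have hmain : 0 ≤ x ^ (2 / 5 : ℝ) * Real.log (2 + x) ^ (s - 3 / 5 : ℝ) := by positivity
    have h3 : (1 : ℝ) ≤ 3 ^ d := one_le_pow₀ (by norm_num)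
    simp only [pow_zero, CharP.cast_eq_zero, zero_add, one_pow, mul_one]
    nlinarith
  · obtain ⟨J, hJ⟩ := exists_level_le_of_one_le hs hsd hx1
    exact ⟨J, hJ.trans (by gcongr; linarith)⟩

lemma rpow_scaling {σ V N : ℝ} (hσ : 0 < σ) (hV : 0 < V) (hN : 0 < N) :
    (σ ^ 2 * V ^ ((1 : ℝ) / 2) / N) ^ ((4 : ℝ) / 5) =
      σ ^ 2 / N * (V * N ^ ((1 : ℝ) / 2) / σ) ^ (2 / 5 : ℝ) := by
  apply Real.log_injOn_pos (Set.mem_Ioi.2 (by positivity)) (Set.mem_Ioi.2 (by positivity))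
  rw [Real.log_rpow (by positivity), Real.log_mul (by positivity) (by positivity),
    Real.log_rpow (by positivity), Real.log_div (by positivity) (by positivity),
    Real.log_div (by positivity) (by positivity), Real.log_div (by positivity) (by positivity),
    Real.log_mul (by positivity) (by positivity), Real.log_mul (by positivity) (by positivity),
    Real.log_rpow (by positivity), Real.log_rpow (by positivity), Real.log_pow]
  push_cast
  ring

end Balance

section Risk

lemma norm_sq_le_two_mul_inner {E : Type*} [NormedAddCommGroup E] [InnerProductSpace ℝ E]
    {η x : E} (h : ‖x - η‖ ≤ ‖x‖) : ‖η‖ ^ 2 ≤ 2 * ⟪η, x⟫_ℝ := by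
  have hsq := norm_sub_sq_real x η
  rw [real_inner_comm] at hsq
  linarith [pow_le_pow_left₀ (norm_nonneg _) h 2]

lemma norm_sq_toLp_sub_le {ι : Type*} [Fintype ι] {θ θ' ξ : ι → ℝ}
    (hfit : ∑ i, (θ i + ξ i - θ' i) ^ 2 ≤ ∑ i, ξ i ^ 2) :
    ‖(WithLp.toLp 2 (θ' - θ) : EuclideanSpace ℝ ι)‖ ^ 2 ≤
      2 * ⟪WithLp.toLp 2 (θ' - θ), WithLp.toLp 2 ξ⟫_ℝ := by
  refine norm_sq_le_two_mul_inner ?_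
  rw [← WithLp.toLp_sub, EuclideanSpace.norm_eq, EuclideanSpace.norm_eq]
  refine Real.sqrt_le_sqrt ?_
  simp only [Pi.sub_apply, Real.norm_eq_abs, sq_abs]
  convert hfit using 3
  ring

variable {d : ℕ} {n : Fin d → ℕ} {s : ℕ} {V : ℝ}

lemma exists_mem_coarseSpan_inner_sub_le {θ θ' : (∀ k, Fin (n k)) → ℝ} (hθ : θ ∈ CsSet d n s V)
    (hθ' : θ' ∈ CsSet d n s V) (J : ℕ) :
    ∃ u ∈ coarseSpan n s J, ∀ y, ⟪WithLp.toLp 2 (θ - θ') - u, y⟫_ℝ ≤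
      2 * V * ∑ p ∈ fine n s J, (maxAbsInner (dictionary n p) y : ℝ) := by
  set c := hingeCoef n (latExtend d n θ)
  set c' := hingeCoef n (latExtend d n θ')
  obtain ⟨u, hu, h⟩ := exists_mem_coarseSpan_inner_le (c := c - c') (fun j hj hs => by
    simp only [c, c', Pi.sub_apply, hingeCoef_eq_zero hθ hj hs, hingeCoef_eq_zero hθ' hj hs,
      sub_zero]) J
  refine ⟨u, hu, fun y => ?_⟩
  have hexpand : WithLp.toLp 2 (θ - θ') = ∑ j ∈ lattice n, (c - c') j • tensorHinge n j := by
    simp only [Pi.sub_apply, sub_smul, sum_sub_distrib, WithLp.toLp_sub, c, c',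
      sum_hingeCoef_smul_tensorHinge]
  have hcoef : ∑ j ∈ interiorLattice n, |(c - c') j| ≤ 2 * V :=
    calc ∑ j ∈ interiorLattice n, |(c - c') j|
        ≤ ∑ j ∈ interiorLattice n, (|c j| + |c' j|) :=
          sum_le_sum fun j _ => abs_sub (c j) (c' j)
      _ ≤ V + V := by
          rw [sum_add_distrib]
          exact add_le_add ((sum_abs_hingeCoef_le n _).trans hθ.1)
            ((sum_abs_hingeCoef_le n _).trans hθ'.1)
      _ = 2 * V := (two_mul V).symm
  rw [hexpand]
  exact (h y).trans (by gcongr)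

/-- The constant, depending only on the dimension, in the risk bound at a fixed truncation level. -/
noncomputable def riskConst (d : ℕ) : ℝ := 4 ^ d * (64 + 8 * (d + 4) * tailConst decay d)

lemma riskConst_pos (d : ℕ) : 0 < riskConst d := by
  have := tailConst_nonneg decay.coe_nonneg d
  unfold riskConst
  positivity

lemma finrank_coarseSpan_le_level (hs : 1 ≤ s) (hsd : s ≤ d) (J : ℕ) :
    (Module.finrank ℝ (coarseSpan n s J) : ℝ) ≤
      2 * 4 ^ d * (2 ^ J * ((J : ℝ) + 1) ^ (s - 1)) := by
  have hcard := Fintype.card_fin d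
  calc (Module.finrank ℝ (coarseSpan n s J) : ℝ)
      ≤ ∑ p ∈ coarse n s J, (2 : ℝ) ^ (∑ k, p k + d) := by
        simpa [hcard] using Nat.cast_le (α := ℝ).2 (finrank_coarseSpan_le n s J)
    _ = 2 ^ d * ∑ p ∈ coarse n s J, (2 : ℝ) ^ ∑ k, p k := by
        simp only [pow_add, ← sum_mul, mul_comm ((2 : ℝ) ^ d)]
    _ ≤ 2 ^ d * (2 ^ d * (2 * (2 ^ J * ((J : ℝ) + 1) ^ (s - 1)))) := by
        gcongr
        simpa [hcard] using sum_coarse_le hs (hsd.trans hcard.ge) n J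
    _ = 2 * 4 ^ d * (2 ^ J * ((J : ℝ) + 1) ^ (s - 1)) := by
        rw [show (4 : ℝ) = 2 * 2 by norm_num, mul_pow]
        ring

lemma sum_fine_width_le (hs : 1 ≤ s) (hsd : s ≤ d) (J : ℕ) :
    ∑ p ∈ fine n s J, (decay : ℝ) ^ (∑ k, p k) * ((∑ k, p k + d : ℕ) + 4) ≤
      (d + 4) * 2 ^ d * tailConst decay d * (((J : ℝ) + 1) ^ s * (decay : ℝ) ^ J) := by
  have hcard := Fintype.card_fin d
  have hterm (l : ℕ) : (decay : ℝ) ^ l * ((l + d : ℕ) + 4) ≤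
      (d + 4) * (((l : ℝ) + 1) * (decay : ℝ) ^ l) := by
    rw [mul_left_comm, ← mul_assoc, mul_comm]
    gcongr
    push_cast
    nlinarith [mul_nonneg (l.cast_nonneg (α := ℝ)) (d.cast_nonneg (α := ℝ))]
  calc ∑ p ∈ fine n s J, (decay : ℝ) ^ (∑ k, p k) * ((∑ k, p k + d : ℕ) + 4)
      ≤ (d + 4) * ∑ p ∈ fine n s J, (((∑ k, p k : ℕ) : ℝ) + 1) * (decay : ℝ) ^ ∑ k, p k := by
        rw [mul_sum]
        exact sum_le_sum fun p _ => hterm _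
    _ ≤ (d + 4) * (2 ^ d * (tailConst decay d * (((J : ℝ) + 1) ^ s * (decay : ℝ) ^ J))) := by
        gcongr
        simpa [hcard] using sum_fine_le hs (hsd.trans hcard.ge) n J
    _ = (d + 4) * 2 ^ d * tailConst decay d * (((J : ℝ) + 1) ^ s * (decay : ℝ) ^ J) := by ring

lemma level_cost_le (hs : 1 ≤ s) (hsd : s ≤ d) {σ : ℝ} (hσ : 0 < σ) (hV : 0 ≤ V) (J : ℕ) :
    32 * σ ^ 2 * Module.finrank ℝ (coarseSpan n s J) +
      4 * (2 * V) * (σ * (2 ^ d * (∏ k, (n k : ℝ)) ^ ((1 : ℝ) / 2)) *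
        ∑ p ∈ fine n s J, (decay : ℝ) ^ (∑ k, p k) * ((∑ k, p k + d : ℕ) + 4)) ≤
      riskConst d * σ ^ 2 * (2 ^ J * ((J : ℝ) + 1) ^ (s - 1) +
        V * (∏ k, (n k : ℝ)) ^ ((1 : ℝ) / 2) / σ * (((J : ℝ) + 1) ^ s * (decay : ℝ) ^ J)) := by
  have htail := tailConst_nonneg decay.coe_nonneg d
  have hfinrank := finrank_coarseSpan_le_level (n := n) hs hsd J
  have hwidth := sum_fine_width_le (n := n) hs hsd J
  have hcoarse : 4 ^ d * 64 ≤ riskConst d := by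
    unfold riskConst
    gcongr
    exact le_add_of_nonneg_right (by positivity)
  have hfine : 4 ^ d * (8 * (d + 4) * tailConst decay d) ≤ riskConst d := by
    unfold riskConst
    gcongr
    exact le_add_of_nonneg_left (by norm_num)
  set M := (∏ k, (n k : ℝ)) ^ ((1 : ℝ) / 2)
  set p := 2 ^ J * ((J : ℝ) + 1) ^ (s - 1)
  set q := ((J : ℝ) + 1) ^ s * (decay : ℝ) ^ J
  calc _ ≤ 32 * σ ^ 2 * (2 * 4 ^ d * p) + 4 * (2 * V) * (σ * (2 ^ d * M) *
          ((d + 4) * 2 ^ d * tailConst decay d * q)) := by gcongr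
    _ = 4 ^ d * 64 * σ ^ 2 * p +
        4 ^ d * (8 * (d + 4) * tailConst decay d) * σ ^ 2 * (V * M / σ * q) := by
        rw [show (4 : ℝ) ^ d = 2 ^ d * 2 ^ d by rw [← mul_pow]; norm_num]
        field_simp
        ring
    _ ≤ riskConst d * σ ^ 2 * p + riskConst d * σ ^ 2 * (V * M / σ * q) := by gcongr
    _ = riskConst d * σ ^ 2 * (p + V * M / σ * q) := (mul_add _ _ _).symm

variable {Ω : Type*} [MeasurableSpace Ω] {P : Measure Ω} [IsProbabilityMeasure P] {σ : ℝ≥0}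
  {ξ θhat : Ω → (∀ k, Fin (n k)) → ℝ} {θstar : (∀ k, Fin (n k)) → ℝ}

lemma lintegral_norm_sq_le_level (hs : 1 ≤ s) (hsd : s ≤ d) (hn : ∀ k, 0 < n k) (hσ : 0 < σ)
    (hV : 0 < V) (hξ : IsSubgaussianVector (fun ω => WithLp.toLp 2 (ξ ω)) σ P)
    (hstar : θstar ∈ CsSet d n s V) (hhat : ∀ ω, θhat ω ∈ CsSet d n s V)
    (hfit : ∀ ω, ∑ i, (θstar i + ξ ω i - θhat ω i) ^ 2 ≤ ∑ i, ξ ω i ^ 2) (J : ℕ) :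
    ∫⁻ ω, ENNReal.ofReal (∑ i, (θhat ω i - θstar i) ^ 2) ∂P ≤
      ENNReal.ofReal (riskConst d * σ ^ 2 * (2 ^ J * ((J : ℝ) + 1) ^ (s - 1) +
        V * (∏ k, (n k : ℝ)) ^ ((1 : ℝ) / 2) / σ * (((J : ℝ) + 1) ^ s * (decay : ℝ) ^ J))) := by
  set a : ℝ≥0 := σ * (2 ^ d * NNReal.sqrt (∏ k, (n k : ℝ≥0)))
  have ha : (a : ℝ) = σ * (2 ^ d * (∏ k, (n k : ℝ)) ^ ((1 : ℝ) / 2)) := by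
    rw [← Real.sqrt_eq_rpow]
    simp [a]
  have hn' : 0 < ∏ k, (n k : ℝ≥0) := prod_pos fun k _ => by exact_mod_cast hn k
  have hrisk := lintegral_norm_sq_le_of_basic_inequality (coarseSpan n s J) hσ hξ
    (T := fine n s J) (D := dictionary n) (b := fun p => a * decay ^ ∑ k, p k)
    (t := fun p => (∑ k, p k + d : ℕ)) (K := 2 * V) (by positivity)
    (fun p _ => by have := decay_pos; positivity)
    (fun p _ => by positivity) (fun p _ => by simpa using card_dictionary_le_exp n p)
    (fun p hp w hw => ?_) (fun ω => norm_sq_toLp_sub_le (hfit ω))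
    fun ω => exists_mem_coarseSpan_inner_sub_le (hhat ω) hstar J
  · simp only [EuclideanSpace.norm_sq_eq, Pi.sub_apply, Real.norm_eq_abs, sq_abs] at hrisk
    refine hrisk.trans (ENNReal.ofReal_le_ofReal ?_)
    simp only [NNReal.coe_mul, NNReal.coe_pow, mul_assoc (a : ℝ), ← mul_sum]
    exact ha ▸ level_cost_le hs hsd (NNReal.coe_pos.2 hσ) hV.le J
  · simpa [a, mul_assoc] using
      mul_le_mul_right (nnnorm_le_of_mem_dictionary hn (depth_of_mem_fine hp) hw) σ

end Risk

section Main

lemma log_rpow_le_two_pow_mul {d s : ℕ} (hsd : s ≤ d) {L : ℝ} (hL : 1 / 2 ≤ L) :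
    L ^ (s - 3 / 5 : ℝ) ≤ 2 ^ d * L ^ (3 * (2 * (s : ℝ) - 1) / 5) := by
  have hL0 : 0 < L := by linarith
  have hexp : (0 : ℝ) ≤ s / 5 := by positivity
  have hd : (s / 5 : ℝ) ≤ d := by
    have : (s : ℝ) ≤ d := Nat.cast_le.2 hsd
    linarith [s.cast_nonneg (α := ℝ)]
  calc L ^ (s - 3 / 5 : ℝ) ≤ (2 * L) ^ (s / 5 : ℝ) * L ^ (s - 3 / 5 : ℝ) :=
        le_mul_of_one_le_left (by positivity) (Real.one_le_rpow (by linarith) hexp)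
    _ = 2 ^ (s / 5 : ℝ) * L ^ (3 * (2 * (s : ℝ) - 1) / 5) := by
        rw [Real.mul_rpow zero_le_two hL0.le, mul_assoc, ← Real.rpow_add hL0]
        ring_nf
    _ ≤ 2 ^ d * L ^ (3 * (2 * (s : ℝ) - 1) / 5) := by
        rw [← Real.rpow_natCast 2 d]
        gcongr
        norm_num

lemma rate_le {d s : ℕ} (hsd : s ≤ d) {C a b x N : ℝ} (hC : 0 ≤ C) (ha : 0 ≤ a) (hb : 0 ≤ b)
    (hx : 0 ≤ x) (hN : 2 ≤ N) :
    C * a * Real.log (2 + x) ^ (s - 3 / 5 : ℝ) + C * b ≤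
      4 * 2 ^ d * C * a * Real.log (2 + x) ^ (3 * (2 * (s : ℝ) - 1) / 5) +
        4 * 2 ^ d * C * b * Real.log (2 + x) ^ (3 * (2 * (s : ℝ) - 1) / 4) +
        4 * 2 ^ d * C * b * Real.log N ^ 2 := by
  have hlog {y : ℝ} (hy : 2 ≤ y) : 1 / 2 ≤ Real.log y := by
    linarith [Real.log_le_log two_pos hy, Real.log_two_gt_d9]
  have hL : 1 / 2 ≤ Real.log (2 + x) := hlog (by linarith)
  set L := Real.log (2 + x)
  have hlogN : 1 ≤ 4 * 2 ^ d * Real.log N ^ 2 := by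
    have h2d : (1 : ℝ) ≤ 2 ^ d := one_le_pow₀ one_le_two
    nlinarith [hlog hN]
  have hmid : 0 ≤ 4 * 2 ^ d * C * b * L ^ (3 * (2 * (s : ℝ) - 1) / 4) :=
    mul_nonneg (by positivity) (Real.rpow_nonneg (by linarith) _)
  have hmain : L ^ (s - 3 / 5 : ℝ) ≤ 4 * (2 ^ d * L ^ (3 * (2 * (s : ℝ) - 1) / 5)) :=
    (log_rpow_le_two_pow_mul hsd hL).trans <| le_mul_of_one_le_left
      (mul_nonneg (by positivity) (Real.rpow_nonneg (by linarith) _)) (by norm_num)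
  linarith [mul_le_mul_of_nonneg_left hmain (mul_nonneg hC ha),
    mul_le_mul_of_nonneg_left hlogN (mul_nonneg hC hb)]

theorem statement3_general (d : ℕ) :
    ∃ C : ℝ, 0 < C ∧ ∀ s : ℕ, 1 ≤ s → s ≤ d → ∀ n : Fin d → ℕ, (∀ k, 0 < n k) →
      ∀ (σ : ℝ≥0) (V : ℝ), 0 < σ → 0 < V →
      ∀ {Ω : Type*} [MeasurableSpace Ω] (P : Measure Ω) [IsProbabilityMeasure P]
        (ξ θhat : Ω → (∀ k, Fin (n k)) → ℝ) (θstar : (∀ k, Fin (n k)) → ℝ),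
        IsSubgaussianVector (fun ω => WithLp.toLp 2 (ξ ω)) σ P → θstar ∈ CsSet d n s V →
        (∀ ω, θhat ω ∈ CsSet d n s V ∧
          ∑ i, (θstar i + ξ ω i - θhat ω i) ^ 2 ≤ ∑ i, ξ ω i ^ 2) →
      ∫⁻ ω, ENNReal.ofReal ((∏ k, (n k : ℝ))⁻¹ * ∑ i, (θhat ω i - θstar i) ^ 2) ∂P ≤
        ENNReal.ofReal
          (C * (σ ^ 2 * V ^ ((1 : ℝ) / 2) / ∏ k, (n k : ℝ)) ^ ((4 : ℝ) / 5) *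
              Real.log (2 + V * (∏ k, (n k : ℝ)) ^ ((1 : ℝ) / 2) / σ) ^ (s - 3 / 5 : ℝ) +
            C * (σ ^ 2 / ∏ k, (n k : ℝ))) := by
  refine ⟨riskConst d * (4 * 3 ^ d), mul_pos (riskConst_pos d) (by positivity), ?_⟩
  intro s hs hsd n hn σ V hσ hV Ω _ P _ ξ θhat θstar hξ hstar hhat
  have hN : 0 < ∏ k, (n k : ℝ) := prod_pos fun k _ => Nat.cast_pos.2 (hn k)
  have hx : 0 < V * (∏ k, (n k : ℝ)) ^ ((1 : ℝ) / 2) / σ := by positivity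
  obtain ⟨J, hJ⟩ := exists_level_le hs hsd hx
  have hrisk := lintegral_norm_sq_le_level hs hsd hn hσ hV hξ hstar (fun ω => (hhat ω).1)
    (fun ω => (hhat ω).2) J
  rw [rpow_scaling (NNReal.coe_pos.2 hσ) hV hN]
  set x := V * (∏ k, (n k : ℝ)) ^ ((1 : ℝ) / 2) / σ
  set N := ∏ k, (n k : ℝ)
  have hC := riskConst_pos d
  simp only [ENNReal.ofReal_mul (inv_nonneg.2 hN.le)]
  rw [lintegral_const_mul' _ _ ENNReal.ofReal_ne_top]
  refine (mul_le_mul_right hrisk _).trans ?_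
  rw [← ENNReal.ofReal_mul (by positivity)]
  refine ENNReal.ofReal_le_ofReal ?_
  calc _ ≤ N⁻¹ * (riskConst d * σ ^ 2 *
        (4 * 3 ^ d * (x ^ (2 / 5 : ℝ) * Real.log (2 + x) ^ (s - 3 / 5 : ℝ) + 1))) := by gcongr
    _ = _ := by ring

lemma gaussPi_coe (d : ℕ) (n : Fin d → ℕ) (σ : ℝ≥0) :
    gaussPi d n σ = Measure.pi fun _ => gaussianReal 0 (σ ^ 2) := rfl

lemma two_le_prod {d : ℕ} (hd : 1 ≤ d) {n : Fin d → ℕ} (hn : ∀ k, 2 ≤ n k) :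
    2 ≤ ∏ k, (n k : ℝ) := by
  have h : 2 ≤ ∏ k, n k := (hn ⟨0, hd⟩).trans <|
    single_le_prod' (fun k _ => one_le_two.trans (hn k)) (mem_univ (⟨0, hd⟩ : Fin d))
  exact_mod_cast h

end Main

/-- Risk bound for the projection estimator onto `C^s(V)` on the
equally spaced lattice design, for `θ* ∈ C^s(V)`. -/
theorem statement3 (d : ℕ) (hd : 1 ≤ d) :
    ∃ C : ℝ, 0 < C ∧
      ∀ s : ℕ, 1 ≤ s → s ≤ d →
      ∀ n : Fin d → ℕ, (∀ k, 2 ≤ n k) →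
      ∀ σ V : ℝ, 0 < σ → 0 < V →
      ∀ θstar : (∀ k : Fin d, Fin (n k)) → ℝ, θstar ∈ CsSet d n s V →
      ∀ θhat : ((∀ k : Fin d, Fin (n k)) → ℝ) → (∀ k : Fin d, Fin (n k)) → ℝ,
        (∀ y, θhat y ∈ CsSet d n s V ∧
          ∀ θ ∈ CsSet d n s V,
            Real.sqrt (∑ i, (y i - θhat y i) ^ 2) ≤
              Real.sqrt (∑ i, (y i - θ i) ^ 2)) →
      (∫⁻ ξ, ENNReal.ofReal ((∏ k, (n k : ℝ))⁻¹ *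
            ∑ i, (θhat (θstar + ξ) i - θstar i) ^ 2) ∂(gaussPi d n σ)) ≤
        ENNReal.ofReal
          (C * (σ ^ 2 * V ^ ((1 : ℝ) / 2) / ∏ k, (n k : ℝ)) ^ ((4 : ℝ) / 5) *
              Real.log (2 + V * (∏ k, (n k : ℝ)) ^ ((1 : ℝ) / 2) / σ) ^
                (3 * (2 * (s : ℝ) - 1) / 5) +
            C * (σ ^ 2 / ∏ k, (n k : ℝ)) *
              Real.log (2 + V * (∏ k, (n k : ℝ)) ^ ((1 : ℝ) / 2) / σ) ^
                (3 * (2 * (s : ℝ) - 1) / 4) +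
            C * (σ ^ 2 / ∏ k, (n k : ℝ)) * Real.log (∏ k, (n k : ℝ)) ^ 2) := by
  obtain ⟨C, hC, hrisk⟩ := statement3_general d
  refine ⟨4 * 2 ^ d * C, by positivity, fun s hs hsd n hn σ V hσ hV θstar hstar θhat hhat => ?_⟩
  have hfit (ξ : (∀ k, Fin (n k)) → ℝ) :
      ∑ i, (θstar i + ξ i - θhat (θstar + ξ) i) ^ 2 ≤ ∑ i, ξ i ^ 2 := by
    simpa using (Real.sqrt_le_sqrt_iff (by positivity)).1 ((hhat (θstar + ξ)).2 θstar hstar)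
  lift σ to ℝ≥0 using hσ.le
  rw [gaussPi_coe]
  refine (hrisk s hs hsd n (fun k => two_pos.trans_le (hn k)) σ V (NNReal.coe_pos.1 hσ) hV _ id
    (fun ξ => θhat (θstar + ξ)) θstar (isSubgaussianVector_toLp_pi_gaussianReal σ) hstar
    fun ξ => ⟨(hhat _).1, hfit ξ⟩).trans (ENNReal.ofReal_le_ofReal ?_)
  exact rate_le hsd hC.le (by positivity) (by positivity) (by positivity) (two_le_prod hd hn)
end

section
/- For every integer d ≥ 1 there exists a constant C_d > 0 depending only on d such that for all integers n₁,…,n_d ≥ 2 and all reals V > 0, t > 0, ε > 0, the set S(V,t) = {θ : I₀ → ℝ : V₂(θ) ≤ V and ‖θ‖₂ ≤ t} satisfies log N(ε, S(V,t)) ≤ log(2 + 2t·n^{1/2}/ε) + (2^d − 1)·log(2 + C_d·(t+V)·n^{1/2}/ε) + C_d + C_d·(V·n^{1/2}/ε)^{1/2} + C_d·(2^d + 1 + 2^d·V·n^{1/2}/ε)^{1/2}·(log(2^d + 1 + 2^d·V·n^{1/2}/ε))^{3(2d−1)/4}, where the net is with respect to the Euclidean norm on ℝ^{I₀}. -/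
open Finset MeasureTheory

/-- Euclidean distance on `ℝ^ι`. -/
noncomputable def eDist {ι : Type*} [Fintype ι] (θ η : ι → ℝ) : ℝ :=
  Real.sqrt (∑ i, (θ i - η i) ^ 2)

/-- `T` is an `ε`-net of `A` with respect to the distance function `dst`. -/
def IsNet {α : Type*} (dst : α → α → ℝ) (ε : ℝ) (A : Set α) (T : Finset α) : Prop :=
  ∀ a ∈ A, ∃ t ∈ T, dst a t ≤ ε

/-!
A vector `θ` is recovered from its mixed differences by a discrete Taylor expansion: `θ` is a
combination of tensor products of the hinge functions `1` and `(i - q)₊`, and `V₂ θ` is the sum of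
the absolute values of the coefficients of all the tensors that are not affine in each variable,
once the hinges are rescaled to `[0, 1]`. Hence `θ` is the sum of a bounded element of a space of
dimension `2 ^ d`, whose entropy is found by comparing volumes, and of an element of `V` times the
absolutely convex hull of the hinge tensors.

Each hinge is a combination of Faber-Schauder hats with coefficients in `[-1, 1]` and one hat per
dyadic level. So the hull is contained in the sum, over multi-levels `l`, of the absolutely convex
hulls of `2 ^ (s + d)` vectors of norm at most `4 ^ d √(n / 8 ^ s)`, where `s = ∑ k, l k`.
Maurey's empirical method bounds the entropy of every such hull; distributing the precision so that
both error and entropy decay geometrically in the distance from `s` to a threshold level `s₀` makes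
the sums over `l` of order `(s₀ + 1) ^ (d - 1)`, and `s₀` is then chosen in terms of `ε`.
-/

namespace MixedVariation

open scoped Pointwise

section Entropy

/-- The metric entropy bound `log N(ε, A) ≤ L`. -/
def EntropyLE {E : Type*} [PseudoMetricSpace E] (A : Set E) (ε L : ℝ) : Prop :=
  ∃ T : Finset E, IsNet dist ε A T ∧ Real.log T.card ≤ L

lemma log_natCast_le_log_natCast {a b : ℕ} (h : a ≤ b) : Real.log a ≤ Real.log b := by
  rcases Nat.eq_zero_or_pos a with rfl | ha
  · simpa using Real.log_natCast_nonneg b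
  · exact Real.log_le_log (by exact_mod_cast ha) (by exact_mod_cast h)

lemma log_natCast_mul_le (a b : ℕ) : Real.log ((a * b : ℕ) : ℝ) ≤ Real.log a + Real.log b := by
  rcases Nat.eq_zero_or_pos a with rfl | ha
  · simpa using Real.log_natCast_nonneg b
  rcases Nat.eq_zero_or_pos b with rfl | hb
  · simpa using Real.log_natCast_nonneg a
  · rw [Nat.cast_mul, Real.log_mul (by positivity) (by positivity)]

namespace EntropyLE

lemma mono {E : Type*} [PseudoMetricSpace E] {A B : Set E} {ε L ε' L' : ℝ}
    (h : EntropyLE A ε L) (hB : B ⊆ A) (hε : ε ≤ ε') (hL : L ≤ L') : EntropyLE B ε' L' := by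
  obtain ⟨T, hT, hcard⟩ := h
  refine ⟨T, fun a ha => ?_, hcard.trans hL⟩
  obtain ⟨t, ht, hat⟩ := hT a (hB ha)
  exact ⟨t, ht, hat.trans hε⟩

lemma image {E F : Type*} [PseudoMetricSpace E] [PseudoMetricSpace F] {A : Set E} {ε L c : ℝ}
    (h : EntropyLE A ε L) (hc : 0 ≤ c) {f : E → F} (hf : ∀ x y, dist (f x) (f y) ≤ c * dist x y) :
    EntropyLE (f '' A) (c * ε) L := by
  classical
  obtain ⟨T, hT, hcard⟩ := h
  refine ⟨T.image f, ?_, (log_natCast_le_log_natCast card_image_le).trans hcard⟩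
  rintro _ ⟨a, ha, rfl⟩
  obtain ⟨t, ht, hat⟩ := hT a ha
  exact ⟨f t, mem_image_of_mem f ht, (hf a t).trans (by gcongr)⟩

variable {E : Type*} [SeminormedAddCommGroup E] {A B : Set E} {ε ε' L L' : ℝ}

lemma of_norm_le (h : ∀ a ∈ A, ‖a‖ ≤ ε) : EntropyLE A ε 0 :=
  ⟨{0}, fun a ha => ⟨0, mem_singleton_self 0, by simpa using h a ha⟩, by simp⟩

lemma smul {𝕜 : Type*} [NormedField 𝕜] [NormedSpace 𝕜 E] (h : EntropyLE A ε L) (c : 𝕜) :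
    EntropyLE (c • A) (‖c‖ * ε) L :=
  h.image (norm_nonneg c) fun x y => (dist_smul₀ c x y).le

lemma add (h : EntropyLE A ε L) (h' : EntropyLE B ε' L') : EntropyLE (A + B) (ε + ε') (L + L') := by
  classical
  obtain ⟨T, hT, hcard⟩ := h
  obtain ⟨T', hT', hcard'⟩ := h'
  refine ⟨T + T', ?_, ?_⟩
  · rintro _ ⟨a, ha, b, hb, rfl⟩
    obtain ⟨t, ht, hat⟩ := hT a ha
    obtain ⟨t', ht', hbt'⟩ := hT' b hb
    exact ⟨t + t', add_mem_add ht ht', (dist_add_add_le a b t t').trans (add_le_add hat hbt')⟩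
  · calc Real.log (T + T').card ≤ Real.log ((T.card * T'.card : ℕ) : ℝ) :=
          log_natCast_le_log_natCast card_add_le
      _ ≤ L + L' := (log_natCast_mul_le _ _).trans (add_le_add hcard hcard')

lemma sum {ι : Type*} {F : Finset ι} {A : ι → Set E} {ε L : ι → ℝ}
    (h : ∀ l ∈ F, EntropyLE (A l) (ε l) (L l)) :
    EntropyLE (∑ l ∈ F, A l) (∑ l ∈ F, ε l) (∑ l ∈ F, L l) := by
  classical
  induction F using Finset.induction_on with
  | empty => simpa using of_norm_le (A := (0 : Set E)) (ε := 0) (by simp)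
  | insert a s ha ih =>
    simp only [sum_insert ha]
    exact (h a (mem_insert_self a s)).add (ih fun l hl => h l (mem_insert_of_mem hl))

end EntropyLE

end Entropy

section Norm

variable {F : Type*} [SeminormedAddCommGroup F] [NormedSpace ℝ F]

lemma norm_le_of_mem_absConvexHull {P : Set F} {R : ℝ} (hP : ∀ y ∈ P, ‖y‖ ≤ R) {x : F}
    (hx : x ∈ absConvexHull ℝ P) : ‖x‖ ≤ R := by
  have hsub : absConvexHull ℝ P ⊆ Metric.closedBall 0 R :=
    absConvexHull_min (fun y hy => by simpa using hP y hy)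
      ⟨balanced_closedBall_zero, convex_closedBall 0 R⟩
  simpa using hsub hx

lemma norm_le_of_mem_convexHull {P : Set F} {R : ℝ} (hP : ∀ y ∈ P, ‖y‖ ≤ R) {x : F}
    (hx : x ∈ convexHull ℝ P) : ‖x‖ ≤ R :=
  norm_le_of_mem_absConvexHull hP
    (convexHull_min subset_absConvexHull convex_absConvexHull hx)

end Norm

section Maurey

variable {E : Type*} [NormedAddCommGroup E] [InnerProductSpace ℝ E]

lemma exists_inner_le_of_mem_convexHull {P : Set E} {x : E} (hx : x ∈ convexHull ℝ P) (e : E) :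
    ∃ y ∈ P, inner ℝ e y ≤ inner ℝ e x :=
  ConcaveOn.exists_le_of_mem_convexHull ((innerₛₗ ℝ e).concaveOn convex_univ)
    (Set.subset_univ P) hx

lemma exists_sym_norm_sum_sub_smul_sq_le {P : Finset E} {R : ℝ} (hP : ∀ y ∈ P, ‖y‖ ≤ R) {x : E}
    (hx : x ∈ convexHull ℝ (P : Set E)) (k : ℕ) :
    ∃ s : Sym P k,
      ‖((s : Multiset P).map Subtype.val).sum - (k : ℝ) • x‖ ^ 2 ≤ k * (2 * R) ^ 2 := by
  induction k with
  | zero => exact ⟨Sym.nil, by simp⟩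
  | succ k ih =>
    obtain ⟨s, hs⟩ := ih
    set e := ((s : Multiset P).map Subtype.val).sum - (k : ℝ) • x with he
    obtain ⟨y, hy, hey⟩ := exists_inner_le_of_mem_convexHull hx e
    refine ⟨⟨y, hy⟩ ::ₛ s, ?_⟩
    have herror : (((⟨y, hy⟩ ::ₛ s : Sym P (k + 1)) : Multiset P).map Subtype.val).sum -
        ((k + 1 : ℕ) : ℝ) • x = e + (y - x) := by
      rw [Sym.coe_cons, Multiset.map_cons, Multiset.sum_cons, he, Nat.cast_succ, add_smul, one_smul]
      abel
    -- The new vertex makes an obtuse angle with the current error, so squared errors add up.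
    have hinner : inner ℝ e (y - x) ≤ 0 := by rw [inner_sub_right]; linarith
    have hyx : ‖y - x‖ ≤ 2 * R := by
      linarith [norm_sub_le y x, hP y hy, norm_le_of_mem_convexHull hP hx]
    have hyx_sq : ‖y - x‖ ^ 2 ≤ (2 * R) ^ 2 := by gcongr
    rw [herror, norm_add_sq_real]
    push_cast
    linarith

lemma entropyLE_convexHull (P : Finset E) {R δ : ℝ} (hP : ∀ y ∈ P, ‖y‖ ≤ R) {k : ℕ}
    (hk : 0 < k) (hδ : 0 ≤ δ) (hRδ : (2 * R) ^ 2 ≤ k * δ ^ 2) :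
    EntropyLE (convexHull ℝ (P : Set E)) δ (Real.log ((P.card + k).choose k)) := by
  classical
  have hk' : (0 : ℝ) < k := by exact_mod_cast hk
  refine ⟨(univ : Finset (Sym P k)).image
    fun s : Sym P k => (k : ℝ)⁻¹ • ((s : Multiset P).map Subtype.val).sum, fun x hx => ?_, ?_⟩
  · obtain ⟨s, hs⟩ := exists_sym_norm_sum_sub_smul_sq_le hP hx k
    refine ⟨_, mem_image_of_mem _ (mem_univ s), ?_⟩
    set y := ((s : Multiset P).map Subtype.val).sum
    have hscale : (k : ℝ)⁻¹ • y - x = (k : ℝ)⁻¹ • (y - (k : ℝ) • x) := by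
      rw [smul_sub, inv_smul_smul₀ hk'.ne']
    rw [dist_comm, dist_eq_norm, hscale, norm_smul, norm_inv, Real.norm_natCast,
      inv_mul_le_iff₀ hk']
    refine (sq_le_sq₀ (norm_nonneg _) (by positivity)).1 ?_
    calc _ ≤ k * (2 * R) ^ 2 := hs
      _ ≤ k * (k * δ ^ 2) := by gcongr
      _ = (k * δ) ^ 2 := by ring
  · refine log_natCast_le_log_natCast (card_image_le.trans ?_)
    rw [card_univ, Sym.card_sym_eq_choose, Fintype.card_coe]
    exact Nat.choose_le_choose k (Nat.sub_le _ _)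

lemma log_choose_add_le (M : ℕ) {k : ℕ} (hk : 0 < k) :
    Real.log ((M + k).choose k) ≤ k * (1 + Real.log (1 + M / k)) := by
  have hk' : (0 : ℝ) < k := by exact_mod_cast hk
  have hchoose : ((M + k).choose k : ℝ) ≤ (Real.exp 1 * (1 + M / k)) ^ k := by
    calc ((M + k).choose k : ℝ) ≤ ((M + k : ℕ) : ℝ) ^ k / (k.factorial : ℝ) :=
          Nat.choose_le_pow_div k (M + k)
      _ = (k : ℝ) ^ k / (k.factorial : ℝ) * (1 + M / k) ^ k := by
          rw [div_mul_eq_mul_div, ← mul_pow]; congr 2; push_cast; field_simp; ring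
      _ ≤ Real.exp k * (1 + M / k) ^ k := by
          gcongr; exact Real.pow_div_factorial_le_exp (k : ℝ) hk'.le k
      _ = (Real.exp 1 * (1 + M / k)) ^ k := by rw [mul_pow, ← Real.exp_nat_mul, mul_one]
  have hpos : (0 : ℝ) < ((M + k).choose k : ℝ) := by
    exact_mod_cast Nat.choose_pos (Nat.le_add_left k M)
  calc Real.log ((M + k).choose k) ≤ Real.log ((Real.exp 1 * (1 + M / k)) ^ k) :=
        Real.log_le_log hpos hchoose
    _ = k * (1 + Real.log (1 + M / k)) := by
        rw [Real.log_pow, Real.log_mul (by positivity) (by positivity), Real.log_exp]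

lemma entropyLE_absConvexHull_range {ι : Type*} [Fintype ι] {v : ι → E} {R δ : ℝ}
    (hv : ∀ i, ‖v i‖ ≤ R) {k : ℕ} (hk : 0 < k) (hδ : 0 ≤ δ) (hRδ : (2 * R) ^ 2 ≤ k * δ ^ 2) :
    EntropyLE (absConvexHull ℝ (Set.range v)) δ
      (Real.log ((2 * Fintype.card ι + k).choose k)) := by
  classical
  set P : Finset E := univ.image v ∪ univ.image (-v) with hPdef
  have hP : ∀ y ∈ P, ‖y‖ ≤ R := by
    intro y hy
    simp only [hPdef, mem_union, mem_image, mem_univ, true_and, Pi.neg_apply] at hy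
    rcases hy with ⟨i, rfl⟩ | ⟨i, rfl⟩
    · exact hv i
    · simpa using hv i
  have hhull : convexHull ℝ (P : Set E) = absConvexHull ℝ (Set.range v) := by
    rw [← convexHull_union_neg_eq_absConvexHull, hPdef]
    congr 1
    ext y
    simp [neg_eq_iff_eq_neg]
  have hcard : P.card ≤ 2 * Fintype.card ι := by
    refine (card_union_le _ _).trans ?_
    rw [two_mul, Fintype.card]
    exact add_le_add card_image_le card_image_le
  rw [← hhull]
  exact (entropyLE_convexHull P hP hk hδ hRδ).mono subset_rfl le_rfl
    (log_natCast_le_log_natCast (Nat.choose_le_choose k (by omega)))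

end Maurey

section Level

lemma log_one_add_le_of_le_two_pow {a : ℝ} {p : ℕ} (ha : 0 ≤ a) (h : a ≤ 2 ^ p) :
    Real.log (1 + a) ≤ p + 1 := by
  have hone : (1 : ℝ) ≤ 2 ^ p := one_le_pow₀ one_le_two
  have hle : 1 + a ≤ 2 ^ (p + 1) := by rw [pow_succ]; linarith
  calc Real.log (1 + a) ≤ Real.log (2 ^ (p + 1)) := Real.log_le_log (by positivity) hle
    _ = (p + 1 : ℕ) * Real.log 2 := Real.log_pow _ _
    _ ≤ (p + 1 : ℕ) * 1 := by gcongr; linarith [Real.log_two_lt_d9]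
    _ = p + 1 := by push_cast; ring

variable {E ι : Type*} [NormedAddCommGroup E] [InnerProductSpace ℝ E]
  {v : ι → E} {A : ℝ} {d s s₀ x y k : ℕ}

lemma entropyLE_level_of_le [Fintype ι] (hA : 0 ≤ A) (hcard : Fintype.card ι ≤ 2 ^ (s + d))
    (hv : ∀ i, ‖v i‖ ≤ A / √8 ^ s) (hk : 0 < k) (hsk : 16 ^ s₀ * 4 ^ x ≤ k * 8 ^ s) :
    EntropyLE (absConvexHull ℝ (Set.range v)) (2 * A / (4 ^ s₀ * 2 ^ x))
      (Real.log ((2 ^ (s + d + 1) + k).choose k)) := by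
  have hpow : (2 * (A / √8 ^ s)) ^ 2 ≤ k * (2 * A / (4 ^ s₀ * 2 ^ x)) ^ 2 := by
    have hsk' : (16 : ℝ) ^ s₀ * 4 ^ x ≤ k * 8 ^ s := by exact_mod_cast hsk
    have h8 : (√8 ^ s) ^ 2 = (8 : ℝ) ^ s := by rw [pow_right_comm, Real.sq_sqrt (by norm_num)]
    have h16 : ((4 : ℝ) ^ s₀ * 2 ^ x) ^ 2 = 16 ^ s₀ * 4 ^ x := by
      rw [mul_pow, pow_right_comm, pow_right_comm 2]; norm_num
    calc (2 * (A / √8 ^ s)) ^ 2 = (2 * A) ^ 2 / 8 ^ s := by rw [← mul_div_assoc, div_pow, h8]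
      _ ≤ k * (2 * A) ^ 2 / (16 ^ s₀ * 4 ^ x) := by
          rw [div_le_div_iff₀ (by positivity) (by positivity)]
          nlinarith [mul_le_mul_of_nonneg_left hsk' (sq_nonneg (2 * A))]
      _ = k * (2 * A / (4 ^ s₀ * 2 ^ x)) ^ 2 := by rw [div_pow, h16, mul_div_assoc]
  refine (entropyLE_absConvexHull_range hv hk (by positivity) hpow).mono subset_rfl le_rfl
    (log_natCast_le_log_natCast (Nat.choose_le_choose k ?_))
  rw [pow_succ]
  omega

lemma entropyLE_level_coarse [Fintype ι] (hA : 0 ≤ A) (hcard : Fintype.card ι ≤ 2 ^ (s + d))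
    (hv : ∀ i, ‖v i‖ ≤ A / √8 ^ s) :
    EntropyLE (absConvexHull ℝ (Set.range v)) (2 * A / (4 ^ (s + x) * 2 ^ x))
      (12 * 2 ^ d * (d + 3) * 2 ^ (s + x) * ((x + 1) / 2 ^ x)) := by
  have hsk : 16 ^ (s + x) * 4 ^ x ≤ 2 ^ (s + 6 * x) * 8 ^ s := by
    rw [show 16 = 2 ^ 4 from rfl, show 4 = 2 ^ 2 from rfl, show 8 = 2 ^ 3 from rfl]
    simp only [← pow_mul, ← pow_add]
    exact Nat.pow_le_pow_right two_pos (by omega)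
  refine (entropyLE_level_of_le hA hcard hv (by positivity) hsk).mono subset_rfl le_rfl ?_
  have hlog : Real.log (1 + (2 ^ (s + 6 * x) : ℕ) / (2 ^ (s + d + 1) : ℕ)) ≤ (6 * x : ℕ) + 1 := by
    refine log_one_add_le_of_le_two_pow (by positivity) ?_
    push_cast
    rw [div_le_iff₀ (by positivity), ← pow_add]
    exact pow_le_pow_right₀ one_le_two (by omega)
  -- Here `k` exceeds the number of vertices, so the complementary index gives the better bound.
  rw [← Nat.choose_symm_add, Nat.add_comm]
  calc _ ≤ ((2 ^ (s + d + 1) : ℕ) : ℝ) *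
          (1 + Real.log (1 + (2 ^ (s + 6 * x) : ℕ) / (2 ^ (s + d + 1) : ℕ))) :=
        log_choose_add_le _ (by positivity)
    _ ≤ ((2 ^ (s + d + 1) : ℕ) : ℝ) * (1 + ((6 * x : ℕ) + 1)) := by gcongr
    _ = 2 * 2 ^ d * 2 ^ s * (6 * x + 2) := by push_cast; ring
    _ ≤ 2 * 2 ^ d * 2 ^ s * (6 * (d + 3) * (x + 1)) := by
        gcongr
        nlinarith [mul_nonneg d.cast_nonneg (x.cast_nonneg : (0 : ℝ) ≤ x),
          (d.cast_nonneg : (0 : ℝ) ≤ d)]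
    _ = 12 * 2 ^ d * (d + 3) * 2 ^ (s + x) * ((x + 1) / 2 ^ x) := by
        rw [pow_add 2 s x]; field_simp; ring

lemma entropyLE_level_fine [Fintype ι] (hA : 0 ≤ A) (hcard : Fintype.card ι ≤ 2 ^ (y + 2 * x + d))
    (hv : ∀ i, ‖v i‖ ≤ A / √8 ^ (y + 2 * x)) :
    EntropyLE (absConvexHull ℝ (Set.range v)) (2 * A / (4 ^ (y + x) * 2 ^ x))
      (12 * 2 ^ d * (d + 3) * 2 ^ (y + x) * ((x + 1) / 2 ^ x)) := by
  have hsk : 16 ^ (y + x) * 4 ^ x ≤ 2 ^ y * 8 ^ (y + 2 * x) := by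
    rw [show 16 = 2 ^ 4 from rfl, show 4 = 2 ^ 2 from rfl, show 8 = 2 ^ 3 from rfl]
    simp only [← pow_mul, ← pow_add]
    exact Nat.pow_le_pow_right two_pos (by omega)
  refine (entropyLE_level_of_le hA hcard hv (by positivity) hsk).mono subset_rfl le_rfl ?_
  have hlog : Real.log (1 + (2 ^ (y + 2 * x + d + 1) : ℕ) / (2 ^ y : ℕ)) ≤
      (2 * x + d + 1 : ℕ) + 1 := by
    refine log_one_add_le_of_le_two_pow (by positivity) ?_
    push_cast
    rw [div_le_iff₀ (by positivity), ← pow_add]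
    exact pow_le_pow_right₀ one_le_two (by omega)
  have h2d : (1 : ℝ) ≤ 2 ^ d := one_le_pow₀ one_le_two
  calc _ ≤ ((2 ^ y : ℕ) : ℝ) *
          (1 + Real.log (1 + (2 ^ (y + 2 * x + d + 1) : ℕ) / (2 ^ y : ℕ))) :=
        log_choose_add_le _ (by positivity)
    _ ≤ ((2 ^ y : ℕ) : ℝ) * (1 + ((2 * x + d + 1 : ℕ) + 1)) := by gcongr
    _ = 2 ^ y * (2 * x + d + 3) := by push_cast; ring
    _ ≤ 2 ^ y * ((d + 3) * (x + 1)) := by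
        gcongr
        nlinarith [mul_nonneg d.cast_nonneg (x.cast_nonneg : (0 : ℝ) ≤ x)]
    _ ≤ 12 * 2 ^ d * (2 ^ y * ((d + 3) * (x + 1))) :=
        le_mul_of_one_le_left (by positivity) (by linarith)
    _ = 12 * 2 ^ d * (d + 3) * 2 ^ (y + x) * ((x + 1) / 2 ^ x) := by
        rw [pow_add 2 y x]; field_simp

lemma entropyLE_level_tail (hA : 0 ≤ A) (hx : s₀ ≤ x) (hv : ∀ i, ‖v i‖ ≤ A / √8 ^ (s₀ + x)) :
    EntropyLE (absConvexHull ℝ (Set.range v)) (2 * A / (4 ^ s₀ * 2 ^ x)) 0 := by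
  have hpow : (4 : ℝ) ^ s₀ * 2 ^ x ≤ √8 ^ (s₀ + x) := by
    refine (sq_le_sq₀ (by positivity) (by positivity)).1 ?_
    rw [mul_pow, pow_right_comm, pow_right_comm 2, pow_right_comm √8, Real.sq_sqrt (by norm_num),
      show (4 : ℝ) ^ 2 = 2 ^ 4 by norm_num, show (8 : ℝ) = 2 ^ 3 by norm_num]
    simp only [← pow_mul, ← pow_add]
    exact pow_le_pow_right₀ one_le_two (by omega)
  have hv' : ∀ i, ‖v i‖ ≤ 2 * A / (4 ^ s₀ * 2 ^ x) := fun i => (hv i).trans (by gcongr; linarith)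
  exact EntropyLE.of_norm_le fun z => norm_le_of_mem_absConvexHull (Set.forall_mem_range.2 hv')

lemma entropyLE_level [Fintype ι] (hA : 0 ≤ A) (hcard : Fintype.card ι ≤ 2 ^ (s + d))
    (hv : ∀ i, ‖v i‖ ≤ A / √8 ^ s) (s₀ : ℕ) :
    EntropyLE (absConvexHull ℝ (Set.range v)) (2 * A / (4 ^ s₀ * 2 ^ Nat.dist s s₀))
      (12 * 2 ^ d * (d + 3) * 2 ^ s₀ * ((Nat.dist s s₀ + 1) / 2 ^ Nat.dist s s₀)) := by
  rcases le_total s s₀ with hs | hs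
  · obtain ⟨x, rfl⟩ := Nat.exists_eq_add_of_le hs
    rw [Nat.dist_eq_sub_of_le hs, Nat.add_sub_cancel_left]
    exact entropyLE_level_coarse hA hcard hv
  obtain ⟨x, rfl⟩ := Nat.exists_eq_add_of_le hs
  rw [Nat.dist_eq_sub_of_le_right hs, Nat.add_sub_cancel_left]
  rcases le_total s₀ x with hx | hx
  · exact (entropyLE_level_tail hA hx hv).mono subset_rfl le_rfl (by positivity)
  · obtain ⟨y, rfl⟩ := Nat.exists_eq_add_of_le' hx
    rw [show y + x + x = y + 2 * x by ring] at hcard hv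
    exact entropyLE_level_fine hA hcard hv

end Level

section LevelSum

/-- The constant in the sum of the geometrically decaying level budgets in dimension `e + 1`. -/
noncomputable def levelConst (e : ℕ) : ℝ := ∑' x : ℕ, ((x : ℝ) + 1) ^ (e + 1) / 2 ^ x

lemma summable_levelConst (e : ℕ) : Summable fun x : ℕ => ((x : ℝ) + 1) ^ (e + 1) / 2 ^ x := by
  have hgeom := summable_pow_mul_geometric_of_norm_lt_one (R := ℝ) (e + 1) (r := 1 / 2)
    (by norm_num)
  refine (((summable_nat_add_iff 1).2 hgeom).mul_left 2).congr fun x => ?_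
  rw [Nat.cast_succ, one_div, inv_pow, pow_succ 2 x]
  field_simp

lemma sum_le_levelConst (e : ℕ) (S : Finset ℕ) :
    ∑ x ∈ S, ((x : ℝ) + 1) ^ (e + 1) / 2 ^ x ≤ levelConst e :=
  (summable_levelConst e).sum_le_tsum S fun _ _ => by positivity

lemma one_le_levelConst (e : ℕ) : 1 ≤ levelConst e := by
  simpa using sum_le_levelConst e {0}

lemma sum_pow_mul_dist_le (e s₀ : ℕ) (S : Finset ℕ) :
    ∑ s ∈ S, ((s : ℝ) + 1) ^ e * ((Nat.dist s s₀ + 1) / 2 ^ Nat.dist s s₀)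
      ≤ 2 * levelConst e * (s₀ + 1) ^ e := by
  have hterm : ∀ s : ℕ, ((s : ℝ) + 1) ^ e * ((Nat.dist s s₀ + 1) / 2 ^ Nat.dist s s₀) ≤
      (s₀ + 1) ^ e * (((Nat.dist s s₀ : ℕ) + 1) ^ (e + 1) / 2 ^ Nat.dist s s₀) := by
    intro s
    have hs : (s : ℝ) + 1 ≤ (s₀ + 1) * (Nat.dist s s₀ + 1) := by
      have : s ≤ s₀ + Nat.dist s s₀ := by unfold Nat.dist; omega
      exact_mod_cast (by nlinarith : s + 1 ≤ (s₀ + 1) * (Nat.dist s s₀ + 1))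
    calc _ ≤ (((s₀ : ℝ) + 1) * (Nat.dist s s₀ + 1)) ^ e *
          ((Nat.dist s s₀ + 1) / 2 ^ Nat.dist s s₀) := by gcongr
      _ = _ := by rw [mul_pow]; ring
  have hinj : ∀ T : Finset ℕ, Set.InjOn (fun s => Nat.dist s s₀) T →
      ∑ s ∈ T, ((Nat.dist s s₀ : ℝ) + 1) ^ (e + 1) / 2 ^ Nat.dist s s₀ ≤ levelConst e := by
    intro T hT
    rw [← sum_image (f := fun x : ℕ => ((x : ℝ) + 1) ^ (e + 1) / 2 ^ x) hT]
    exact sum_le_levelConst e _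
  calc _ ≤ ∑ s ∈ S, ((s₀ : ℝ) + 1) ^ e *
          (((Nat.dist s s₀ : ℝ) + 1) ^ (e + 1) / 2 ^ Nat.dist s s₀) := sum_le_sum fun s _ => hterm s
    _ = ((s₀ : ℝ) + 1) ^ e *
          (∑ s ∈ S with s ≤ s₀, ((Nat.dist s s₀ : ℝ) + 1) ^ (e + 1) / 2 ^ Nat.dist s s₀ +
            ∑ s ∈ S with ¬ s ≤ s₀, ((Nat.dist s s₀ : ℝ) + 1) ^ (e + 1) / 2 ^ Nat.dist s s₀) := by
        rw [sum_filter_add_sum_filter_not, mul_sum]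
    _ ≤ ((s₀ : ℝ) + 1) ^ e * (levelConst e + levelConst e) := by
        gcongr <;> refine hinj _ fun a ha b hb hab => ?_ <;>
          simp only [mem_coe, mem_filter, Nat.dist] at ha hb hab <;> omega
    _ = 2 * levelConst e * (s₀ + 1) ^ e := by ring

lemma card_filter_sum_eq_le {e : ℕ} (P : Finset (Fin (e + 1) → ℕ)) (s : ℕ) :
    #{l ∈ P | ∑ k, l k = s} ≤ (s + 1) ^ e := by
  have hcard : #(Fintype.piFinset fun _ : Fin e => range (s + 1)) = (s + 1) ^ e := by
    simp [Fintype.card_piFinset]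
  rw [← hcard]
  refine card_le_card_of_injOn Fin.tail (fun l hl => ?_) fun l hl l' hl' htail => ?_
  · have hsum : ∑ k, l k = s := (mem_filter.1 hl).2
    rw [Fin.sum_univ_succ] at hsum
    simp only [mem_coe, Fintype.mem_piFinset, mem_range, Fin.tail]
    intro k
    have := single_le_sum (f := fun k : Fin e => l k.succ) (fun _ _ => Nat.zero_le _) (mem_univ k)
    omega
  · have hsum : ∑ k, l k = s := (mem_filter.1 hl).2
    have hsum' : ∑ k, l' k = s := (mem_filter.1 hl').2
    have htail' : ∀ k : Fin e, l k.succ = l' k.succ := congrFun htail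
    simp only [Fin.sum_univ_succ, htail'] at hsum hsum'
    exact funext (Fin.cases (by omega) htail')

lemma sum_level_dist_le {e : ℕ} (P : Finset (Fin (e + 1) → ℕ)) (s₀ : ℕ) :
    ∑ l ∈ P, (((Nat.dist (∑ k, l k) s₀ : ℕ) + 1 : ℝ) / 2 ^ Nat.dist (∑ k, l k) s₀)
      ≤ 2 * levelConst e * (s₀ + 1) ^ e := by
  set w : ℕ → ℝ := fun s => (Nat.dist s s₀ + 1 : ℝ) / 2 ^ Nat.dist s s₀
  set S : Finset ℕ := P.image fun l => ∑ k, l k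
  calc ∑ l ∈ P, w (∑ k, l k) = ∑ s ∈ S, (#{l ∈ P | ∑ k, l k = s} : ℝ) * w s := by
        rw [← sum_fiberwise_of_maps_to fun l hl => mem_image_of_mem (fun l => ∑ k, l k) hl]
        refine sum_congr rfl fun s _ => ?_
        rw [sum_congr rfl fun l hl => by rw [(mem_filter.1 hl).2], sum_const, nsmul_eq_mul]
    _ ≤ ∑ s ∈ S, ((s : ℝ) + 1) ^ e * w s := by
        gcongr with s
        exact_mod_cast card_filter_sum_eq_le P s
    _ ≤ 2 * levelConst e * (s₀ + 1) ^ e := sum_pow_mul_dist_le e s₀ S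

end LevelSum

section FaberSchauder

section Interpolation

variable {V : Type*} [AddCommGroup V] [Module ℝ V]

/-- The value at `q` of the piecewise linear interpolant of `f` on the mesh `hℕ`. -/
noncomputable def linInterp (f : ℕ → V) (h q : ℕ) : V :=
  AffineMap.lineMap (f (h * (q / h))) (f (h * (q / h) + h)) (((q % h : ℕ) : ℝ) / h)

/-- The second difference of `f` at the knots `a`, `a + h`, `a + 2h`. -/
def secondDiff (f : ℕ → V) (h a : ℕ) : V := f a - (2 : ℝ) • f (a + h) + f (a + 2 * h)

lemma linInterp_one (f : ℕ → V) (q : ℕ) : linInterp f 1 q = f q := by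
  simp [linInterp, Nat.mod_one]

lemma linInterp_mul_add (f : ℕ → V) {h r : ℕ} (hr : r < h) (a : ℕ) :
    linInterp f h (h * a + r) = AffineMap.lineMap (f (h * a)) (f (h * a + h)) ((r : ℝ) / h) := by
  obtain ⟨hdiv, hmod⟩ := (Nat.div_mod_unique (by omega : 0 < h)).2
    ⟨Nat.add_comm r (h * a), hr⟩
  rw [linInterp, hdiv, hmod]

lemma exists_linInterp_sub_linInterp_two_mul (f : ℕ → V) {h : ℕ} (hh : 0 < h) (q : ℕ) :
    ∃ c : ℝ, |c| ≤ 1 ∧ linInterp f h q - linInterp f (2 * h) q =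
      c • secondDiff f h (2 * h * (q / (2 * h))) := by
  have hh' : (0 : ℝ) < h := by exact_mod_cast hh
  obtain ⟨a, r, hr, rfl⟩ : ∃ a r, r < 2 * h ∧ q = 2 * h * a + r :=
    ⟨q / (2 * h), q % (2 * h), Nat.mod_lt q (by omega), (Nat.div_add_mod q (2 * h)).symm⟩
  rw [Nat.mul_add_div (by omega), Nat.div_eq_of_lt hr, Nat.add_zero, linInterp_mul_add f hr]
  rcases lt_or_ge r h with hlt | hge
  · obtain ⟨t, ht⟩ : ∃ t : ℝ, t = r / (2 * h) := ⟨_, rfl⟩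
    have ht0 : 0 ≤ t := by rw [ht]; positivity
    have ht1 : t ≤ 1 := by rw [ht, div_le_one (by positivity)]; exact_mod_cast hr.le
    refine ⟨-t, by rw [abs_neg, abs_of_nonneg ht0]; exact ht1, ?_⟩
    rw [show 2 * h * a + r = h * (2 * a) + r by ring, linInterp_mul_add f hlt,
      show h * (2 * a) = 2 * h * a by ring, show (r : ℝ) / h = 2 * t by rw [ht]; field_simp,
      show (r : ℝ) / (2 * h : ℕ) = t by rw [ht]; push_cast; rfl]
    simp only [AffineMap.lineMap_apply_module, secondDiff]
    module
  · obtain ⟨r, rfl⟩ := Nat.exists_eq_add_of_le hge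
    have hlt : r < h := by omega
    obtain ⟨t, ht⟩ : ∃ t : ℝ, t = r / h := ⟨_, rfl⟩
    have ht0 : 0 ≤ t := by rw [ht]; positivity
    have ht1 : t ≤ 1 := by rw [ht, div_le_one hh']; exact_mod_cast hlt.le
    refine ⟨-((1 - t) / 2), by rw [abs_le]; constructor <;> linarith, ?_⟩
    rw [show 2 * h * a + (h + r) = h * (2 * a + 1) + r by ring, linInterp_mul_add f hlt,
      show h * (2 * a + 1) = 2 * h * a + h by ring, ← ht,
      show ((h + r : ℕ) : ℝ) / (2 * h : ℕ) = (1 + t) / 2 by rw [ht]; push_cast; field_simp]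
    simp only [AffineMap.lineMap_apply_module, secondDiff,
      show 2 * h * a + h + h = 2 * h * a + 2 * h by ring]
    module

lemma exists_eq_linInterp_add_sum_secondDiff (f : ℕ → V) (L q : ℕ) :
    ∃ c : ℕ → ℝ, (∀ l, |c l| ≤ 1) ∧ f q = linInterp f (2 ^ L) q +
      ∑ l ∈ range L, c l • secondDiff f (2 ^ (L - (l + 1))) (2 ^ (L - l) * (q / 2 ^ (L - l))) := by
  choose c hc hdiff using fun l =>
    exists_linInterp_sub_linInterp_two_mul f (Nat.two_pow_pos (L - (l + 1))) q
  refine ⟨c, hc, ?_⟩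
  have htelescope := sum_range_sub (fun l => linInterp f (2 ^ (L - l)) q) L
  rw [Nat.sub_self, pow_zero, linInterp_one, Nat.sub_zero] at htelescope
  rw [← sub_eq_iff_eq_add', ← htelescope]
  refine sum_congr rfl fun l hl => ?_
  have hmesh : 2 * 2 ^ (L - (l + 1)) = 2 ^ (L - l) := by
    rw [← pow_succ', show L - (l + 1) + 1 = L - l by have := mem_range.1 hl; omega]
  rw [← hmesh]
  exact hdiff l

end Interpolation

/-- The hinge functions on `ℕ`: the constant `1` for `m = 0`, and `i ↦ (i - q)₊` for `m = q + 1`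
(the truncated subtraction is the positive part). -/
def hinge : ℕ → ℕ → ℝ
  | 0, _ => 1
  | q + 1, i => ((i - q : ℕ) : ℝ)

/-- The hinge functions on `{0, …, n - 1}`, rescaled to take values in `[0, 1]`. -/
noncomputable def hingeVec (n m : ℕ) : EuclideanSpace ℝ (Fin n) :=
  WithLp.toLp 2 fun i => hinge m i / n ^ min m 1

lemma hingeVec_zero_apply {n : ℕ} (i : Fin n) : hingeVec n 0 i = 1 := by
  simp [hingeVec, hinge]

lemma hingeVec_succ_apply {n : ℕ} (q : ℕ) (i : Fin n) :
    hingeVec n (q + 1) i = ((i - q : ℕ) : ℝ) / n := by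
  simp [hingeVec, hinge]

lemma norm_hingeVec_le (n m : ℕ) : ‖hingeVec n m‖ ≤ √n := by
  have hentry : ∀ i, ‖hingeVec n m i‖ ^ 2 ≤ 1 := by
    intro i
    refine pow_le_one₀ (norm_nonneg _) ?_
    cases m with
    | zero => simp [hingeVec_zero_apply]
    | succ q =>
      rw [hingeVec_succ_apply, Real.norm_of_nonneg (by positivity)]
      exact div_le_one_of_le₀ (by exact_mod_cast (by omega : (i : ℕ) - q ≤ n)) (by positivity)
  rw [EuclideanSpace.norm_eq]
  refine Real.sqrt_le_sqrt ?_
  simpa using sum_le_sum fun i (_ : i ∈ univ) => hentry i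

lemma linInterp_hingeVec_succ {n h q : ℕ} (hn : n ≤ h) (hq : q < h) :
    linInterp (fun q => hingeVec n (q + 1)) h q = (1 - (q : ℝ) / h) • hingeVec n 1 := by
  have hzero : hingeVec n (h + 1) = 0 := by
    ext i
    simp [hingeVec_succ_apply, Nat.sub_eq_zero_of_le (i.2.le.trans hn)]
  have := linInterp_mul_add (fun q => hingeVec n (q + 1)) hq 0
  simpa [AffineMap.lineMap_apply_module, hzero] using this

/-- The Faber-Schauder hat function on `[a, a + 2h]` with apex `a + h`, as the second difference of
hinge functions; its height is `h / n`. -/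
noncomputable def hatVec (n h a : ℕ) : EuclideanSpace ℝ (Fin n) :=
  secondDiff (fun q => hingeVec n (q + 1)) h a

lemma hatVec_apply {n : ℕ} (h a : ℕ) (i : Fin n) : hatVec n h a i =
    (((i - a : ℕ) : ℝ) - 2 * ((i - (a + h) : ℕ) : ℝ) + ((i - (a + 2 * h) : ℕ) : ℝ)) / n := by
  simp only [hatVec, secondDiff, PiLp.add_apply, PiLp.sub_apply, PiLp.smul_apply, smul_eq_mul,
    hingeVec_succ_apply]
  ring

lemma hatVec_apply_eq_zero {n h a : ℕ} {i : Fin n} (hi : (i : ℕ) ∉ Ico a (a + 2 * h)) :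
    hatVec n h a i = 0 := by
  have hvanish :
      ((i - a : ℕ) : ℤ) - 2 * ((i - (a + h) : ℕ) : ℤ) + ((i - (a + 2 * h) : ℕ) : ℤ) = 0 := by
    rw [mem_Ico] at hi; omega
  have hcast := congrArg (Int.cast (R := ℝ)) hvanish
  simp only [Int.cast_add, Int.cast_sub, Int.cast_mul, Int.cast_natCast, Int.cast_ofNat,
    Int.cast_zero] at hcast
  rw [hatVec_apply, hcast, zero_div]

lemma abs_hatVec_apply_le {n : ℕ} (h a : ℕ) (i : Fin n) : |hatVec n h a i| ≤ h / n := by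
  have hbound :
      |((i - a : ℕ) : ℤ) - 2 * ((i - (a + h) : ℕ) : ℤ) + ((i - (a + 2 * h) : ℕ) : ℤ)| ≤ h := by
    rw [abs_le]; omega
  have hcast := Int.cast_le (R := ℝ).2 hbound
  simp only [Int.cast_abs, Int.cast_add, Int.cast_sub, Int.cast_mul, Int.cast_natCast,
    Int.cast_ofNat] at hcast
  rw [hatVec_apply, abs_div, Nat.abs_cast]
  gcongr

lemma norm_sq_hatVec_le (n h a : ℕ) : ‖hatVec n h a‖ ^ 2 ≤ 2 * h * ((h : ℝ) / n) ^ 2 := by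
  have hentry : ∀ i : Fin n, ‖hatVec n h a i‖ ^ 2 ≤
      if (i : ℕ) ∈ Ico a (a + 2 * h) then ((h : ℝ) / n) ^ 2 else 0 := by
    intro i
    split_ifs with hi
    · gcongr; exact abs_hatVec_apply_le h a i
    · simp [hatVec_apply_eq_zero hi]
  calc ‖hatVec n h a‖ ^ 2
      ≤ ∑ i : Fin n, if (i : ℕ) ∈ Ico a (a + 2 * h) then ((h : ℝ) / n) ^ 2 else 0 := by
        rw [EuclideanSpace.norm_sq_eq]
        exact sum_le_sum fun i _ => hentry i
    _ = ∑ i ∈ range n with i ∈ Ico a (a + 2 * h), ((h : ℝ) / n) ^ 2 := by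
        rw [sum_filter, Fin.sum_univ_eq_sum_range
          fun i => if i ∈ Ico a (a + 2 * h) then ((h : ℝ) / n) ^ 2 else 0]
    _ ≤ ∑ _i ∈ Ico a (a + 2 * h), ((h : ℝ) / n) ^ 2 :=
        sum_le_sum_of_subset_of_nonneg (fun _ hi => (mem_filter.1 hi).2) fun _ _ _ => by positivity
    _ = 2 * h * ((h : ℝ) / n) ^ 2 := by simp

/-- The Faber-Schauder system of depth `L` on `{0, …, n - 1}`: level `0` consists of the affine
hinge functions `hingeVec n 0` and `hingeVec n 1`, level `l + 1` of the hat functions supported on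
the dyadic intervals of length `2 ^ (L - l)`. -/
noncomputable def faberVec (n L : ℕ) : ℕ → ℕ → EuclideanSpace ℝ (Fin n)
  | 0, j => hingeVec n j
  | l + 1, j => hatVec n (2 ^ (L - (l + 1))) (2 ^ (L - l) * j)

lemma norm_faberVec_le {n L l : ℕ} (hL : 2 ^ L ≤ 2 * n) (hl : l ≤ L) (j : ℕ) :
    ‖faberVec n L l j‖ ≤ 4 * √n / √8 ^ l := by
  cases l with
  | zero =>
    simpa [faberVec] using (norm_hingeVec_le n j).trans (by linarith [Real.sqrt_nonneg n])
  | succ l =>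
    have hn : (0 : ℝ) < n := by
      have := Nat.two_pow_pos L
      exact_mod_cast (by omega : 0 < n)
    set h := 2 ^ (L - (l + 1)) with hh
    have hmesh : (h : ℝ) * 2 ^ (l + 1) ≤ 2 * n := by
      have : h * 2 ^ (l + 1) = 2 ^ L := by rw [hh, ← pow_add, Nat.sub_add_cancel hl]
      exact_mod_cast this.trans_le hL
    have hscale : (4 * √n / √8 ^ (l + 1)) ^ 2 = 16 * n / (2 ^ (l + 1)) ^ 3 := by
      rw [div_pow, mul_pow, Real.sq_sqrt hn.le, pow_right_comm √8, Real.sq_sqrt (by norm_num),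
        pow_right_comm]
      norm_num
    refine (sq_le_sq₀ (norm_nonneg _) (by positivity)).1 ?_
    calc ‖hatVec n h (2 ^ (L - l) * j)‖ ^ 2 ≤ 2 * h * ((h : ℝ) / n) ^ 2 := norm_sq_hatVec_le ..
      _ = 2 * (h * 2 ^ (l + 1)) ^ 3 / (n ^ 2 * (2 ^ (l + 1)) ^ 3) := by field_simp
      _ ≤ 2 * (2 * n) ^ 3 / (n ^ 2 * (2 ^ (l + 1)) ^ 3) := by gcongr
      _ = (4 * √n / √8 ^ (l + 1)) ^ 2 := by rw [hscale]; field_simp; ring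

lemma exists_hingeVec_eq_sum_faberVec {n L m : ℕ} (hL : n ≤ 2 ^ L) (hm : m ≤ 2 ^ L) :
    ∃ u : ℕ → EuclideanSpace ℝ (Fin n), hingeVec n m = ∑ l ∈ range (L + 1), u l ∧
      ∀ l, ∃ c : ℝ, ∃ j : Fin (2 ^ (l + 1)), |c| ≤ 1 ∧ u l = c • faberVec n L l j := by
  cases m with
  | zero =>
    refine ⟨fun | 0 => hingeVec n 0 | _ + 1 => 0, by simp [sum_range_succ'], fun l => ?_⟩
    cases l with
    | zero => exact ⟨1, 0, by simp, by simp [faberVec]⟩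
    | succ l => exact ⟨0, 0, by simp, by simp⟩
  | succ q =>
    obtain ⟨c, hc, hsum⟩ :=
      exists_eq_linInterp_add_sum_secondDiff (fun q => hingeVec n (q + 1)) L q
    rw [linInterp_hingeVec_succ hL hm] at hsum
    refine ⟨fun
      | 0 => (1 - (q : ℝ) / (2 ^ L : ℕ)) • hingeVec n 1
      | l + 1 => c l • hatVec n (2 ^ (L - (l + 1))) (2 ^ (L - l) * (q / 2 ^ (L - l))),
      by rw [hsum, sum_range_succ', add_comm]; rfl, fun l => ?_⟩
    cases l with
    | zero =>
      have h0 : (0 : ℝ) ≤ (q : ℝ) / (2 ^ L : ℕ) := by positivity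
      have h1 : (q : ℝ) / (2 ^ L : ℕ) ≤ 1 :=
        div_le_one_of_le₀ (by exact_mod_cast (Nat.le_succ q).trans hm) (by positivity)
      exact ⟨_, 1, abs_le.2 ⟨by linarith, by linarith⟩, rfl⟩
    | succ l =>
      have hindex : q / 2 ^ (L - l) < 2 ^ (l + 1 + 1) := by
        rw [Nat.div_lt_iff_lt_mul (by positivity), ← pow_add]
        exact (Nat.lt_of_succ_le hm).trans_le (Nat.pow_le_pow_right two_pos (by omega))
      exact ⟨c l, ⟨_, hindex⟩, hc l, rfl⟩

lemma exists_dyadic_scale {n : ℕ} (hn : 0 < n) : ∃ L, n ≤ 2 ^ L ∧ 2 ^ L ≤ 2 * n := by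
  refine ⟨Nat.log 2 n + 1, (Nat.lt_pow_succ_log_self one_lt_two n).le, ?_⟩
  rw [pow_succ']
  exact Nat.mul_le_mul_left 2 (Nat.pow_log_le_self 2 hn.ne')

end FaberSchauder

section AbsConvex

lemma absConvex_sum {ι E : Type*} [AddCommGroup E] [Module ℝ E] {s : Finset ι} {A : ι → Set E}
    (hA : ∀ i ∈ s, AbsConvex ℝ (A i)) : AbsConvex ℝ (∑ i ∈ s, A i) :=
  ⟨sum_induction A (Balanced ℝ) (fun _ _ => Balanced.add) (balanced_zero)
    fun i hi => (hA i hi).1, convex_sum A fun i hi => (hA i hi).2⟩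

lemma sum_smul_mem_smul_absConvexHull {ι E : Type*} [AddCommGroup E] [Module ℝ E] {S : Set E}
    (hS : S.Nonempty) {s : Finset ι} {b : ι → ℝ} {g : ι → E} {V : ℝ} (hg : ∀ i ∈ s, g i ∈ S)
    (hb : ∑ i ∈ s, |b i| ≤ V) : ∑ i ∈ s, b i • g i ∈ V • absConvexHull ℝ S := by
  classical
  obtain ⟨hbal, hconv⟩ := absConvex_absConvexHull (𝕜 := ℝ) (s := S)
  have hsum : 0 ≤ ∑ i ∈ s, |b i| := sum_nonneg fun _ _ => abs_nonneg _
  suffices hmem : ∑ i ∈ s, b i • g i ∈ (∑ i ∈ s, |b i|) • absConvexHull ℝ S from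
    hbal.smul_mono (by simpa [abs_of_nonneg hsum] using hb.trans (le_abs_self V)) hmem
  clear hb hsum
  induction s using Finset.induction_on with
  | empty => simp [Set.zero_smul_set hS.absConvexHull]
  | insert i s hi ih =>
    rw [sum_insert hi, sum_insert hi, hconv.add_smul (abs_nonneg _)
      (sum_nonneg fun _ _ => abs_nonneg _)]
    refine Set.add_mem_add ?_ (ih fun j hj => hg j (mem_insert_of_mem hj))
    exact hbal.smul_mono (by simp) (Set.smul_mem_smul_set
      (subset_absConvexHull (hg i (mem_insert_self i s))))

lemma map_sum_mem_sum_absConvexHull {κ F : Type*} {M : κ → Type*} [Fintype κ] [DecidableEq κ]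
    [∀ k, AddCommGroup (M k)] [∀ k, Module ℝ (M k)] [AddCommGroup F] [Module ℝ F]
    (f : MultilinearMap ℝ M F) {α : κ → Type*} {β : ∀ k, α k → Type*} {P : ∀ k, Finset (α k)}
    {u : ∀ k, α k → M k} {v : ∀ k (l : α k), β k l → M k}
    (hu : ∀ k, ∀ l, ∃ c : ℝ, ∃ j, |c| ≤ 1 ∧ u k l = c • v k l j) :
    f (fun k => ∑ l ∈ P k, u k l) ∈ ∑ l ∈ Fintype.piFinset P,
      absConvexHull ℝ (Set.range fun j : ∀ k, β k (l k) => f fun k => v k (l k) (j k)) := by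
  choose c j hc hu using hu
  rw [f.map_sum_finset]
  refine Set.finsetSum_mem_finsetSum _ _ _ fun l _ => ?_
  simp only [hu, f.map_smul_univ]
  refine absConvex_absConvexHull.1.smul_mem ?_ (subset_absConvexHull ⟨fun k => j k (l k), rfl⟩)
  rw [Real.norm_eq_abs, abs_prod]
  exact prod_le_one (fun _ _ => abs_nonneg _) fun k _ => hc k (l k)

end AbsConvex

section Tensor

variable {κ : Type*} [Fintype κ] {ι : κ → Type*}

/-- The tensor product `(i k)ₖ ↦ ∏ k, f k (i k)` of the vectors `f k`, as a multilinear map. -/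
noncomputable def tensorVec :
    MultilinearMap ℝ (fun k => EuclideanSpace ℝ (ι k)) (EuclideanSpace ℝ (∀ k, ι k)) :=
  (WithLp.linearEquiv 2 ℝ _).symm.toLinearMap.compMultilinearMap <| MultilinearMap.pi fun i =>
    (MultilinearMap.mkPiAlgebra ℝ κ ℝ).compLinearMap fun k =>
      (EuclideanSpace.proj (i k)).toLinearMap

lemma tensorVec_apply (f : ∀ k, EuclideanSpace ℝ (ι k)) (i : ∀ k, ι k) :
    tensorVec f i = ∏ k, f k (i k) := rfl

lemma norm_tensorVec [DecidableEq κ] [∀ k, Fintype (ι k)] (f : ∀ k, EuclideanSpace ℝ (ι k)) :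
    ‖tensorVec f‖ = ∏ k, ‖f k‖ := by
  refine (sq_eq_sq₀ (norm_nonneg _) (prod_nonneg fun _ _ => norm_nonneg _)).1 ?_
  simp only [← prod_pow, EuclideanSpace.norm_sq_eq, tensorVec_apply, norm_prod, prod_univ_sum,
    Fintype.piFinset_univ]

end Tensor

section HingeTensor

variable {d : ℕ} (n : Fin d → ℕ)

/-- The tensor product hinge functions on `∏ k, {0, …, n k - 1}`, with values in `[0, 1]`. -/
noncomputable def hingeTensor (m : Fin d → ℕ) : EuclideanSpace ℝ (∀ k, Fin (n k)) :=
  tensorVec fun k => hingeVec (n k) (m k)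

lemma norm_hingeTensor_le (m : Fin d → ℕ) : ‖hingeTensor n m‖ ≤ √(∏ k, (n k : ℝ)) := by
  rw [hingeTensor, norm_tensorVec, Real.sqrt_prod _ fun k _ => by positivity]
  exact prod_le_prod (fun _ _ => norm_nonneg _) fun k _ => norm_hingeVec_le (n k) (m k)

variable {n}

lemma norm_tensorVec_faberVec_le {L l : Fin d → ℕ} (hL : ∀ k, 2 ^ L k ≤ 2 * n k)
    (hl : ∀ k, l k ≤ L k) (j : Fin d → ℕ) :
    ‖tensorVec fun k => faberVec (n k) (L k) (l k) (j k)‖ ≤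
      4 ^ d * √(∏ k, (n k : ℝ)) / √8 ^ ∑ k, l k := by
  rw [norm_tensorVec]
  refine (prod_le_prod (fun _ _ => norm_nonneg _) fun k _ =>
    norm_faberVec_le (hL k) (hl k) (j k)).trans_eq ?_
  rw [prod_div_distrib, prod_mul_distrib, prod_const, card_fin, prod_pow_eq_pow_sum,
    Real.sqrt_prod _ fun k _ => by positivity]

lemma absConvexHull_hingeTensor_subset {L : Fin d → ℕ} (hL : ∀ k, n k ≤ 2 ^ L k) :
    absConvexHull ℝ (hingeTensor n '' {m | ∀ k, m k ≤ n k}) ⊆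
      ∑ l ∈ Fintype.piFinset fun k => range (L k + 1), absConvexHull ℝ
        (Set.range fun j : ∀ k, Fin (2 ^ (l k + 1)) =>
          tensorVec fun k => faberVec (n k) (L k) (l k) (j k)) := by
  refine absConvexHull_min ?_ (absConvex_sum fun l _ => absConvex_absConvexHull)
  rintro _ ⟨m, hm, rfl⟩
  choose u hsum hu using fun k => exists_hingeVec_eq_sum_faberVec (hL k) ((hm k).trans (hL k))
  simp only [hingeTensor, hsum]
  exact map_sum_mem_sum_absConvexHull _ hu

end HingeTensor

lemma entropyLE_absConvexHull_hingeTensor {e : ℕ} {n : Fin (e + 1) → ℕ} (hn : ∀ k, 0 < n k)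
    (s₀ : ℕ) : EntropyLE (absConvexHull ℝ (hingeTensor n '' {m | ∀ k, m k ≤ n k}))
      (2 * (4 ^ (e + 1) * √(∏ k, (n k : ℝ))) / 4 ^ s₀ * (2 * levelConst e * (s₀ + 1) ^ e))
      (12 * 2 ^ (e + 1) * ((e + 1 : ℕ) + 3) * 2 ^ s₀ * (2 * levelConst e * (s₀ + 1) ^ e)) := by
  choose L hL hL' using fun k => exists_dyadic_scale (hn k)
  have hlevel := fun l (hl : l ∈ Fintype.piFinset fun k => range (L k + 1)) =>
    entropyLE_level (d := e + 1) (A := 4 ^ (e + 1) * √(∏ k, (n k : ℝ)))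
      (v := fun j : ∀ k, Fin (2 ^ (l k + 1)) => tensorVec fun k =>
        faberVec (n k) (L k) (l k) (j k)) (s := ∑ k, l k) (by positivity)
      (by simp [Fintype.card_pi, prod_pow_eq_pow_sum, sum_add_distrib])
      (fun j => norm_tensorVec_faberVec_le hL'
        (fun k => mem_range_succ_iff.1 (Fintype.mem_piFinset.1 hl k)) fun k => j k) s₀
  refine (EntropyLE.sum hlevel).mono (absConvexHull_hingeTensor_subset hL) ?_ ?_
  · refine le_trans ?_ (mul_le_mul_of_nonneg_left (sum_level_dist_le
      (Fintype.piFinset fun k => range (L k + 1)) s₀) (by positivity))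
    rw [mul_sum]
    refine sum_le_sum fun l _ => ?_
    rw [← div_div, div_eq_mul_one_div _ (2 ^ _)]
    gcongr
    simp
  · rw [← mul_sum]
    gcongr
    exact sum_level_dist_le _ _

section Taylor

/-- The difference of order `min m 2` of `u` at `m`: the coefficient of the hinge function of
index `m` in the discrete Taylor expansion of `u`. -/
noncomputable def truncDiff (u : ℕ → ℝ) (m : ℕ) : ℝ :=
  ∑ δ ∈ range (min m 2 + 1), (-1) ^ δ * ((min m 2).choose δ : ℝ) * u (m - δ)

lemma truncDiff_zero (u : ℕ → ℝ) : truncDiff u 0 = u 0 := by simp [truncDiff]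

lemma truncDiff_one (u : ℕ → ℝ) : truncDiff u 1 = u 1 - u 0 := by
  simp [truncDiff, sum_range_succ, ← sub_eq_add_neg]

lemma truncDiff_add_two (u : ℕ → ℝ) (m : ℕ) :
    truncDiff u (m + 2) = u (m + 2) - 2 * u (m + 1) + u m := by
  simp [truncDiff, sum_range_succ, ← sub_eq_add_neg]

lemma sum_hinge_mul_truncDiff_range_add_two (u : ℕ → ℝ) {i N : ℕ} (hN : N + 1 ≤ i) :
    ∑ m ∈ range (N + 2), hinge m i * truncDiff u m =
      u (N + 1) + ((i : ℝ) - N - 1) * (u (N + 1) - u N) := by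
  induction N with
  | zero =>
    simp only [sum_range_succ, sum_range_zero, hinge, truncDiff_zero, truncDiff_one,
      Nat.sub_zero, Nat.cast_zero]
    ring
  | succ N ih =>
    rw [sum_range_succ, ih (by omega), truncDiff_add_two, hinge,
      Nat.cast_sub (by omega : N + 1 ≤ i)]
    push_cast
    ring

lemma sum_hinge_mul_truncDiff (u : ℕ → ℝ) {n i : ℕ} (hi : i < n) :
    ∑ m ∈ range n, hinge m i * truncDiff u m = u i := by
  have hvanish : ∀ m ∈ range n, m ∉ range (i + 1) → hinge m i * truncDiff u m = 0 := by
    rintro (_ | q) _ hm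
    · simp at hm
    · have hq : i - q = 0 := by rw [mem_range] at hm; omega
      simp [hinge, hq]
  rw [← sum_subset (range_subset_range.2 hi) hvanish]
  cases i with
  | zero => simp [hinge, truncDiff_zero]
  | succ i =>
    rw [sum_hinge_mul_truncDiff_range_add_two u le_rfl]
    push_cast
    ring

variable {d : ℕ} {n : Fin d → ℕ}

lemma prod_ite_eq_one_zero (i j : Fin d → ℕ) :
    ∏ k, (if i k = j k then 1 else 0 : ℝ) = if i = j then 1 else 0 := by
  simp only [prod_boole, mem_univ, true_imp_iff, funext_iff]

lemma mixedDiff_eq_sum_mul_prod_truncDiff (θ : (Fin d → ℕ) → ℝ) {m : Fin d → ℕ}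
    (hm : m ∈ Fintype.piFinset fun k => range (n k)) :
    mixedDiff d (fun k => min (m k) 2) θ m = ∑ j ∈ Fintype.piFinset fun k => range (n k),
      θ j * ∏ k, truncDiff (fun a => if a = j k then 1 else 0) (m k) := by
  simp only [mixedDiff, truncDiff, prod_univ_sum, mul_sum]
  rw [sum_comm]
  refine sum_congr rfl fun δ _ => ?_
  have hmem : (fun k => m k - δ k) ∈ Fintype.piFinset fun k => range (n k) := by
    simp only [Fintype.mem_piFinset, mem_range] at hm ⊢
    exact fun k => (Nat.sub_le _ _).trans_lt (hm k)
  simp only [prod_mul_distrib, prod_ite_eq_one_zero, prod_pow_eq_pow_sum]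
  simp only [mul_ite, mul_one, mul_zero, sum_ite_eq, if_pos hmem]
  ring

lemma sum_mixedDiff_mul_prod_hinge (θ : (Fin d → ℕ) → ℝ) {i : Fin d → ℕ} (hi : ∀ k, i k < n k) :
    ∑ m ∈ Fintype.piFinset fun k => range (n k),
      mixedDiff d (fun k => min (m k) 2) θ m * ∏ k, hinge (m k) (i k) = θ i := by
  have hdual : ∀ j : Fin d → ℕ, ∑ m ∈ Fintype.piFinset fun k => range (n k),
      (∏ k, truncDiff (fun a => if a = j k then 1 else 0) (m k)) * ∏ k, hinge (m k) (i k) =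
        if i = j then 1 else 0 := by
    intro j
    simp only [← prod_mul_distrib, mul_comm (truncDiff _ _)]
    rw [← prod_univ_sum (fun k => range (n k)) fun k a =>
      hinge a (i k) * truncDiff (fun a => if a = j k then 1 else 0) a]
    simp only [sum_hinge_mul_truncDiff _ (hi _), prod_ite_eq_one_zero]
  calc _ = ∑ m ∈ Fintype.piFinset fun k => range (n k),
        ∑ j ∈ Fintype.piFinset fun k => range (n k),
          θ j * ((∏ k, truncDiff (fun a => if a = j k then 1 else 0) (m k)) *
            ∏ k, hinge (m k) (i k)) := sum_congr rfl fun m hm => by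
        simp only [mixedDiff_eq_sum_mul_prod_truncDiff θ hm, sum_mul, mul_assoc]
    _ = ∑ j ∈ Fintype.piFinset fun k => range (n k), θ j * if i = j then 1 else 0 := by
        rw [sum_comm]
        simp only [← mul_sum, hdual]
    _ = θ i := by simp [hi]

/-- The coefficient of `hingeTensor n m` in the discrete Taylor expansion of `θ`. -/
noncomputable def hingeCoeff (n : Fin d → ℕ) (θ : (Fin d → ℕ) → ℝ) (m : Fin d → ℕ) : ℝ :=
  (∏ k, (n k : ℝ) ^ min (m k) 1) * mixedDiff d (fun k => min (m k) 2) θ m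

lemma prod_pow_mul_hingeTensor_apply (m : Fin d → ℕ) (i : ∀ k, Fin (n k)) :
    (∏ k, (n k : ℝ) ^ min (m k) 1) * hingeTensor n m i = ∏ k, hinge (m k) (i k) := by
  rw [hingeTensor, tensorVec_apply, ← prod_mul_distrib]
  refine prod_congr rfl fun k _ => mul_div_cancel₀ _ ?_
  have : (n k : ℝ) ≠ 0 := by exact_mod_cast (i k).pos.ne'
  positivity

lemma eq_sum_hingeCoeff_smul_hingeTensor (x : EuclideanSpace ℝ (∀ k, Fin (n k))) :
    x = ∑ m ∈ Fintype.piFinset fun k => range (n k),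
      hingeCoeff n (latExtend d n x) m • hingeTensor n m := by
  ext i
  have hterm : ∀ m, hingeCoeff n (latExtend d n x) m * hingeTensor n m i =
      mixedDiff d (fun k => min (m k) 2) (latExtend d n x) m * ∏ k, hinge (m k) (i k) := by
    intro m
    rw [hingeCoeff, mul_comm (∏ k, _) (mixedDiff ..), mul_assoc, prod_pow_mul_hingeTensor_apply]
  simp only [WithLp.ofLp_sum, WithLp.ofLp_smul, Finset.sum_apply, Pi.smul_apply, smul_eq_mul, hterm]
  rw [sum_mixedDiff_mul_prod_hinge _ fun k => (i k).2]
  simp [latExtend]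

lemma sup_min_two_eq {m : Fin d → ℕ} (hm : ∃ k, 2 ≤ m k) :
    (univ.sup fun k => min (m k) 2) = 2 := by
  obtain ⟨k, hk⟩ := hm
  refine le_antisymm (Finset.sup_le fun k _ => min_le_right _ _) ?_
  exact (le_min hk le_rfl).trans (le_sup (f := fun k => min (m k) 2) (mem_univ k))

lemma mem_idxBeta_min_two {m : Fin d → ℕ} (hm : ∀ k, m k < n k) (hm2 : ∃ k, 2 ≤ m k) :
    m ∈ idxBeta d n fun k => min (m k) 2 := by
  rw [idxBeta, sup_min_two_eq hm2, Fintype.mem_piFinset]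
  intro k
  have := hm k
  split_ifs with h
  · rw [mem_Ico]; omega
  · rw [mem_singleton]; omega

lemma sum_abs_hingeCoeff_le (θ : (Fin d → ℕ) → ℝ) :
    ∑ m ∈ Fintype.piFinset fun k => range (n k) with ∃ k, 2 ≤ m k, |hingeCoeff n θ m|
      ≤ V2 d n θ := by
  have hmaps : ∀ m ∈ {m ∈ Fintype.piFinset fun k => range (n k) | ∃ k, 2 ≤ m k},
      (fun k => min (m k) 2) ∈ {β ∈ Fintype.piFinset fun _ : Fin d => range 3 |
        univ.sup β = 2} := fun m hm => by
    simp [sup_min_two_eq (mem_filter.1 hm).2]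
  rw [← sum_fiberwise_of_maps_to hmaps, V2]
  refine sum_le_sum fun β _ => ?_
  rw [mul_sum]
  have hterm : ∀ m : Fin d → ℕ, (fun k => min (m k) 2) = β → |hingeCoeff n θ m| =
      (∏ k, (n k : ℝ) ^ if β k = 2 then 1 else β k) * |mixedDiff d β θ m| := by
    rintro m rfl
    rw [hingeCoeff, abs_mul, abs_of_nonneg (by positivity)]
    congr 1
    refine prod_congr rfl fun k _ => ?_
    congr 1
    dsimp only
    split_ifs <;> omega
  rw [sum_congr rfl fun m hm => hterm m (mem_filter.1 hm).2]
  refine sum_le_sum_of_subset_of_nonneg (fun m hm => ?_) fun _ _ _ => by positivity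
  obtain ⟨hlarge, rfl⟩ := mem_filter.1 hm
  obtain ⟨hbox, hm2⟩ := mem_filter.1 hlarge
  exact mem_idxBeta_min_two (fun k => mem_range.1 (Fintype.mem_piFinset.1 hbox k)) hm2

variable (n) in
/-- The span of the hinge tensors which are affine in each variable, the part of the discrete
Taylor expansion on which `V2` vanishes. -/
noncomputable def affineSpan : Submodule ℝ (EuclideanSpace ℝ (∀ k, Fin (n k))) :=
  Submodule.span ℝ (Set.range fun m : Fin d → Fin 2 => hingeTensor n fun k => m k)

lemma finrank_affineSpan_le : Module.finrank ℝ (affineSpan n) ≤ 2 ^ d :=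
  (finrank_range_le_card _).trans_eq (by simp)

lemma setOf_V2_le_subset {V t : ℝ} (hV : 0 ≤ V) :
    {x : EuclideanSpace ℝ (∀ k, Fin (n k)) | V2 d n (latExtend d n x) ≤ V ∧ ‖x‖ ≤ t} ⊆
      {x | x ∈ affineSpan n ∧ ‖x‖ ≤ t + V * √(∏ k, (n k : ℝ))} +
        V • absConvexHull ℝ (hingeTensor n '' {m | ∀ k, m k ≤ n k}) := by
  rintro x ⟨hxV, hxt⟩
  set c := hingeCoeff n (latExtend d n x)
  set box := Fintype.piFinset fun k => range (n k)
  set low := ∑ m ∈ box with ¬ ∃ k, 2 ≤ m k, c m • hingeTensor n m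
  set high := ∑ m ∈ box with ∃ k, 2 ≤ m k, c m • hingeTensor n m
  have hx : x = low + high := by
    rw [add_comm, sum_filter_add_sum_filter_not]
    exact eq_sum_hingeCoeff_smul_hingeTensor x
  have hne : (hingeTensor n '' {m | ∀ k, m k ≤ n k}).Nonempty := ⟨_, n, fun _ => le_rfl, rfl⟩
  have hhigh : high ∈ V • absConvexHull ℝ (hingeTensor n '' {m | ∀ k, m k ≤ n k}) := by
    refine sum_smul_mem_smul_absConvexHull hne (fun m hm => ⟨m, ?_, rfl⟩)
      ((sum_abs_hingeCoeff_le _).trans hxV)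
    exact fun k => (mem_range.1 (Fintype.mem_piFinset.1 (mem_filter.1 hm).1 k)).le
  have hnorm : ‖high‖ ≤ V * √(∏ k, (n k : ℝ)) := by
    obtain ⟨y, hy, hyhigh⟩ := hhigh
    rw [← hyhigh, norm_smul, Real.norm_of_nonneg hV]
    gcongr
    refine norm_le_of_mem_absConvexHull ?_ hy
    rintro _ ⟨m, -, rfl⟩
    exact norm_hingeTensor_le n m
  refine ⟨low, ⟨sum_mem fun m hm => ?_, ?_⟩, high, hhigh, hx.symm⟩
  · have hm2 := (mem_filter.1 hm).2
    push Not at hm2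
    exact Submodule.smul_mem _ _ (Submodule.subset_span ⟨fun k => ⟨m k, hm2 k⟩, rfl⟩)
  · rw [eq_sub_of_add_eq hx.symm]
    exact (norm_sub_le _ _).trans (add_le_add hxt hnorm)

end Taylor

section Ball

open Metric

variable {E : Type*} [NormedAddCommGroup E] [NormedSpace ℝ E] {R ε : ℝ}

lemma card_le_of_pairwise_lt_dist [FiniteDimensional ℝ E] (hR : 0 ≤ R) (hε : 0 < ε)
    {s : Finset E} (hs : ∀ x ∈ s, ‖x‖ ≤ R)
    (hsep : (s : Set E).Pairwise fun x y => ε < dist x y) :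
    (s.card : ℝ) ≤ (1 + 2 * R / ε) ^ Module.finrank ℝ E := by
  borelize E
  set D := Module.finrank ℝ E
  set v := (Measure.addHaar : Measure E).real (ball 0 1)
  have hball : ∀ (x : E) {r : ℝ}, 0 < r →
      (Measure.addHaar : Measure E).real (ball x r) = r ^ D * v := fun x r hr => by
    rw [measureReal_def, Measure.addHaar_ball_of_pos _ _ hr, ENNReal.toReal_mul,
      ENNReal.toReal_ofReal (by positivity)]
    rfl
  have hv : 0 < v := ENNReal.toReal_pos (measure_ball_pos _ _ one_pos).ne' measure_ball_lt_top.ne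
  have hdisj : (s : Set E).PairwiseDisjoint fun x => ball x (ε / 2) := fun x hx y hy hxy =>
    ball_disjoint_ball (by linarith [hsep hx hy hxy])
  have hsub : ⋃ x ∈ s, ball x (ε / 2) ⊆ ball 0 (R + ε / 2) := Set.iUnion₂_subset fun x hx =>
    ball_subset_ball' (by linarith [hs x hx, dist_zero_right x])
  have hvol : s.card * (ε / 2) ^ D * v ≤ (R + ε / 2) ^ D * v :=
    calc s.card * (ε / 2) ^ D * v
        = (Measure.addHaar : Measure E).real (⋃ x ∈ s, ball x (ε / 2)) := by
          rw [measureReal_biUnion_finset hdisj fun _ _ => measurableSet_ball,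
            sum_congr rfl fun x _ => hball x (half_pos hε), sum_const, nsmul_eq_mul, mul_assoc]
      _ ≤ (Measure.addHaar : Measure E).real (ball 0 (R + ε / 2)) :=
          measureReal_mono hsub measure_ball_lt_top.ne
      _ = (R + ε / 2) ^ D * v := hball 0 (by positivity)
  calc (s.card : ℝ) ≤ (R + ε / 2) ^ D / (ε / 2) ^ D :=
        (le_div_iff₀ (by positivity)).2 (le_of_mul_le_mul_right hvol hv)
    _ = (1 + 2 * R / ε) ^ D := by rw [← div_pow]; congr 1; field_simp; ring

lemma entropyLE_of_packingNumber_le {X : Type*} [PseudoMetricSpace X] {A : Set X} {ε : NNReal}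
    {K : ℕ} (h : packingNumber ε A ≤ K) : EntropyLE A ε (Real.log K) := by
  have hpacking : packingNumber ε A ≠ ⊤ := ne_top_of_le_ne_top (ENat.natCast_ne_top K) h
  have hcard := (encard_maximalSeparatedSet hpacking).trans_le h
  obtain ⟨hfin, -⟩ := Set.encard_le_coe_iff.1 hcard
  rw [hfin.encard_eq_coe_toFinset_card, Nat.cast_le] at hcard
  refine ⟨hfin.toFinset, fun x hx => ?_, log_natCast_le_log_natCast hcard⟩
  obtain ⟨y, hy, hxy⟩ := isCover_maximalSeparatedSet hpacking hx
  exact ⟨y, hfin.mem_toFinset.2 hy, dist_le_coe.2 (edist_le_coe.1 hxy)⟩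

lemma packingNumber_setOf_norm_le_le [FiniteDimensional ℝ E] (hR : 0 ≤ R) {ε : NNReal}
    (hε : 0 < ε) : packingNumber ε {x : E | ‖x‖ ≤ R} ≤
      ⌊(1 + 2 * R / ε) ^ Module.finrank ℝ E⌋₊ := by
  refine iSup_le fun C => iSup₂_le fun hC hsep => ?_
  by_contra! hlt
  obtain ⟨t, htC, ht⟩ := Set.exists_subset_encard_eq (Order.add_one_le_of_lt hlt)
  lift t to Finset E using Set.finite_of_encard_eq_coe (by exact_mod_cast ht)
  have hcard := Nat.le_floor <| card_le_of_pairwise_lt_dist hR hε (fun x hx => hC (htC hx))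
    fun x hx y hy hxy => lt_of_not_ge fun hle =>
      (hsep (htC hx) (htC hy) hxy).not_ge (edist_le_coe.2 (dist_le_coe.1 hle))
  rw [Set.encard_coe_eq_coe_finsetCard] at ht
  norm_cast at ht
  exact absurd (ht ▸ hcard) (Nat.not_succ_le_self _)

lemma entropyLE_setOf_norm_le [FiniteDimensional ℝ E] (hR : 0 ≤ R) (hε : 0 < ε) :
    EntropyLE {x : E | ‖x‖ ≤ R} ε (Module.finrank ℝ E * Real.log (1 + 2 * R / ε)) := by
  lift ε to NNReal using hε.le
  have hone : 1 ≤ (1 + 2 * R / ε) ^ Module.finrank ℝ E :=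
    one_le_pow₀ (le_add_of_nonneg_right (by positivity))
  refine (entropyLE_of_packingNumber_le (packingNumber_setOf_norm_le_le hR hε)).mono
    subset_rfl le_rfl ?_
  rw [← Real.log_pow]
  exact Real.log_le_log (by exact_mod_cast Nat.floor_pos.2 hone) (Nat.floor_le (by positivity))

lemma entropyLE_setOf_mem_submodule (W : Submodule ℝ E) [FiniteDimensional ℝ W] (hR : 0 ≤ R)
    (hε : 0 < ε) : EntropyLE {x : E | x ∈ W ∧ ‖x‖ ≤ R} ε
      (Module.finrank ℝ W * Real.log (1 + 2 * R / ε)) := by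
  refine ((entropyLE_setOf_norm_le (E := W) hR hε).image zero_le_one (f := W.subtype)
    fun x y => (one_mul (dist x y)).ge).mono ?_ (one_mul ε).le le_rfl
  rintro x ⟨hx, hxR⟩
  exact ⟨⟨x, hx⟩, hxR, rfl⟩

end Ball

section Truncation

variable {e p : ℕ} {K Y : ℝ}

lemma pow_le_levelConst_mul_two_pow (e p : ℕ) : ((p : ℝ) + 1) ^ e ≤ levelConst e * 2 ^ p := by
  have hterm := sum_le_levelConst e {p}
  rw [sum_singleton, div_le_iff₀ (by positivity)] at hterm
  exact (pow_le_pow_right₀ (by linarith [p.cast_nonneg (α := ℝ)]) e.le_succ).trans hterm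

lemma exists_mul_pow_mul_le_four_pow (e : ℕ) (hK : 0 ≤ K) (hY : 0 ≤ Y) :
    ∃ s : ℕ, K * ((s : ℝ) + 1) ^ e * Y ≤ 4 ^ s := by
  obtain ⟨s, hs⟩ := pow_unbounded_of_one_lt (K * levelConst e * Y) (one_lt_two (α := ℝ))
  refine ⟨s, ?_⟩
  calc K * ((s : ℝ) + 1) ^ e * Y ≤ K * (levelConst e * 2 ^ s) * Y := by
        gcongr; exact pow_le_levelConst_mul_two_pow e s
    _ = K * levelConst e * Y * 2 ^ s := by ring
    _ ≤ 2 ^ s * 2 ^ s := by gcongr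
    _ = 4 ^ s := by rw [← mul_pow]; norm_num

lemma add_one_le_mul_log_of_four_pow_le (hK : 1 ≤ K) (hY : Real.exp 1 ≤ Y)
    (hp : (4 : ℝ) ^ p ≤ K * ((p : ℝ) + 1) ^ e * Y) :
    (p : ℝ) + 1 ≤ (2 * Real.log (K * levelConst e) + 3) * Real.log Y := by
  have hY0 : 0 < Y := (Real.exp_pos 1).trans_le hY
  have hlogY : 1 ≤ Real.log Y := (Real.le_log_iff_exp_le hY0).2 hY
  have hKL : 1 ≤ K * levelConst e := one_le_mul_of_one_le_of_one_le hK (one_le_levelConst e)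
  have htwo : (2 : ℝ) ^ p ≤ K * levelConst e * Y := by
    refine le_of_mul_le_mul_right ?_ (pow_pos two_pos p)
    calc (2 : ℝ) ^ p * 2 ^ p = 4 ^ p := by rw [← mul_pow]; norm_num
      _ ≤ K * (levelConst e * 2 ^ p) * Y := hp.trans (by
          gcongr; exact pow_le_levelConst_mul_two_pow e p)
      _ = K * levelConst e * Y * 2 ^ p := by ring
  have hlog : p * Real.log 2 ≤ Real.log (K * levelConst e) + Real.log Y := by
    rw [← Real.log_pow, ← Real.log_mul (by positivity) hY0.ne']
    exact Real.log_le_log (by positivity) htwo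
  have hhalf : (p : ℝ) * 2⁻¹ ≤ p * Real.log 2 := by gcongr; linarith [Real.log_two_gt_d9]
  linarith [le_mul_of_one_le_right (Real.log_nonneg hKL) hlogY]

lemma two_pow_mul_pow_le_of_four_pow_le {c G : ℝ} (hK : 0 ≤ K) (hY : 0 ≤ Y) (hG : 0 ≤ G)
    (hpG : (p : ℝ) + 1 ≤ c * G) (hp : (4 : ℝ) ^ p ≤ K * ((p : ℝ) + 1) ^ e * Y) :
    2 ^ p * ((p : ℝ) + 1) ^ e ≤ √(K * c ^ (3 * e)) * (√Y * √(G ^ (3 * e))) := by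
  rw [← Real.sqrt_mul hY, ← Real.sqrt_mul' _ (by positivity)]
  refine Real.le_sqrt_of_sq_le ?_
  calc (2 ^ p * ((p : ℝ) + 1) ^ e) ^ 2 = 4 ^ p * ((p : ℝ) + 1) ^ (2 * e) := by
        rw [mul_pow, ← pow_mul, ← pow_mul, mul_comm p, mul_comm e, pow_mul 2 2 p]; norm_num
    _ ≤ K * ((p : ℝ) + 1) ^ e * Y * ((p : ℝ) + 1) ^ (2 * e) := by gcongr
    _ = K * ((p : ℝ) + 1) ^ (3 * e) * Y := by ring
    _ ≤ K * (c * G) ^ (3 * e) * Y := by gcongr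
    _ = K * c ^ (3 * e) * (Y * G ^ (3 * e)) := by ring

lemma exists_truncation_level (e : ℕ) (hK : 1 ≤ K) : ∃ C : ℝ, 0 < C ∧ ∀ Y, Real.exp 1 ≤ Y →
    ∃ s : ℕ, K * ((s : ℝ) + 1) ^ e * Y ≤ 4 ^ s ∧
      2 ^ s * ((s : ℝ) + 1) ^ e ≤ C * (√Y * √(Real.log Y ^ (3 * e))) := by
  classical
  set c := 2 * Real.log (K * levelConst e) + 3
  have hKL : 1 ≤ K * levelConst e := one_le_mul_of_one_le_of_one_le hK (one_le_levelConst e)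
  have hc : 1 ≤ c := by linarith [Real.log_nonneg hKL]
  have hKc : 1 ≤ √(K * c ^ (3 * e)) :=
    Real.one_le_sqrt.2 (one_le_mul_of_one_le_of_one_le hK (one_le_pow₀ hc))
  refine ⟨2 ^ (e + 1) * √(K * c ^ (3 * e)), by positivity, fun Y hY => ?_⟩
  have hY1 : 1 ≤ Y := (Real.one_le_exp zero_le_one).trans hY
  have hlogY : 1 ≤ Real.log Y := (Real.le_log_iff_exp_le (by positivity)).2 hY
  have hex := exists_mul_pow_mul_le_four_pow e (zero_le_one.trans hK) (zero_le_one.trans hY1)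
  refine ⟨Nat.find hex, Nat.find_spec hex, ?_⟩
  rcases hs : Nat.find hex with _ | p
  · simp only [pow_zero, Nat.cast_zero, zero_add, one_pow, mul_one]
    exact one_le_mul_of_one_le_of_one_le
      (one_le_mul_of_one_le_of_one_le (one_le_pow₀ one_le_two) hKc)
      (one_le_mul_of_one_le_of_one_le (Real.one_le_sqrt.2 hY1)
        (Real.one_le_sqrt.2 (one_le_pow₀ hlogY)))
  · have hp : (4 : ℝ) ^ p ≤ K * ((p : ℝ) + 1) ^ e * Y :=
      (not_le.1 (Nat.find_min hex (hs ▸ p.lt_succ_self))).le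
    calc (2 : ℝ) ^ (p + 1) * (((p + 1 : ℕ) : ℝ) + 1) ^ e
        ≤ 2 ^ (p + 1) * (2 * ((p : ℝ) + 1)) ^ e := by
          gcongr; push_cast; linarith [p.cast_nonneg (α := ℝ)]
      _ = 2 ^ (e + 1) * (2 ^ p * ((p : ℝ) + 1) ^ e) := by rw [mul_pow]; ring
      _ ≤ 2 ^ (e + 1) * (√(K * c ^ (3 * e)) * (√Y * √(Real.log Y ^ (3 * e)))) :=
          mul_le_mul_of_nonneg_left (two_pow_mul_pow_le_of_four_pow_le (by positivity)
            (by positivity) (by positivity) (add_one_le_mul_log_of_four_pow_le hK hY hp) hp)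
            (by positivity)
      _ = _ := (mul_assoc _ _ _).symm

end Truncation

section Main

lemma exists_entropyLE_smul_absConvexHull_hingeTensor (e : ℕ) :
    ∃ C : ℝ, 0 < C ∧ ∀ n : Fin (e + 1) → ℕ, (∀ k, 0 < n k) → ∀ V ε Y : ℝ, 0 ≤ V → 0 < ε →
      Real.exp 1 ≤ Y → V * √(∏ k, (n k : ℝ)) / ε ≤ Y →
      EntropyLE (V • absConvexHull ℝ (hingeTensor n '' {m | ∀ k, m k ≤ n k})) ε
        (C * (√Y * √(Real.log Y ^ (3 * e)))) := by
  have hL := one_le_levelConst e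
  set B : ℝ := 12 * 2 ^ (e + 1) * ((e + 1 : ℕ) + 3) * (2 * levelConst e)
  set K : ℝ := 4 * 4 ^ (e + 1) * levelConst e
  have hK : 1 ≤ K := one_le_mul_of_one_le_of_one_le
    (one_le_mul_of_one_le_of_one_le (by norm_num) (one_le_pow₀ (by norm_num))) hL
  obtain ⟨C, hC, hlevel⟩ := exists_truncation_level e hK
  refine ⟨B * C, by positivity, fun n hn V ε Y hV hε hY hVY => ?_⟩
  obtain ⟨s, hs, hsC⟩ := hlevel Y hY
  refine ((entropyLE_absConvexHull_hingeTensor hn s).smul V).mono subset_rfl ?_ ?_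
  · rw [Real.norm_of_nonneg hV]
    calc V * (2 * (4 ^ (e + 1) * √(∏ k, (n k : ℝ))) / 4 ^ s * (2 * levelConst e * (s + 1) ^ e))
        = K * (s + 1) ^ e * (V * √(∏ k, (n k : ℝ)) / ε) / 4 ^ s * ε := by field_simp; ring
      _ ≤ K * (s + 1) ^ e * Y / 4 ^ s * ε := by gcongr
      _ ≤ ε := mul_le_of_le_one_left hε.le ((div_le_one (by positivity)).2 hs)
  · calc 12 * 2 ^ (e + 1) * ((e + 1 : ℕ) + 3) * 2 ^ s * (2 * levelConst e * (s + 1) ^ e)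
        = B * (2 ^ s * (s + 1) ^ e) := by ring
      _ ≤ B * (C * (√Y * √(Real.log Y ^ (3 * e)))) := by gcongr
      _ = B * C * (√Y * √(Real.log Y ^ (3 * e))) := (mul_assoc _ _ _).symm

theorem exists_entropyLE_setOf_V2_le (e : ℕ) :
    ∃ C : ℝ, 0 < C ∧ ∀ n : Fin (e + 1) → ℕ, (∀ k, 0 < n k) → ∀ V t ε Y : ℝ, 0 ≤ V → 0 ≤ t →
      0 < ε → Real.exp 1 ≤ Y → 2 * (V * √(∏ k, (n k : ℝ)) / ε) ≤ Y →
      EntropyLE {x : EuclideanSpace ℝ (∀ k, Fin (n k)) |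
          V2 (e + 1) n (latExtend (e + 1) n x) ≤ V ∧ ‖x‖ ≤ t} ε
        (2 ^ (e + 1) * Real.log (1 + 4 * (t + V * √(∏ k, (n k : ℝ))) / ε) +
          C * (√Y * √(Real.log Y ^ (3 * e)))) := by
  obtain ⟨C, hC, hhull⟩ := exists_entropyLE_smul_absConvexHull_hingeTensor e
  refine ⟨C, hC, fun n hn V t ε Y hV ht hε hY hVY => ?_⟩
  have hdim : (Module.finrank ℝ (affineSpan n) : ℝ) ≤ 2 ^ (e + 1) := by
    exact_mod_cast finrank_affineSpan_le
  have hball := (entropyLE_setOf_mem_submodule (affineSpan n)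
    (R := t + V * √(∏ k, (n k : ℝ))) (by positivity) (half_pos hε)).mono subset_rfl le_rfl
    (mul_le_mul_of_nonneg_right hdim (Real.log_nonneg (le_add_of_nonneg_right (by positivity))))
  refine (hball.add (hhull n hn V (ε / 2) Y hV (half_pos hε) hY ?_)).mono
    (setOf_V2_le_subset hV) (add_halves ε).le (le_of_eq ?_)
  · exact (le_of_eq (by field_simp)).trans hVY
  · congr 4
    field_simp
    ring

lemma log_one_add_le_two_mul_sqrt {x : ℝ} (hx : 0 ≤ x) : Real.log (1 + x) ≤ 2 * √x := by
  calc Real.log (1 + x) ≤ Real.log ((1 + √x) ^ 2) := Real.log_le_log (by positivity) (by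
        nlinarith [Real.sq_sqrt hx, Real.sqrt_nonneg x])
    _ = 2 * Real.log (1 + √x) := by rw [Real.log_pow]; norm_num
    _ ≤ 2 * √x := by
        gcongr
        linarith [Real.log_le_sub_one_of_pos (show 0 < 1 + √x by positivity)]

lemma log_one_add_four_mul_add_le {x y : ℝ} (hx : 0 ≤ x) (hy : 0 ≤ y) :
    Real.log (1 + 4 * (y + x)) ≤ 1 + Real.log (2 + 2 * y) + 2 * √x := by
  have hprod : 1 + 4 * (y + x) ≤ 2 * (2 + 2 * y) * (1 + x) := by nlinarith [mul_nonneg hx hy]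
  calc Real.log (1 + 4 * (y + x)) ≤ Real.log (2 * (2 + 2 * y) * (1 + x)) :=
        Real.log_le_log (by positivity) hprod
    _ = Real.log 2 + Real.log (2 + 2 * y) + Real.log (1 + x) := by
        rw [Real.log_mul (by positivity) (by positivity), Real.log_mul two_ne_zero (by positivity)]
    _ ≤ 1 + Real.log (2 + 2 * y) + 2 * √x := by
        gcongr
        · linarith [Real.log_two_lt_d9]
        · exact log_one_add_le_two_mul_sqrt hx

lemma mul_log_one_add_le {Q C V t M ε : ℝ} (hQ : 1 ≤ Q) (hC : 2 ≤ C) (hV : 0 ≤ V) (ht : 0 ≤ t)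
    (hM : 1 ≤ M) (hε : 0 < ε) :
    Q * Real.log (1 + 4 * (t + V * M) / ε) ≤ Real.log (2 + 2 * t * M / ε) +
      (Q - 1) * Real.log (2 + C * (t + V) * M / ε) + Q + 2 * Q * √(V * M / ε) := by
  have hlog : Real.log (1 + 4 * (t + V * M) / ε) ≤
      1 + Real.log (2 + 2 * t * M / ε) + 2 * √(V * M / ε) := by
    have htM : t ≤ t * M := le_mul_of_one_le_right ht hM
    calc Real.log (1 + 4 * (t + V * M) / ε)
        ≤ Real.log (1 + 4 * (t * M / ε + V * M / ε)) := by
          rw [← add_div, ← mul_div_assoc]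
          gcongr
      _ ≤ 1 + Real.log (2 + 2 * (t * M / ε)) + 2 * √(V * M / ε) :=
          log_one_add_four_mul_add_le (by positivity) (by positivity)
      _ = 1 + Real.log (2 + 2 * t * M / ε) + 2 * √(V * M / ε) := by ring_nf
  have hmono : Real.log (2 + 2 * t * M / ε) ≤ Real.log (2 + C * (t + V) * M / ε) := by
    gcongr
    linarith
  nlinarith [mul_le_mul_of_nonneg_left hlog (zero_le_one.trans hQ),
    mul_le_mul_of_nonneg_left hmono (sub_nonneg.2 hQ)]

lemma sqrt_pow_le_rpow {G : ℝ} (hG : 1 ≤ G) (e : ℕ) :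
    √(G ^ (3 * e)) ≤ G ^ (3 * (2 * ((e + 1 : ℕ) : ℝ) - 1) / 4) := by
  rw [Real.sqrt_eq_rpow, ← Real.rpow_natCast, ← Real.rpow_mul (zero_le_one.trans hG)]
  refine Real.rpow_le_rpow_of_exponent_le hG ?_
  push_cast
  linarith

lemma EntropyLE.exists_isNet_eDist {ι : Type*} [Fintype ι] {A : Set (ι → ℝ)} {ε L : ℝ}
    (h : EntropyLE {x : EuclideanSpace ℝ ι | x.ofLp ∈ A} ε L) :
    ∃ T : Finset (ι → ℝ), IsNet eDist ε A T ∧ Real.log T.card ≤ L := by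
  classical
  obtain ⟨T, hT, hcard⟩ := h
  refine ⟨T.image WithLp.ofLp, fun θ hθ => ?_,
    (log_natCast_le_log_natCast card_image_le).trans hcard⟩
  obtain ⟨y, hy, hθy⟩ := hT (WithLp.toLp 2 θ) hθ
  refine ⟨y, mem_image_of_mem _ hy, ?_⟩
  simpa only [eDist, EuclideanSpace.dist_eq, Real.dist_eq, sq_abs] using hθy

end Main

end MixedVariation

/-- Metric entropy bound for
`S(V,t) = {θ : V₂(θ) ≤ V, ‖θ‖₂ ≤ t}` in the Euclidean norm on `ℝ^{I₀}`. -/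
theorem statement4 (d : ℕ) (hd : 1 ≤ d) :
    ∃ C : ℝ, 0 < C ∧
      ∀ n : Fin d → ℕ, (∀ k, 2 ≤ n k) →
      ∀ V t ε : ℝ, 0 < V → 0 < t → 0 < ε →
      ∃ T : Finset ((∀ k : Fin d, Fin (n k)) → ℝ),
        IsNet eDist ε
          {θ : (∀ k : Fin d, Fin (n k)) → ℝ |
            V2 d n (latExtend d n θ) ≤ V ∧ Real.sqrt (∑ i, θ i ^ 2) ≤ t} T ∧
        Real.log T.card ≤
          Real.log (2 + 2 * t * (∏ k, (n k : ℝ)) ^ ((1 : ℝ) / 2) / ε) +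
            ((2 : ℝ) ^ d - 1) *
              Real.log (2 + C * (t + V) * (∏ k, (n k : ℝ)) ^ ((1 : ℝ) / 2) / ε) +
            C + C * (V * (∏ k, (n k : ℝ)) ^ ((1 : ℝ) / 2) / ε) ^ ((1 : ℝ) / 2) +
            C * ((2 : ℝ) ^ d + 1 +
                  (2 : ℝ) ^ d * V * (∏ k, (n k : ℝ)) ^ ((1 : ℝ) / 2) / ε) ^ ((1 : ℝ) / 2) *
              Real.log ((2 : ℝ) ^ d + 1 +
                  (2 : ℝ) ^ d * V * (∏ k, (n k : ℝ)) ^ ((1 : ℝ) / 2) / ε) ^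
                (3 * (2 * (d : ℝ) - 1) / 4) := by
  obtain ⟨e, rfl⟩ : ∃ e, d = e + 1 := ⟨d - 1, by omega⟩
  obtain ⟨C, hC, hentropy⟩ := MixedVariation.exists_entropyLE_setOf_V2_le e
  refine ⟨2 * 2 ^ (e + 1) + C, by positivity, fun n hn V t ε hV ht hε => ?_⟩
  simp only [← Real.sqrt_eq_rpow]
  set Q : ℝ := 2 ^ (e + 1)
  set M := √(∏ k, (n k : ℝ))
  set x := V * M / ε with hx
  rw [show Q * V * M / ε = Q * x by rw [hx]; ring]
  have hQ : 2 ≤ Q := le_self_pow₀ one_le_two e.succ_ne_zero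
  have hQx : 2 * x ≤ Q * x := by gcongr
  have hx0 : 0 ≤ x := by positivity
  have hM : 1 ≤ M := Real.one_le_sqrt.2 <| by
    exact_mod_cast prod_pos fun k _ => two_pos.trans_le (hn k)
  have hY : Real.exp 1 ≤ Q + 1 + Q * x := by linarith [Real.exp_one_lt_d9]
  have hlogY : 1 ≤ Real.log (Q + 1 + Q * x) := (Real.le_log_iff_exp_le (by positivity)).2 hY
  refine MixedVariation.EntropyLE.exists_isNet_eDist <|
    (hentropy n (fun k => two_pos.trans_le (hn k)) V t ε _ hV.le ht.le hε hY (by linarith)).mono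
      (fun θ hθ => ⟨hθ.1, ?_⟩) le_rfl ?_
  · simpa only [EuclideanSpace.norm_eq, Real.norm_eq_abs, sq_abs] using hθ.2
  · grw [MixedVariation.mul_log_one_add_le (C := 2 * Q + C) (by linarith) (by linarith) hV.le ht.le
      hM hε, MixedVariation.sqrt_pow_le_rpow hlogY e, ← mul_assoc]
    gcongr <;> linarith
end
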